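/- arXiv:1604.04719 — 5 statements merged into one kernel-verified Lean document; each statement's English description precedes it below -/
import Mathlib

section
/- The set of pairs of integers (n,m) with n ≥ 2, m ≥ 2 and F_n - T_m = 0 is exactly {(2,2), (3,3), (7,6)}; that is, 0 = 1 - 1 = 2 - 2 = 13 - 13 are the only representations of 0 as a difference of a Fibonacci and a Tribonacci number with indices at least 2. -/
/-- The Tribonacci sequence: T 0 = 0, T 1 = T 2 = 1,
    T (k+3) = T (k+2) + T (k+1) + T k. -/
def trib : ℕ → ℤ
  | 0 => 0
  | 1 => 1
  | 2 => 1
  | n + 3 => trib (n + 2) + trib (n + 1) + trib n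

open Finset

lemma bk_factor_one (a : ℂ) (k : ℕ) : ∀ g : ℂ → ℂ, Differentiable ℂ g →
    (k : ℕ∞) ≤ analyticOrderAt g a →
    ∃ g2 : ℂ → ℂ, Differentiable ℂ g2 ∧ ∀ z, g z = (z - a) ^ k * g2 z := by
  induction k with
  | zero => intro g hg _; exact ⟨g, hg, fun z => by simp⟩
  | succ k ih =>
    intro g hg hk
    have hga : g a = 0 := by
      by_contra hne
      have h0 : analyticOrderAt g a = 0 :=
        (hg.analyticAt a).analyticOrderAt_eq_zero.2 hne
      rw [h0] at hk
      simp at hk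
    have hd : Differentiable ℂ (dslope g a) := by
      rw [← differentiableOn_univ]
      exact (Complex.differentiableOn_dslope Filter.univ_mem).2 hg.differentiableOn
    have heq : ∀ z, g z = (z - a) * dslope g a z := by
      intro z
      have := sub_smul_dslope g a z
      simp [hga] at this
      exact this.symm
    have hord : analyticOrderAt g a = 1 + analyticOrderAt (dslope g a) a := by
      have h1 : g = (fun z => z - a) * dslope g a := by
        funext z; exact heq z
      conv_lhs => rw [h1]
      rw [analyticOrderAt_mul (by fun_prop) (hd.analyticAt a)]
      congr 1
      have hh : AnalyticAt ℂ (fun z => z - a) a := by fun_prop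
      have := (hh.analyticOrderAt_eq_natCast (n := 1)).2
        ⟨fun _ => 1, by fun_prop, by simp, by simp⟩
      simpa using this
    have hk2 : (k : ℕ∞) ≤ analyticOrderAt (dslope g a) a := by
      rw [hord] at hk
      push_cast at hk
      rw [add_comm] at hk
      exact (ENat.add_le_add_iff_left (by simp)).1 hk
    obtain ⟨g2, hg2, h2⟩ := ih _ hd hk2
    exact ⟨g2, hg2, fun z => by rw [heq z, h2 z]; ring⟩

lemma bk_factor (h : ℂ → ℂ) (hh : Differentiable ℂ h) (k L : ℕ)
    (hz : ∀ s < L, ∀ i < k, iteratedDeriv i h (s : ℂ) = 0) :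
    ∃ g : ℂ → ℂ, Differentiable ℂ g ∧ ∀ z, h z = (∏ s ∈ range L, (z - s) ^ k) * g z := by
  induction L with
  | zero => exact ⟨h, hh, fun z => by simp⟩
  | succ L ih =>
    obtain ⟨g, hg, hgz⟩ := ih (fun s hs => hz s (by omega))
    have ho : (k : ℕ∞) ≤ analyticOrderAt h (L : ℂ) :=
      (natCast_le_analyticOrderAt_iff_iteratedDeriv_eq_zero (hh.analyticAt _)).2 (hz L (by omega))
    have h1 : h = (fun z : ℂ => ∏ s ∈ range L, (z - s) ^ k) * g := by
      funext z; exact hgz z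
    have hpd : Differentiable ℂ (fun z : ℂ => ∏ s ∈ range L, (z - s) ^ k) := by fun_prop
    rw [h1, analyticOrderAt_mul (hpd.analyticAt _) (hg.analyticAt _)] at ho
    have h0 : analyticOrderAt (fun z : ℂ => ∏ s ∈ range L, (z - s) ^ k) (L : ℂ) = 0 := by
      rw [(hpd.analyticAt _).analyticOrderAt_eq_zero]
      rw [prod_ne_zero_iff]
      intro s hs
      apply pow_ne_zero
      rw [sub_ne_zero]
      have := mem_range.1 hs
      exact_mod_cast this.ne'
    rw [h0, zero_add] at ho
    obtain ⟨g2, hg2, h2⟩ := bk_factor_one _ k g hg ho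
    exact ⟨g2, hg2, fun z => by rw [hgz z, h2 z, prod_range_succ]; ring⟩

lemma bk_schwarz (h : ℂ → ℂ) (hh : Differentiable ℂ h) (k L X : ℕ) (hLX : L ≤ X) (hX : 0 < X)
    (hz : ∀ s < L, ∀ i < k, iteratedDeriv i h (s : ℂ) = 0) (M : ℝ)
    (hM : ∀ z : ℂ, ‖z‖ ≤ 5 * X → ‖h z‖ ≤ M) (a : ℕ) (haX : a ≤ X) :
    ‖h a‖ ≤ (1/4) ^ (L * k) * M := by
  obtain ⟨g, hg, hgz⟩ := bk_factor h hh k L hz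
  have hX' : (0:ℝ) < X := by exact_mod_cast hX
  have hM0 : 0 ≤ M := (norm_nonneg _).trans (hM 0 (by simp))
  have hg1 : ‖g a‖ ≤ M / (4 * X) ^ (L * k) := by
    have hb : Bornology.IsBounded (Metric.ball (0:ℂ) (5 * X)) := Metric.isBounded_ball
    apply Complex.norm_le_of_forall_mem_frontier_norm_le hb hg.diffContOnCl
    · intro w hw
      rw [frontier_ball (0:ℂ) (by positivity)] at hw
      have hw' : ‖w‖ = 5 * X := by simpa using hw
      have h1 := hM w hw'.le
      rw [hgz w, norm_mul, norm_prod] at h1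
      have h2 : (4 * X : ℝ) ^ (L * k) ≤ ∏ s ∈ range L, ‖(w - s) ^ k‖ := by
        calc (4 * X : ℝ) ^ (L * k) = ∏ s ∈ range L, (4 * X : ℝ) ^ k := by
              simp [← pow_mul, mul_comm]
          _ ≤ _ := by
              apply prod_le_prod
              · intros; positivity
              · intro s hs
                rw [norm_pow]
                apply pow_le_pow_left₀ (by positivity)
                have h3 := norm_sub_norm_le w (s:ℂ)
                have h4 : (s:ℝ) ≤ X := by
                  have := mem_range.1 hs
                  exact_mod_cast (by omega : s ≤ X)
                rw [hw'] at h3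
                simp at h3
                linarith
      rw [le_div_iff₀ (by positivity)]
      calc ‖g w‖ * (4 * X : ℝ) ^ (L * k) ≤ ‖g w‖ * ∏ s ∈ range L, ‖(w - s) ^ k‖ := by gcongr
        _ ≤ M := by linarith [mul_comm ‖g w‖ (∏ s ∈ range L, ‖(w - s) ^ k‖)]
    · apply subset_closure
      simp
      have : (a:ℝ) ≤ X := by exact_mod_cast haX
      linarith
  have h5 : ∏ s ∈ range L, ‖((a:ℂ) - s) ^ k‖ ≤ (X : ℝ) ^ (L * k) := by
    calc _ ≤ ∏ s ∈ range L, (X : ℝ) ^ k := by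
              apply prod_le_prod
              · intros; positivity
              · intro s hs
                rw [norm_pow]
                apply pow_le_pow_left₀ (by positivity)
                have h4 : (s:ℝ) ≤ X := by
                  have := mem_range.1 hs
                  exact_mod_cast (by omega : s ≤ X)
                have h6 : (a:ℝ) ≤ X := by exact_mod_cast haX
                have h7 : ((a:ℂ) - s) = (((a:ℝ) - (s:ℝ) : ℝ) : ℂ) := by push_cast; rfl
                rw [h7, Complex.norm_real, Real.norm_eq_abs, abs_le]
                have := Nat.cast_nonneg (α := ℝ) a
                have := Nat.cast_nonneg (α := ℝ) s
                constructor <;> linarith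
      _ = _ := by simp [← pow_mul, mul_comm]
  rw [hgz a, norm_mul, norm_prod]
  calc _ ≤ (X : ℝ) ^ (L * k) * (M / (4 * X) ^ (L * k)) := by gcongr
    _ = _ := by
      rw [mul_pow, div_pow, one_pow]
      field_simp

/-- integer confluent Vandermonde matrix -/
def bkMat (L k : ℕ) : Matrix (Fin (L * k)) (Fin (L * k)) ℤ := fun r d =>
  ((d : ℕ).descFactorial (finProdFinEquiv.symm r).2 : ℤ) *
    ((finProdFinEquiv.symm r).1 : ℕ) ^ ((d : ℕ) - (finProdFinEquiv.symm r).2)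

lemma bkMat_det (L k : ℕ) : (bkMat L k).det ≠ 0 := by
  intro h0
  obtain ⟨v, hv, hMv⟩ := Matrix.exists_mulVec_eq_zero_iff.2 h0
  let p : Polynomial ℚ := ∑ d : Fin (L * k), Polynomial.C (v d : ℚ) * Polynomial.X ^ (d : ℕ)
  have hdeg : p.degree < (L * k : ℕ) := by
    apply (Polynomial.degree_sum_le _ _).trans_lt
    rw [Finset.sup_lt_iff (WithBot.bot_lt_coe _)]
    intro d _
    apply (Polynomial.degree_C_mul_X_pow_le _ _).trans_lt
    exact_mod_cast d.2
  have hcoef : ∀ d : Fin (L * k), p.coeff d = v d := by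
    intro d
    simp only [p, Polynomial.finsetSum_coeff, Polynomial.coeff_C_mul, Polynomial.coeff_X_pow]
    rw [Finset.sum_eq_single d]
    · simp
    · intro b _ hb
      rw [if_neg]; simp
      intro h; exact hb (Fin.ext h.symm)
    · simp
  have hp : p ≠ 0 := by
    intro hp
    apply hv
    funext d
    have := hcoef d
    rw [hp] at this
    simp at this
    exact_mod_cast this.symm
  have hroot : ∀ s < L, ∀ i < k, (Polynomial.derivative^[i] p).IsRoot (s : ℚ) := by
    intro s hs i hi
    have := congrFun hMv (finProdFinEquiv (⟨s, hs⟩, ⟨i, hi⟩))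
    simp only [bkMat, Matrix.mulVec, dotProduct, Equiv.symm_apply_apply, Pi.zero_apply] at this
    have h2 := congrArg (Int.cast (R := ℚ)) this
    push_cast at h2
    rw [Polynomial.IsRoot, Polynomial.iterate_derivative_sum, Polynomial.eval_finsetSum]
    rw [← h2]
    apply sum_congr rfl
    intro d _
    rw [Polynomial.iterate_derivative_C_mul, Polynomial.iterate_derivative_X_pow_eq_natCast_mul]
    simp
    ring
  have hdvd : (∏ s ∈ range L, (Polynomial.X - Polynomial.C (s : ℚ)) ^ k) ∣ p := by
    apply Finset.prod_dvd_of_coprime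
    · intro a _ b _ hab
      apply IsCoprime.pow
      exact Polynomial.pairwise_coprime_X_sub_C (s := fun n : ℕ => (n : ℚ)) Nat.cast_injective hab
    · intro s hs
      rw [← Polynomial.le_rootMultiplicity_iff hp]
      rcases Nat.eq_zero_or_pos k with hk | hk
      · omega
      · obtain ⟨k', rfl⟩ : ∃ k', k = k' + 1 := ⟨k - 1, by omega⟩
        apply Nat.succ_le_of_lt
        apply Polynomial.lt_rootMultiplicity_of_isRoot_iterate_derivative hp
        intro m hm
        exact hroot s (mem_range.1 hs) m (by omega)
  have hle := Polynomial.degree_le_of_dvd hdvd hp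
  have : (∏ s ∈ range L, (Polynomial.X - Polynomial.C (s : ℚ)) ^ k).degree = ((L * k : ℕ) : WithBot ℕ) := by
    rw [Polynomial.degree_prod]
    rw [sum_congr rfl (fun s _ => by rw [Polynomial.degree_pow, Polynomial.degree_X_sub_C])]
    simp
  rw [this] at hle
  exact absurd hdeg (not_lt.2 hle)

lemma bkMat_entry (L k D : ℕ) (hD : L * k ≤ D) (hL : L ≤ D) (hD1 : 1 ≤ D) (r d : Fin (L * k)) :
    |bkMat L k r d| ≤ (D : ℤ) ^ (L * k) := by
  unfold bkMat
  generalize hs : finProdFinEquiv.symm r = p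
  obtain ⟨s, i⟩ := p
  simp only
  have h1 : (d : ℕ).descFactorial i * (s : ℕ) ^ ((d : ℕ) - i) ≤ D ^ (L * k) := by
    by_cases hid : (i : ℕ) ≤ d
    · calc (d : ℕ).descFactorial i * (s : ℕ) ^ ((d : ℕ) - i)
          ≤ D ^ (i : ℕ) * D ^ ((d : ℕ) - i) := by
            apply Nat.mul_le_mul
            · exact (Nat.descFactorial_le_pow _ _).trans
                (Nat.pow_le_pow_left (d.2.le.trans hD) _)
            · exact Nat.pow_le_pow_left (s.2.le.trans hL) _
        _ = D ^ (d : ℕ) := by rw [← pow_add]; congr 1; omega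
        _ ≤ _ := Nat.pow_le_pow_right hD1 d.2.le
    · rw [Nat.descFactorial_of_lt (by omega)]; simp
  rw [abs_of_nonneg (by positivity)]
  exact_mod_cast h1

lemma bkMat_adj (L k D : ℕ) (hD : L * k ≤ D) (hL : L ≤ D) (hD1 : 1 ≤ D) (r d : Fin (L * k)) :
    |(bkMat L k).adjugate r d| ≤ (D : ℤ) ^ ((L * k) + (L * k) * (L * k)) := by
  rw [Matrix.adjugate_apply]
  have := Matrix.det_le (A := (bkMat L k).updateRow d (Pi.single r 1))
    (abv := AbsoluteValue.abs) (x := (D : ℤ) ^ (L * k)) (by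
      intro a b
      simp only [AbsoluteValue.abs_apply]
      rw [Matrix.updateRow_apply]
      split_ifs
      · have h1 : (1:ℤ) ≤ (D:ℤ) ^ (L*k) := by exact_mod_cast Nat.one_le_pow _ _ hD1
        rw [Pi.single_apply]
        split_ifs <;> simp <;> linarith
      · exact bkMat_entry L k D hD hL hD1 a b)
  simp only [AbsoluteValue.abs_apply, Fintype.card_fin] at this
  refine this.trans ?_
  rw [pow_add, ← pow_mul, nsmul_eq_mul]
  apply mul_le_mul_of_nonneg_right _ (by positivity)
  have := (Nat.factorial_le_pow (L * k)).trans (Nat.pow_le_pow_left hD (L * k))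
  exact_mod_cast this

lemma bk_extrap (f : ℂ → ℂ) (hf : Differentiable ℂ f) (k L X D : ℕ) (hLX : L ≤ X) (hX : 0 < X)
    (hn : 1 ≤ L * k) (hD : L * k ≤ D) (hXD : 5 * X ≤ D) (ε M : ℝ)
    (hε : ∀ s < L, ∀ i < k, ‖iteratedDeriv i f (s : ℂ)‖ ≤ ε)
    (hM : ∀ z : ℂ, ‖z‖ ≤ 5 * X → ‖f z‖ ≤ M) (a : ℕ) (haX : a ≤ X) :
    ‖f a‖ ≤ (1/4) ^ (L * k) * M + 2 * ((D : ℝ) ^ (5 * (L * k) * (L * k)) * ε) := by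
  set n := L * k with hndef
  have hLD : L ≤ D := by omega
  have hD1 : 1 ≤ D := by omega
  have hLpos : 0 < L := by rcases Nat.eq_zero_or_pos L with h | h; simp [h] at hndef; omega; exact h
  have hkpos : 0 < k := by rcases Nat.eq_zero_or_pos k with h | h; simp [h] at hndef; omega; exact h
  have hε0 : 0 ≤ ε := (norm_nonneg _).trans (hε 0 hLpos 0 hkpos)
  let data : Fin n → ℂ := fun r =>
    iteratedDeriv (finProdFinEquiv.symm r).2 f (((finProdFinEquiv.symm r).1 : ℕ) : ℂ)
  have hdata : ∀ r, ‖data r‖ ≤ ε := fun r =>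
    hε _ (finProdFinEquiv.symm r).1.2 _ (finProdFinEquiv.symm r).2.2
  let A : Matrix (Fin n) (Fin n) ℂ := (bkMat L k).map (Int.castRingHom ℂ)
  have hdet : A.det = ((bkMat L k).det : ℂ) := by
    have := (RingHom.map_det (Int.castRingHom ℂ) (bkMat L k)).symm
    simpa [A, RingHom.mapMatrix_apply] using this
  have hdet0 : A.det ≠ 0 := by
    rw [hdet]; exact_mod_cast bkMat_det L k
  have hadj : ∀ r d, ‖A.adjugate r d‖ ≤ (D : ℝ) ^ (n + n * n) := by
    intro r d
    have h1 : A.adjugate r d = (((bkMat L k).adjugate r d : ℤ) : ℂ) := by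
      have := congrFun (congrFun (RingHom.map_adjugate (Int.castRingHom ℂ) (bkMat L k)) r) d
      simpa [A, RingHom.mapMatrix_apply] using this.symm
    rw [h1, Complex.norm_intCast]
    exact_mod_cast bkMat_adj L k D hD hLD hD1 r d
  let c : Fin n → ℂ := A.det⁻¹ • (A.adjugate.mulVec data)
  have hAc : A.mulVec c = data := by
    simp only [c, Matrix.mulVec_smul, Matrix.mulVec_mulVec, Matrix.mul_adjugate,
      Matrix.smul_mulVec, Matrix.one_mulVec, smul_smul]
    rw [inv_mul_cancel₀ hdet0, one_smul]
  have hc : ∀ d, ‖c d‖ ≤ n * ((D : ℝ) ^ (n + n * n) * ε) := by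
    intro d
    simp only [c, Pi.smul_apply, smul_eq_mul, norm_mul, norm_inv]
    have h1 : 1 ≤ ‖A.det‖ := by
      rw [hdet, Complex.norm_intCast]
      exact_mod_cast Int.one_le_abs (bkMat_det L k)
    have h2 : ‖A.adjugate.mulVec data d‖ ≤ n * ((D : ℝ) ^ (n + n * n) * ε) := by
      simp only [Matrix.mulVec, dotProduct]
      refine (norm_sum_le _ _).trans ?_
      calc _ ≤ ∑ x : Fin n, ((D : ℝ) ^ (n + n * n) * ε) := by
            apply sum_le_sum
            intro x _
            rw [norm_mul]
            exact mul_le_mul (hadj _ _) (hdata _) (norm_nonneg _) (by positivity)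
        _ = _ := by simp
    calc _ ≤ 1 * ‖A.adjugate.mulVec data d‖ := by
          apply mul_le_mul_of_nonneg_right _ (norm_nonneg _)
          exact inv_le_one_of_one_le₀ h1
      _ ≤ _ := by rw [one_mul]; exact h2
  let H : ℂ → ℂ := fun z => ∑ d : Fin n, c d * z ^ (d : ℕ)
  have hHd : Differentiable ℂ H := by fun_prop
  have hHder : ∀ s < L, ∀ i < k, iteratedDeriv i H (s : ℂ) = iteratedDeriv i f (s : ℂ) := by
    intro s hs i hi
    have h1 := congrFun hAc (finProdFinEquiv (⟨s, hs⟩, ⟨i, hi⟩))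
    simp only [data, Equiv.symm_apply_apply] at h1
    rw [← h1]
    simp only [H]
    rw [iteratedDeriv_fun_sum (fun d _ => by fun_prop)]
    simp only [Matrix.mulVec, dotProduct, A, Matrix.map_apply, bkMat, Equiv.symm_apply_apply]
    apply sum_congr rfl
    intro d _
    rw [iteratedDeriv_const_mul_field]
    have h3 : iteratedDeriv i (fun z : ℂ => z ^ (d : ℕ)) (s : ℂ) =
      ((d : ℕ).descFactorial i : ℂ) * (s : ℂ) ^ ((d : ℕ) - i) := iteratedDeriv_pow (d : ℕ) i
    rw [h3]
    push_cast
    simp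
    ring
  have hHb : ∀ z : ℂ, ‖z‖ ≤ 5 * X → ‖H z‖ ≤ (D : ℝ) ^ (5 * n * n) * ε := by
    intro z hz
    have hzD : ‖z‖ ≤ D := hz.trans (by exact_mod_cast hXD)
    have hD1' : (1:ℝ) ≤ D := by exact_mod_cast hD1
    have hnD : (n : ℝ) ≤ D := by exact_mod_cast hD
    have hn1 : (1:ℝ) ≤ n := by exact_mod_cast hn
    calc ‖H z‖ ≤ ∑ d : Fin n, ‖c d * z ^ (d : ℕ)‖ := norm_sum_le _ _
      _ ≤ ∑ d : Fin n, (n * ((D : ℝ) ^ (n + n * n) * ε)) * (D : ℝ) ^ n := by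
          apply sum_le_sum
          intro d _
          rw [norm_mul, norm_pow]
          apply mul_le_mul (hc d) _ (by positivity) (by positivity)
          exact (pow_le_pow_left₀ (norm_nonneg _) hzD _).trans (pow_le_pow_right₀ hD1' d.2.le)
      _ = n * ((n * ((D : ℝ) ^ (n + n * n) * ε)) * (D : ℝ) ^ n) := by simp
      _ ≤ D * ((D * ((D : ℝ) ^ (n + n * n) * ε)) * (D : ℝ) ^ n) := by gcongr
      _ = (D : ℝ) ^ (2 + 2 * n + n * n) * ε := by ring
      _ ≤ _ := by
          apply mul_le_mul_of_nonneg_right _ hε0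
          apply pow_le_pow_right₀ hD1'
          nlinarith
  have hM0 : 0 ≤ M := (norm_nonneg _).trans (hM 0 (by simp))
  have key := bk_schwarz (fun z => f z - H z) (by fun_prop) k L X hLX hX (by
    intro s hs i hi
    rw [iteratedDeriv_fun_sub, hHder s hs i hi, sub_self]
    · exact (hf.contDiff).contDiffAt
    · exact (hHd.contDiff).contDiffAt) (M + (D : ℝ) ^ (5 * n * n) * ε) (by
      intro z hz
      exact (norm_sub_le _ _).trans (add_le_add (hM z hz) (hHb z hz))) a haX
  have h9 := hHb a (by
    simp
    have : (a:ℝ) ≤ X := by exact_mod_cast haX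
    have : (0:ℝ) ≤ X := by positivity
    linarith)
  have h10 : ‖f a‖ ≤ ‖f a - H a‖ + ‖H a‖ := by
    have := norm_add_le (f a - H a) (H a)
    simpa using this
  have h11 : ((1:ℝ)/4) ^ n ≤ 1 := pow_le_one₀ (by norm_num) (by norm_num)
  have h12 : 0 ≤ (D : ℝ) ^ (5 * n * n) * ε := by positivity
  simp only [← hndef] at key
  nlinarith [mul_le_mul_of_nonneg_right h11 h12]

open Finset

lemma bk_exists_beta : ∃ b : ℝ, (9/5 : ℝ) < b ∧ b < 19/10 ∧ b ^ 3 = b ^ 2 + b + 1 := by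
  have hc : ContinuousOn (fun b : ℝ => b ^ 3 - b ^ 2 - b - 1) (Set.Icc (9/5) (19/10)) := by
    fun_prop
  have := intermediate_value_Ioo (by norm_num : (9/5:ℝ) ≤ 19/10) hc
  obtain ⟨b, hb, h⟩ := this (show (0:ℝ) ∈ Set.Ioo _ _ by constructor <;> norm_num)
  exact ⟨b, hb.1, hb.2, by simp only at h; linarith⟩

noncomputable def bkb : ℝ := Classical.choose bk_exists_beta
lemma bkb_lo : (9/5 : ℝ) < bkb := (Classical.choose_spec bk_exists_beta).1
lemma bkb_hi : bkb < 19/10 := (Classical.choose_spec bk_exists_beta).2.1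
lemma bkb_eq : bkb ^ 3 = bkb ^ 2 + bkb + 1 := (Classical.choose_spec bk_exists_beta).2.2

noncomputable def bkp : ℝ := Real.goldenRatio
lemma bkp_eq : bkp ^ 2 = bkp + 1 := Real.goldenRatio_sq
lemma bkp_pos : 0 < bkp := Real.goldenRatio_pos
lemma bkp_lo : (8/5 : ℝ) < bkp := by
  have := bkp_eq; have := bkp_pos; nlinarith
lemma bkp_hi : bkp < 17/10 := by
  have := bkp_eq; have := bkp_pos; nlinarith

noncomputable def bkK : IntermediateField ℚ ℂ :=
  IntermediateField.adjoin ℚ {(bkp : ℂ)} ⊔ IntermediateField.adjoin ℚ {(bkb : ℂ)}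

lemma bkp_eqC : (bkp : ℂ) ^ 2 = bkp + 1 := by exact_mod_cast bkp_eq
lemma bkb_eqC : (bkb : ℂ) ^ 3 = bkb ^ 2 + bkb + 1 := by exact_mod_cast bkb_eq

open Polynomial in
lemma bkp_int {R : Type*} [CommRing R] (x : R) (h : x ^ 2 = x + 1) : IsIntegral ℤ x := by
  refine ⟨X ^ 2 - X - 1, by monicity!, ?_⟩
  simp [h]

open Polynomial in
lemma bkb_int {R : Type*} [CommRing R] (x : R) (h : x ^ 3 = x ^ 2 + x + 1) : IsIntegral ℤ x := by
  refine ⟨X ^ 3 - X ^ 2 - X - 1, by monicity!, ?_⟩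
  simp [h]
  ring

lemma bkp_intQ : IsIntegral ℚ (bkp : ℂ) := (bkp_int _ bkp_eqC).tower_top
lemma bkb_intQ : IsIntegral ℚ (bkb : ℂ) := (bkb_int _ bkb_eqC).tower_top

instance bkK_fd : FiniteDimensional ℚ bkK := by
  have h1 := IntermediateField.adjoin.finiteDimensional bkp_intQ
  have h2 := IntermediateField.adjoin.finiteDimensional bkb_intQ
  unfold bkK
  infer_instance

open Polynomial in
lemma bkK_finrank : Module.finrank ℚ bkK ≤ 6 := by
  unfold bkK
  refine (IntermediateField.finrank_sup_le _ _).trans ?_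
  rw [IntermediateField.adjoin.finrank bkp_intQ, IntermediateField.adjoin.finrank bkb_intQ]
  have h1 : (minpoly ℚ (bkp : ℂ)).natDegree ≤ 2 := by
    have hd : minpoly ℚ (bkp : ℂ) ∣ X ^ 2 - X - 1 := by
      apply minpoly.dvd
      simp [bkp_eqC]
    have hm : (X ^ 2 - X - 1 : ℚ[X]).Monic := by monicity!
    have := natDegree_le_of_dvd hd hm.ne_zero
    refine this.trans ?_
    compute_degree
  have h2 : (minpoly ℚ (bkb : ℂ)).natDegree ≤ 3 := by
    have hd : minpoly ℚ (bkb : ℂ) ∣ X ^ 3 - X ^ 2 - X - 1 := by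
      apply minpoly.dvd
      simp [bkb_eqC]
      ring
    have hm : (X ^ 3 - X ^ 2 - X - 1 : ℚ[X]).Monic := by monicity!
    have := natDegree_le_of_dvd hd hm.ne_zero
    refine this.trans ?_
    compute_degree
  calc _ ≤ 2 * 3 := Nat.mul_le_mul h1 h2
    _ = 6 := rfl

lemma bk_norm_int (θ : bkK) (hi : IsIntegral ℤ θ) :
    ∃ N : ℤ, ∏ σ : bkK →ₐ[ℚ] ℂ, σ θ = (N : ℂ) := by
  have h1 := Algebra.norm_eq_prod_embeddings ℚ ℂ θ
  have h2 : IsIntegral ℤ (Algebra.norm ℚ θ) := Algebra.isIntegral_norm ℚ hi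
  obtain ⟨N, hN⟩ := IsIntegrallyClosed.isIntegral_iff.1 h2
  refine ⟨N, ?_⟩
  rw [← h1, ← hN]
  simp

lemma bk_liouville (θ : bkK) (hi : IsIntegral ℤ θ) (h0 : θ ≠ 0) (M : ℝ) (hM1 : 1 ≤ M)
    (hM : ∀ σ : bkK →ₐ[ℚ] ℂ, ‖σ θ‖ ≤ M) : 1 ≤ ‖(θ : ℂ)‖ * M ^ 5 := by
  classical
  obtain ⟨N, hN⟩ := bk_norm_int θ hi
  have hN0 : N ≠ 0 := by
    rintro rfl
    rw [Int.cast_zero, prod_eq_zero_iff] at hN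
    obtain ⟨σ, _, hσ⟩ := hN
    exact h0 ((map_eq_zero σ).1 hσ)
  have h1 : (1:ℝ) ≤ ‖∏ σ : bkK →ₐ[ℚ] ℂ, σ θ‖ := by
    rw [hN, Complex.norm_intCast]
    exact_mod_cast Int.one_le_abs hN0
  refine h1.trans ?_
  rw [norm_prod, ← mul_prod_erase univ (fun σ : bkK →ₐ[ℚ] ℂ => ‖σ θ‖) (mem_univ bkK.val)]
  change ‖(θ : ℂ)‖ * _ ≤ _
  apply mul_le_mul_of_nonneg_left _ (norm_nonneg _)
  calc _ ≤ ∏ σ ∈ univ.erase bkK.val, M := prod_le_prod (fun _ _ => norm_nonneg _) (fun σ _ => hM σ)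
    _ = M ^ (univ.erase bkK.val).card := by simp
    _ ≤ M ^ 5 := by
      apply pow_le_pow_right₀ hM1
      rw [card_erase_of_mem (mem_univ _), card_univ, AlgHom.card]
      have := bkK_finrank
      omega

open Finset

def bkG {R : Type*} [CommRing R] (u v : R) (S a b c s : ℕ) : R :=
  ((u - 1) ^ a * v ^ b * ((2 * u - 1) * (4 * v - v ^ 2 - 1)) ^ c * 5 ^ (S - c)) ^ s

def bkTh {R ι : Type*} [CommRing R] [Fintype ι] (u v : R) (S : ℕ) (p : ι → ℤ) (a b c : ι → ℕ)
    (n m t1 t2 s : ℕ) : R :=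
  ∑ i, (p i : R) * ((a i + n * c i : ℕ) : R) ^ t1 * ((b i + m * c i : ℕ) : R) ^ t2 *
    bkG u v S (a i) (b i) (c i) s

lemma bkTh_map {R R' ι : Type*} [CommRing R] [CommRing R'] [Fintype ι] (f : R →+* R')
    (u v : R) (S : ℕ) (p : ι → ℤ) (a b c : ι → ℕ) (n m t1 t2 s : ℕ) :
    f (bkTh u v S p a b c n m t1 t2 s) = bkTh (f u) (f v) S p a b c n m t1 t2 s := by
  have h2 : f 2 = 2 := map_ofNat f 2
  have h4 : f 4 = 4 := map_ofNat f 4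
  have h5 : f 5 = 5 := map_ofNat f 5
  simp [bkTh, bkG, h2, h4, h5]

lemma bk_norm_u {u : ℂ} (h : u ^ 2 = u + 1) : ‖u - 1‖ ≤ 2 ∧ ‖2 * u - 1‖ ≤ 4 := by
  have h1 : (u - 1) ^ 2 = 1 - (u - 1) := by linear_combination h
  have h2 : ‖u - 1‖ ^ 2 ≤ 1 + ‖u - 1‖ := by
    rw [← norm_pow, h1]
    exact (norm_sub_le _ _).trans (by simp)
  have h3 : (2 * u - 1) ^ 2 = 5 := by linear_combination 4 * h
  have h4 : ‖2 * u - 1‖ ^ 2 = 5 := by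
    rw [← norm_pow, h3]; simp
  constructor <;> nlinarith [norm_nonneg (u-1), norm_nonneg (2*u-1)]

lemma bk_norm_v {v : ℂ} (h : v ^ 3 = v ^ 2 + v + 1) : ‖v‖ ≤ 2 ∧ ‖4 * v - v ^ 2 - 1‖ ≤ 16 := by
  have h2 : ‖v‖ ^ 3 ≤ ‖v‖ ^ 2 + ‖v‖ + 1 := by
    rw [← norm_pow, h]
    refine (norm_add_le _ _).trans ?_
    simp only [norm_one, add_le_add_iff_right]
    refine (norm_add_le _ _).trans ?_
    simp
  have h3 : ‖v‖ ≤ 2 := by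
    by_contra hc
    push Not at hc
    nlinarith [norm_nonneg v, sq_nonneg (‖v‖)]
  refine ⟨h3, ?_⟩
  calc ‖4 * v - v ^ 2 - 1‖ ≤ ‖4 * v‖ + ‖v ^ 2‖ + ‖(1:ℂ)‖ :=
        (norm_sub_le _ _).trans (by gcongr; exact norm_sub_le _ _)
    _ = 4 * ‖v‖ + ‖v‖ ^ 2 + 1 := by simp
    _ ≤ 4 * 2 + 2 ^ 2 + 1 := by gcongr
    _ ≤ 16 := by norm_num

lemma bkG_norm {u v : ℂ} (hu : u ^ 2 = u + 1) (hv : v ^ 3 = v ^ 2 + v + 1) {S a b c : ℕ}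
    (ha : a ≤ S) (hb : b ≤ S) (hc : c ≤ S) (s : ℕ) : ‖bkG u v S a b c s‖ ≤ 2 ^ (8 * S * s) := by
  have h1 := bk_norm_u hu
  have h2 := bk_norm_v hv
  have h3 : ‖(2 * u - 1) * (4 * v - v ^ 2 - 1)‖ ≤ 2 ^ 6 := by
    rw [norm_mul]
    calc _ ≤ (4:ℝ) * 16 := mul_le_mul h1.2 h2.2 (norm_nonneg _) (by norm_num)
      _ = _ := by norm_num
  unfold bkG
  rw [norm_pow, pow_mul]
  gcongr
  simp only [norm_mul, norm_pow] at h3 ⊢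
  calc _ ≤ (2:ℝ) ^ a * 2 ^ b * (2 ^ 6) ^ c * (2 ^ 3) ^ (S - c) := by
        gcongr
        · exact h1.1
        · exact h2.1
        · simp; norm_num
    _ = 2 ^ (a + b + 6 * c + 3 * (S - c)) := by
        simp only [← pow_mul, pow_add]
    _ ≤ 2 ^ (8 * S) := pow_le_pow_right₀ (by norm_num) (by omega)

lemma bkTh_norm {ι : Type*} [Fintype ι] {u v : ℂ} (hu : u ^ 2 = u + 1)
    (hv : v ^ 3 = v ^ 2 + v + 1) {S : ℕ} {p : ι → ℤ} {a b c : ι → ℕ} {n m P Y NN: ℕ}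
    (ha : ∀ i, a i ≤ S) (hb : ∀ i, b i ≤ S) (hc : ∀ i, c i ≤ S)
    (hp : ∀ i, |p i| ≤ 2 ^ P) (hx : ∀ i, a i + n * c i ≤ 2 ^ Y) (hy : ∀ i, b i + m * c i ≤ 2 ^ Y)
    (hN : Fintype.card ι ≤ 2 ^ NN) (t1 t2 s : ℕ) :
    ‖bkTh u v S p a b c n m t1 t2 s‖ ≤ 2 ^ (NN + P + Y * (t1 + t2) + 8 * S * s) := by
  unfold bkTh
  refine (norm_sum_le _ _).trans ?_
  calc _ ≤ ∑ i : ι, ((2:ℝ) ^ P * (2 ^ Y) ^ t1 * (2 ^ Y) ^ t2 * 2 ^ (8 * S * s)) := by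
        apply sum_le_sum
        intro i _
        simp only [norm_mul, norm_pow, Complex.norm_natCast, Complex.norm_intCast]
        gcongr
        · exact_mod_cast hp i
        · exact_mod_cast hx i
        · exact_mod_cast hy i
        · exact bkG_norm hu hv (ha i) (hb i) (hc i) s
    _ = (Fintype.card ι : ℝ) * ((2:ℝ) ^ P * (2 ^ Y) ^ t1 * (2 ^ Y) ^ t2 * 2 ^ (8 * S * s)) := by
        simp [card_univ]
    _ ≤ 2 ^ NN * ((2:ℝ) ^ P * (2 ^ Y) ^ t1 * (2 ^ Y) ^ t2 * 2 ^ (8 * S * s)) := by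
        gcongr
        exact_mod_cast hN
    _ = _ := by
        rw [← pow_mul, ← pow_mul]; ring

noncomputable def bkpK : bkK := ⟨bkp, by
  unfold bkK
  exact (le_sup_left : IntermediateField.adjoin ℚ {(bkp : ℂ)} ≤ _) (IntermediateField.mem_adjoin_simple_self ℚ (bkp:ℂ))⟩
noncomputable def bkbK : bkK := ⟨bkb, by
  unfold bkK
  exact (le_sup_right : IntermediateField.adjoin ℚ {(bkb : ℂ)} ≤ _) (IntermediateField.mem_adjoin_simple_self ℚ (bkb:ℂ))⟩
lemma bkpK_eq : bkpK ^ 2 = bkpK + 1 := by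
  apply Subtype.ext; push_cast; exact bkp_eqC
lemma bkbK_eq : bkbK ^ 3 = bkbK ^ 2 + bkbK + 1 := by
  apply Subtype.ext; push_cast; exact bkb_eqC

lemma bkTh_liouville {ι : Type*} [Fintype ι] {S : ℕ} {p : ι → ℤ} {a b c : ι → ℕ} {n m P Y NN: ℕ}
    (ha : ∀ i, a i ≤ S) (hb : ∀ i, b i ≤ S) (hc : ∀ i, c i ≤ S)
    (hp : ∀ i, |p i| ≤ 2 ^ P) (hx : ∀ i, a i + n * c i ≤ 2 ^ Y) (hy : ∀ i, b i + m * c i ≤ 2 ^ Y)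
    (hN : Fintype.card ι ≤ 2 ^ NN) (t1 t2 s : ℕ)
    (h0 : bkTh (bkp : ℂ) (bkb : ℂ) S p a b c n m t1 t2 s ≠ 0) :
    1 ≤ ‖bkTh (bkp : ℂ) (bkb : ℂ) S p a b c n m t1 t2 s‖ *
      (2 ^ (NN + P + Y * (t1 + t2) + 8 * S * s)) ^ 5 := by
  have hv : ((bkTh bkpK bkbK S p a b c n m t1 t2 s : bkK) : ℂ) =
      bkTh (bkp : ℂ) (bkb : ℂ) S p a b c n m t1 t2 s :=
    bkTh_map (bkK.val : bkK →+* ℂ) bkpK bkbK S p a b c n m t1 t2 s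
  rw [← hv]
  apply bk_liouville
  · unfold bkTh bkG
    have e1 := bkp_int _ bkpK_eq
    have e2 := bkb_int _ bkbK_eq
    have en : ∀ k : ℕ, IsIntegral ℤ (k : bkK) := fun k => by
      have := isIntegral_algebraMap (R := ℤ) (A := bkK) (x := (k:ℤ))
      simpa using this
    have ez : ∀ k : ℤ, IsIntegral ℤ (k : bkK) := fun k => by
      have := isIntegral_algebraMap (R := ℤ) (A := bkK) (x := k)
      simpa using this
    have e3 : IsIntegral ℤ (1 : bkK) := isIntegral_one
    have e4 : IsIntegral ℤ (2 : bkK) := by exact_mod_cast en 2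
    have e5 : IsIntegral ℤ (4 : bkK) := by exact_mod_cast en 4
    have e6 : IsIntegral ℤ (5 : bkK) := by exact_mod_cast en 5
    refine IsIntegral.sum _ fun i _ => ?_
    refine (((ez _).mul ((en _).pow _)).mul ((en _).pow _)).mul (IsIntegral.pow ?_ _)
    exact ((((e1.sub e3).pow _).mul (e2.pow _)).mul ((((e4.mul e1).sub e3).mul
      (((e5.mul e2).sub (e2.pow _)).sub e3)).pow _)).mul (e6.pow _)
  · intro h; apply h0; rw [← hv, h]; rfl
  · exact one_le_pow₀ (by norm_num)
  · intro σ
    have := bkTh_map (σ : bkK →+* ℂ) bkpK bkbK S p a b c n m t1 t2 s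
    change ‖(σ : bkK →+* ℂ) _‖ ≤ _
    rw [this]
    refine bkTh_norm ?_ ?_ ha hb hc hp hx hy hN t1 t2 s
    · rw [← map_pow, bkpK_eq]; simp
    · rw [← map_pow, bkbK_eq]; simp

def bkRep (B : ℤ) (u v z : ℂ) : Prop := ∃ k : Fin 6 → ℤ, (∀ i, |k i| ≤ B) ∧
  z = ∑ i, (k i : ℂ) * ![1, v, v ^ 2, u, u * v, u * v ^ 2] i

lemma bkRep_of {B : ℤ} {u v z : ℂ} (k0 k1 k2 k3 k4 k5 : ℤ) (h0 : |k0| ≤ B) (h1 : |k1| ≤ B)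
   (h2 : |k2| ≤ B) (h3 : |k3| ≤ B) (h4 : |k4| ≤ B) (h5 : |k5| ≤ B)
   (h : z = k0 + k1 * v + k2 * v ^ 2 + k3 * u + k4 * (u * v) + k5 * (u * v ^ 2)) :
   bkRep B u v z := by
  refine ⟨![k0, k1, k2, k3, k4, k5], ?_, ?_⟩
  · intro i; fin_cases i <;> simpa
  · rw [h]; simp [Fin.sum_univ_six]

lemma bkRep_to {B : ℤ} {u v z : ℂ} (h : bkRep B u v z) : ∃ k0 k1 k2 k3 k4 k5 : ℤ,
   |k0| ≤ B ∧ |k1| ≤ B ∧ |k2| ≤ B ∧ |k3| ≤ B ∧ |k4| ≤ B ∧ |k5| ≤ B ∧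
    z = k0 + k1 * v + k2 * v ^ 2 + k3 * u + k4 * (u * v) + k5 * (u * v ^ 2) := by
  obtain ⟨k, h1, h2⟩ := h
  refine ⟨k 0, k 1, k 2, k 3, k 4, k 5, h1 _, h1 _, h1 _, h1 _, h1 _, h1 _, ?_⟩
  rw [h2]; simp [Fin.sum_univ_six]

section
variable {u v : ℂ} (hu : u ^ 2 = u + 1) (hv : v ^ 3 = v ^ 2 + v + 1)

include hu in
lemma bkRep_a {B : ℤ} {z : ℂ} (h : bkRep B u v z) : bkRep (2 * B) u v (z * (u - 1)) := by
  obtain ⟨k0, k1, k2, k3, k4, k5, h0, h1, h2, h3, h4, h5, h⟩ := bkRep_to h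
  simp only [abs_le] at *
  refine bkRep_of (k3 - k0) (k4 - k1) (k5 - k2) k0 k1 k2 ?_ ?_ ?_ ?_ ?_ ?_ ?_
  iterate 6 (rw [abs_le]; constructor <;> omega)
  rw [h]; push_cast
  linear_combination (k3 + k4 * v + k5 * v ^ 2) * hu

include hu in
lemma bkRep_a2 {B : ℤ} {z : ℂ} (h : bkRep B u v z) : bkRep (3 * B) u v (z * (2 * u - 1)) := by
  obtain ⟨k0, k1, k2, k3, k4, k5, h0, h1, h2, h3, h4, h5, h⟩ := bkRep_to h
  simp only [abs_le] at *
  refine bkRep_of (2 * k3 - k0) (2 * k4 - k1) (2 * k5 - k2) (2 * k0 + k3) (2 * k1 + k4)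
    (2 * k2 + k5) ?_ ?_ ?_ ?_ ?_ ?_ ?_
  iterate 6 (rw [abs_le]; constructor <;> omega)
  rw [h]; push_cast
  linear_combination (2 * k3 + 2 * k4 * v + 2 * k5 * v ^ 2) * hu

include hv in
lemma bkRep_b {B : ℤ} {z : ℂ} (h : bkRep B u v z) : bkRep (2 * B) u v (z * v) := by
  obtain ⟨k0, k1, k2, k3, k4, k5, h0, h1, h2, h3, h4, h5, h⟩ := bkRep_to h
  simp only [abs_le] at *
  refine bkRep_of k2 (k0 + k2) (k1 + k2) k5 (k3 + k5) (k4 + k5) ?_ ?_ ?_ ?_ ?_ ?_ ?_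
  iterate 6 (rw [abs_le]; constructor <;> omega)
  rw [h]; push_cast
  linear_combination (k2 + k5 * u) * hv

include hv in
lemma bkRep_b2 {B : ℤ} {z : ℂ} (h : bkRep B u v z) :
    bkRep (8 * B) u v (z * (4 * v - v ^ 2 - 1)) := by
  obtain ⟨k0, k1, k2, k3, k4, k5, h0, h1, h2, h3, h4, h5, h⟩ := bkRep_to h
  simp only [abs_le] at *
  refine bkRep_of (3 * k2 - k1 - k0) (4 * k0 - 2 * k1 + 2 * k2) (3 * k1 + k2 - k0)
    (3 * k5 - k4 - k3) (4 * k3 - 2 * k4 + 2 * k5) (3 * k4 + k5 - k3) ?_ ?_ ?_ ?_ ?_ ?_ ?_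
  iterate 6 (rw [abs_le]; constructor <;> omega)
  rw [h]; push_cast
  linear_combination (4 * k2 + 4 * k5 * u - k1 - k4 * u - k2 * v - k5 * u * v - k2 - k5 * u) * hv

lemma bkRep_5 {B : ℤ} {z : ℂ} (h : bkRep B u v z) : bkRep (2 ^ 3 * B) u v (z * 5) := by
  obtain ⟨k0, k1, k2, k3, k4, k5, h0, h1, h2, h3, h4, h5, h⟩ := bkRep_to h
  simp only [abs_le] at *
  refine bkRep_of (5 * k0) (5 * k1) (5 * k2) (5 * k3) (5 * k4) (5 * k5) ?_ ?_ ?_ ?_ ?_ ?_ ?_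
  iterate 6 (rw [abs_le]; constructor <;> omega)
  rw [h]; push_cast; ring

lemma bkRep_mono {B B' : ℤ} {z : ℂ} (h : bkRep B u v z) (hB : B ≤ B') : bkRep B' u v z := by
  obtain ⟨k, h1, h2⟩ := h
  exact ⟨k, fun i => (h1 i).trans hB, h2⟩

lemma bkRep_pow {w : ℂ} {e : ℕ} (hw : ∀ (B : ℤ) z, bkRep B u v z → bkRep (2 ^ e * B) u v (z * w))
    (k : ℕ) : ∀ (B : ℤ) z, bkRep B u v z → bkRep (2 ^ (e * k) * B) u v (z * w ^ k) := by
  induction k with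
  | zero => intro B z h; simpa using h
  | succ k ih =>
    intro B z h
    have := hw _ _ (ih B z h)
    convert this using 1
    · ring
    · ring

include hu hv in
lemma bkRep_G {S a b c : ℕ} (ha : a ≤ S) (hb : b ≤ S) (hc : c ≤ S) (s : ℕ) :
    bkRep (2 ^ (8 * S * s)) u v (bkG u v S a b c s) := by
  have key : ∀ (B : ℤ) z, bkRep B u v z → bkRep (2 ^ (8 * S) * B) u v (z * ((u - 1) ^ a * v ^ b *
      ((2 * u - 1) * (4 * v - v ^ 2 - 1)) ^ c * 5 ^ (S - c))) := by
    intro B z h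
    have hB : 0 ≤ B := by
      obtain ⟨k, h1, _⟩ := h
      exact (abs_nonneg _).trans (h1 0)
    have h1 := bkRep_pow (e := 1) (w := u - 1) (fun B z h => by simpa using bkRep_a hu h) a B z h
    have h2 := bkRep_pow (e := 1) (w := v) (fun B z h => by simpa using bkRep_b hv h) b _ _ h1
    have h3 := bkRep_pow (e := 5) (w := (2 * u - 1) * (4 * v - v ^ 2 - 1)) (fun B z h => by
      have hB : 0 ≤ B := by
        obtain ⟨k, h1, _⟩ := h
        exact (abs_nonneg _).trans (h1 0)
      have := bkRep_b2 hv (bkRep_a2 hu h)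
      rw [← mul_assoc]
      exact bkRep_mono this (by linarith)) c _ _ h2
    have h4 := bkRep_pow (e := 3) (w := 5) (fun B z h => bkRep_5 h) (S - c) _ _ h3
    convert bkRep_mono (B' := 2 ^ (8 * S) * B) h4 ?_ using 1
    · ring
    · simp only [← mul_assoc, ← pow_add]
      gcongr
      · norm_num
      · omega
  have h1 : bkRep 1 u v 1 := bkRep_of 1 0 0 0 0 0 (by simp) (by simp) (by simp) (by simp) (by simp)
    (by simp) (by simp)
  have := bkRep_pow key s 1 1 h1
  simpa [bkG] using this
end

attribute [local instance] Matrix.seminormedAddCommGroup in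
lemma bk_siegel {ι : Type*} [Fintype ι] [DecidableEq ι] {S : ℕ} {a b c : ι → ℕ} {n m P Y NN K L : ℕ}
    (ha : ∀ i, a i ≤ S) (hb : ∀ i, b i ≤ S) (hc : ∀ i, c i ≤ S)
    (hx : ∀ i, a i + n * c i ≤ 2 ^ Y) (hy : ∀ i, b i + m * c i ≤ 2 ^ Y)
    (hN : Fintype.card ι ≤ 2 ^ NN) (hK : 0 < K) (hL : 0 < L)
    (hcard : 12 * (K * K * L) ≤ Fintype.card ι)
    (hP : NN + 2 * Y * K + 8 * S * L ≤ P) :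
    ∃ p : ι → ℤ, p ≠ 0 ∧ (∀ i, |p i| ≤ 2 ^ P) ∧ ∀ t1 < K, ∀ t2 < K, ∀ s < L,
      bkTh (bkp : ℂ) (bkb : ℂ) S p a b c n m t1 t2 s = 0 := by
  have hrep : ∀ (i : ι) (s : ℕ), bkRep (2 ^ (8 * S * s)) bkp bkb (bkG (bkp:ℂ) (bkb:ℂ) S (a i) (b i) (c i) s) :=
    fun i s => bkRep_G bkp_eqC bkb_eqC (ha i) (hb i) (hc i) s
  choose k hk1 hk2 using hrep
  let A : Matrix (Fin K × Fin K × Fin L × Fin 6) ι ℤ := fun r i =>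
    ((a i + n * c i : ℕ) : ℤ) ^ (r.1 : ℕ) * ((b i + m * c i : ℕ) : ℤ) ^ (r.2.1 : ℕ) *
      k i r.2.2.1 r.2.2.2
  have hcm : Fintype.card (Fin K × Fin K × Fin L × Fin 6) = 6 * (K * K * L) := by
    simp; ring
  have hpos : 0 < K * K * L := by positivity
  obtain ⟨p, hp0, hpA, hpn⟩ := Int.Matrix.exists_ne_zero_int_vec_norm_le A (by rw [hcm]; omega)
    (by rw [hcm]; omega)
  have hA : max 1 ‖A‖ ≤ 2 ^ (2 * Y * K + 8 * S * L) := by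
    apply max_le (one_le_pow₀ (by norm_num))
    rw [Matrix.norm_le_iff (by positivity)]
    intro r i
    rw [Int.norm_eq_abs]
    have h1 : |A r i| ≤ (2 ^ Y) ^ K * (2 ^ Y) ^ K * 2 ^ (8 * S * L) := by
      simp only [A, abs_mul, abs_pow, Nat.abs_cast]
      have hx' : ((a i + n * c i : ℕ) : ℤ) ≤ 2 ^ Y := by exact_mod_cast hx i
      have hy' : ((b i + m * c i : ℕ) : ℤ) ≤ 2 ^ Y := by exact_mod_cast hy i
      have h1Y : (1:ℤ) ≤ 2 ^ Y := one_le_pow₀ (by norm_num)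
      gcongr
      · exact (pow_le_pow_left₀ (by positivity) hx' _).trans (pow_le_pow_right₀ h1Y r.1.2.le)
      · exact (pow_le_pow_left₀ (by positivity) hy' _).trans (pow_le_pow_right₀ h1Y r.2.1.2.le)
      · refine (hk1 _ _ _).trans (pow_le_pow_right₀ (by norm_num) ?_)
        exact Nat.mul_le_mul_left _ r.2.2.1.2.le
    have h2 : ((|A r i| : ℤ) : ℝ) ≤ ((2 ^ Y) ^ K * (2 ^ Y) ^ K * 2 ^ (8 * S * L) : ℤ) := by
      exact_mod_cast h1
    refine (le_of_eq (by push_cast; rfl)).trans (h2.trans (le_of_eq ?_))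
    push_cast
    rw [← pow_mul]; ring
  refine ⟨p, hp0, ?_, ?_⟩
  · intro i
    have h1 : ‖p‖ ≤ (Fintype.card ι * max 1 ‖A‖) := by
      refine hpn.trans ?_
      have hb1 : (1:ℝ) ≤ (Fintype.card ι * max 1 ‖A‖) := by
        have : (1:ℝ) ≤ Fintype.card ι := by
          have : 1 ≤ Fintype.card ι := by omega
          exact_mod_cast this
        nlinarith [le_max_left 1 ‖A‖]
      refine (Real.rpow_le_rpow_of_exponent_le hb1 (z := 1) ?_).trans (le_of_eq (Real.rpow_one _))
      rw [hcm]
      have h12 : ((12 * (K * K * L) : ℕ) : ℝ) ≤ Fintype.card ι := by exact_mod_cast hcard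
      have hp' : (0:ℝ) < (K * K * L : ℕ) := by exact_mod_cast hpos
      push_cast at *
      rw [div_le_one (by linarith)]
      linarith
    have h2 : ‖p i‖ ≤ 2 ^ P := by
      refine (norm_le_pi_norm p i).trans (h1.trans ?_)
      calc (Fintype.card ι * max 1 ‖A‖) ≤ 2 ^ NN * 2 ^ (2 * Y * K + 8 * S * L) := by
            gcongr
            exact_mod_cast hN
        _ = 2 ^ (NN + (2 * Y * K + 8 * S * L)) := by rw [← pow_add]
        _ ≤ 2 ^ P := pow_le_pow_right₀ (by norm_num) (by omega)
    rw [Int.norm_eq_abs] at h2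
    exact_mod_cast h2
  · intro t1 h1 t2 h2 s hs
    have hz : ∀ j : Fin 6, ∑ i, ((a i + n * c i : ℕ) : ℤ) ^ t1 * ((b i + m * c i : ℕ) : ℤ) ^ t2 *
        k i s j * p i = 0 := fun j => by
      have := congrFun hpA (⟨t1, h1⟩, ⟨t2, h2⟩, ⟨s, hs⟩, j)
      simpa [Matrix.mulVec, dotProduct, A] using this
    unfold bkTh
    have : ∀ i, (p i : ℂ) * ((a i + n * c i : ℕ) : ℂ) ^ t1 * ((b i + m * c i : ℕ) : ℂ) ^ t2 *
      bkG (bkp:ℂ) (bkb:ℂ) S (a i) (b i) (c i) s = ∑ j : Fin 6,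
       (((a i + n * c i : ℕ) : ℤ) ^ t1 * ((b i + m * c i : ℕ) : ℤ) ^ t2 *
        k i s j * p i : ℤ) * (![1, (bkb:ℂ), (bkb:ℂ) ^ 2, bkp, bkp * bkb, bkp * (bkb:ℂ) ^ 2] j) := by
      intro i
      rw [hk2 i s, mul_sum]
      apply sum_congr rfl
      intro j _
      push_cast; ring
    simp_rw [this]
    rw [sum_comm]
    apply sum_eq_zero
    intro j _
    rw [← sum_mul, ← Int.cast_sum, hz]
    simp

open Finset

noncomputable def bkl1 : ℝ := Real.log (bkp - 1)
noncomputable def bkl2 : ℝ := Real.log bkb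
noncomputable def bka3 : ℝ := (2 * bkp - 1) * (4 * bkb - bkb ^ 2 - 1) / 5
noncomputable def bkl3 : ℝ := Real.log bka3

lemma bka3_lo : 13/10 < bka3 := by
  unfold bka3
  have h1 := bkp_lo; have h2 := bkb_lo; have h3 := bkb_hi
  have h4 : (2.96:ℝ) < 4 * bkb - bkb ^ 2 - 1 := by nlinarith
  have h5 : (2.2:ℝ) < 2 * bkp - 1 := by linarith
  nlinarith
lemma bka3_hi : bka3 < 3/2 := by
  unfold bka3
  have h1 := bkp_hi; have h2 := bkb_lo; have h3 := bkb_hi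
  have h4 : 4 * bkb - bkb ^ 2 - 1 < 3 := by nlinarith
  have h4' : 0 < 4 * bkb - bkb ^ 2 - 1 := by nlinarith
  have h5 : 2 * bkp - 1 < 2.4 := by linarith
  nlinarith

lemma bkl1_exp : Real.exp bkl1 = bkp - 1 := Real.exp_log (by linarith [bkp_lo])
lemma bkl2_exp : Real.exp bkl2 = bkb := Real.exp_log (by linarith [bkb_lo])
lemma bkl3_exp : Real.exp bkl3 = bka3 := Real.exp_log (by linarith [bka3_lo])

lemma bk_exp1 : (2:ℝ) < Real.exp 1 := by linarith [Real.exp_one_gt_d9]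

lemma bkl1_abs : |bkl1| ≤ 1 := by
  rw [abs_le]
  constructor
  · rw [← Real.exp_le_exp, bkl1_exp, Real.exp_neg]
    have : (Real.exp 1)⁻¹ ≤ 2⁻¹ := inv_anti₀ (by norm_num) bk_exp1.le
    linarith [bkp_lo]
  · rw [← Real.exp_le_exp, bkl1_exp]
    linarith [bkp_hi, bk_exp1]
lemma bkl1_nonpos : bkl1 ≤ 0 := Real.log_nonpos (by linarith [bkp_lo]) (by linarith [bkp_hi])
lemma bkl2_abs : |bkl2| ≤ 1 := by
  rw [abs_le]
  constructor
  · have : 0 ≤ bkl2 := Real.log_nonneg (by linarith [bkb_lo])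
    linarith
  · rw [← Real.exp_le_exp, bkl2_exp]
    linarith [bkb_hi, bk_exp1]
lemma bkl3_abs : |bkl3| ≤ 1 := by
  rw [abs_le]
  constructor
  · have : 0 ≤ bkl3 := Real.log_nonneg (by linarith [bka3_lo])
    linarith
  · rw [← Real.exp_le_exp, bkl3_exp]
    linarith [bka3_hi, bk_exp1]

lemma bk_exp2 (k : ℕ) : Real.exp (2 * k) ≤ 2 ^ (3 * k) := by
  rw [mul_comm, Real.exp_nat_mul, pow_mul]
  gcongr
  have : Real.exp 2 = Real.exp 1 ^ 2 := by rw [← Real.exp_nat_mul]; norm_num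
  rw [this]
  have := Real.exp_one_lt_d9
  nlinarith [bk_exp1]

lemma bkG_eq {S a b c : ℕ} (hc : c ≤ S) (s : ℕ) : bkG (bkp : ℂ) (bkb : ℂ) S a b c s =
    (((5 ^ S) ^ s * Real.exp ((a * bkl1 + b * bkl2 + c * bkl3) * s) : ℝ) : ℂ) := by
  have : ((bkG bkp bkb S a b c s : ℝ) : ℂ) = bkG (bkp : ℂ) (bkb : ℂ) S a b c s := by
    simp [bkG]
  rw [← this]
  congr 1
  rw [mul_comm _ (s:ℝ), Real.exp_nat_mul, Real.exp_add, Real.exp_add, Real.exp_nat_mul,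
    Real.exp_nat_mul, Real.exp_nat_mul, bkl1_exp, bkl2_exp, bkl3_exp, ← mul_pow]
  unfold bkG bka3
  congr 1
  obtain ⟨d, rfl⟩ := Nat.exists_eq_add_of_le hc
  rw [Nat.add_sub_cancel_left, div_pow, pow_add]
  field_simp

noncomputable def bkE (n m a b c : ℕ) : ℝ :=
  ((a + n * c : ℕ) : ℝ) * bkl1 + ((b + m * c : ℕ) : ℝ) * bkl2

noncomputable def bkF {ι : Type*} [Fintype ι] (p : ι → ℤ) (a b c : ι → ℕ) (n m t1 t2 : ℕ) (z : ℂ) : ℂ :=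
  ∑ i, ((p i : ℂ) * ((a i + n * c i : ℕ) : ℂ) ^ t1 * ((b i + m * c i : ℕ) : ℂ) ^ t2) *
    Complex.exp (bkE n m (a i) (b i) (c i) * z)

lemma bkE_eq (n m a b c : ℕ) : bkE n m a b c = (a * bkl1 + b * bkl2 + c * bkl3) -
    c * (bkl3 - (n * bkl1 + m * bkl2)) := by
  unfold bkE; push_cast; ring

section
variable {ι : Type*} [Fintype ι] {S : ℕ} {p : ι → ℤ} {a b c : ι → ℕ} {n m P Y NN: ℕ}

lemma bkF_diff (t1 t2 : ℕ) : Differentiable ℂ (bkF p a b c n m t1 t2) := by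
  unfold bkF; fun_prop

lemma bkF_deriv (t1 t2 k : ℕ) (z : ℂ) : iteratedDeriv k (bkF p a b c n m t1 t2) z =
    ∑ i ∈ range (k + 1), ((bkl1 : ℂ) ^ i * (bkl2 : ℂ) ^ (k - i) * (k.choose i : ℂ)) *
      bkF p a b c n m (t1 + i) (t2 + (k - i)) z := by
  unfold bkF
  rw [iteratedDeriv_fun_sum (by intro i _; fun_prop)]
  simp only [mul_sum]
  rw [sum_comm]
  apply sum_congr rfl
  intro i _
  rw [iteratedDeriv_const_mul_field]
  have : iteratedDeriv k (fun z : ℂ => Complex.exp (bkE n m (a i) (b i) (c i) * z)) z =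
    (bkE n m (a i) (b i) (c i) : ℂ) ^ k * Complex.exp (bkE n m (a i) (b i) (c i) * z) := by
    rw [iteratedDeriv_cexp_const_mul]
  rw [this]
  have : (bkE n m (a i) (b i) (c i) : ℂ) ^ k = ∑ j ∈ range (k+1), (((a i + n * c i : ℕ) : ℂ) * bkl1) ^ j * (((b i + m * c i : ℕ) : ℂ) * bkl2) ^ (k - j) * (k.choose j : ℂ) := by
    rw [← add_pow]; congr 1; unfold bkE; push_cast; ring
  rw [this, sum_mul, mul_sum]
  apply sum_congr rfl
  intro j _
  rw [mul_pow, mul_pow, pow_add, pow_add]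
  ring

lemma bk_gE_le {S a b c : ℕ} (ha : a ≤ S) (hb : b ≤ S) (hc : c ≤ S) :
    |(a * bkl1 + b * bkl2 + c * bkl3 : ℝ)| ≤ 3 * S := by
  have ha' : (a:ℝ) ≤ S := by exact_mod_cast ha
  have hb' : (b:ℝ) ≤ S := by exact_mod_cast hb
  have hc' : (c:ℝ) ≤ S := by exact_mod_cast hc
  calc |(a * bkl1 + b * bkl2 + c * bkl3 : ℝ)| ≤ |a * bkl1| + |b * bkl2| + |c * bkl3| := abs_add_three _ _ _
    _ = a * |bkl1| + b * |bkl2| + c * |bkl3| := by simp [abs_mul]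
    _ ≤ S * 1 + S * 1 + S * 1 := by
      gcongr
      · exact bkl1_abs
      · exact bkl2_abs
      · exact bkl3_abs
    _ = _ := by ring

lemma bk_g_le {S a b c : ℕ} (hb : b ≤ S) (hc : c ≤ S) :
    (a * bkl1 + b * bkl2 + c * bkl3 : ℝ) ≤ 2 * S := by
  have hb' : (b:ℝ) ≤ S := by exact_mod_cast hb
  have hc' : (c:ℝ) ≤ S := by exact_mod_cast hc
  have h1 : (a:ℝ) * bkl1 ≤ 0 := mul_nonpos_of_nonneg_of_nonpos (by positivity) bkl1_nonpos
  have h2 : (b:ℝ) * bkl2 ≤ S * 1 := mul_le_mul_of_nonneg hb' (le_of_abs_le bkl2_abs) (by positivity) (by norm_num)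
  have h3 : (c:ℝ) * bkl3 ≤ S * 1 := mul_le_mul_of_nonneg hc' (le_of_abs_le bkl3_abs) (by positivity) (by norm_num)
  linarith

lemma bkF_sub (ha : ∀ i, a i ≤ S) (hb : ∀ i, b i ≤ S) (hc : ∀ i, c i ≤ S)
    (hp : ∀ i, |p i| ≤ 2 ^ P) (hx : ∀ i, a i + n * c i ≤ 2 ^ Y) (hy : ∀ i, b i + m * c i ≤ 2 ^ Y)
    (hN : Fintype.card ι ≤ 2 ^ NN) (t1 t2 s X T Δ : ℕ) (hs : s ≤ X) (ht : t1 + t2 ≤ T)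
    (hΛ : |bkl3 - (n * bkl1 + m * bkl2)| ≤ (1/2) ^ Δ) (hSX : S * X ≤ Δ) :
    ‖bkTh (bkp : ℂ) (bkb : ℂ) S p a b c n m t1 t2 s - (5 ^ S) ^ s * bkF p a b c n m t1 t2 s‖ ≤
      (5 ^ S) ^ s * (2 ^ (NN + P + Y * T + 4 * S * X + 1) * (1/2) ^ Δ) := by
  have key : bkTh (bkp : ℂ) (bkb : ℂ) S p a b c n m t1 t2 s - (5 ^ S) ^ s * bkF p a b c n m t1 t2 s =
     (5 ^ S) ^ s * ∑ i, ((p i : ℂ) * ((a i + n * c i : ℕ) : ℂ) ^ t1 * ((b i + m * c i : ℕ) : ℂ) ^ t2) *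
       ((Real.exp ((a i * bkl1 + b i * bkl2 + c i * bkl3) * s) *
         (1 - Real.exp (- (c i * (bkl3 - (n * bkl1 + m * bkl2)) * s))) : ℝ) : ℂ) := by
    unfold bkTh bkF
    rw [mul_sum, mul_sum, ← sum_sub_distrib]
    apply sum_congr rfl
    intro i _
    rw [bkG_eq (hc i)]
    have : Complex.exp (bkE n m (a i) (b i) (c i) * s) = ((Real.exp (bkE n m (a i) (b i) (c i) * s) : ℝ) : ℂ) := by
      push_cast; rfl
    have h3 : Real.exp (bkE n m (a i) (b i) (c i) * s) =
        Real.exp ((a i * bkl1 + b i * bkl2 + c i * bkl3) * s) *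
         Real.exp (- (c i * (bkl3 - (n * bkl1 + m * bkl2)) * s)) := by
      rw [← Real.exp_add, bkE_eq]; congr 1; ring
    rw [this, h3]
    simp only [Complex.ofReal_mul, Complex.ofReal_sub, Complex.ofReal_pow, Complex.ofReal_one,
      Complex.ofReal_ofNat]
    ring
  rw [key, norm_mul]
  have h5 : ‖((5:ℂ) ^ S) ^ s‖ = (5 ^ S) ^ s := by simp
  rw [h5]
  gcongr
  refine (norm_sum_le _ _).trans ?_
  have h2S : S * X ≤ 2 ^ (S * X) := Nat.lt_two_pow_self.le
  have h2S' : (S:ℝ) * X ≤ 2 ^ (S * X) := by exact_mod_cast h2S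
  calc _ ≤ ∑ i : ι, ((2:ℝ) ^ P * (2 ^ Y) ^ t1 * (2 ^ Y) ^ t2 * (2 ^ (3 * (S * X)) * (2 * (2 ^ (S * X) * (1/2) ^ Δ)))) := by
        apply sum_le_sum
        intro i _
        rw [norm_mul]
        simp only [norm_mul, norm_pow, Complex.norm_natCast, Complex.norm_intCast, Complex.norm_real, Real.norm_eq_abs]
        have hci : (c i:ℝ) ≤ S := by exact_mod_cast hc i
        have hsX : (s:ℝ) ≤ X := by exact_mod_cast hs
        have hw : |-(c i * (bkl3 - (n * bkl1 + m * bkl2)) * s)| ≤ 2 ^ (S * X) * (1/2) ^ Δ := by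
          rw [abs_neg, abs_mul, abs_mul, Nat.abs_cast, Nat.abs_cast]
          calc _ ≤ (S:ℝ) * (1/2) ^ Δ * X := by gcongr
            _ = (S * X) * (1/2) ^ Δ := by ring
            _ ≤ _ := by gcongr
        have hw1 : (2:ℝ) ^ (S * X) * (1/2) ^ Δ ≤ 1 := by
          calc (2:ℝ) ^ (S * X) * (1/2) ^ Δ ≤ 2 ^ Δ * (1/2) ^ Δ := by gcongr; norm_num
            _ = 1 := by rw [← mul_pow]; norm_num
        gcongr
        · exact_mod_cast hp i
        · exact_mod_cast hx i
        · exact_mod_cast hy i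
        · rw [Real.abs_exp]
          refine le_trans ?_ (bk_exp2 (S * X))
          rw [Real.exp_le_exp]
          calc _ ≤ (2 * S : ℝ) * s := by
                gcongr
                exact bk_g_le (hb i) (hc i)
            _ ≤ (2 * S : ℝ) * X := by gcongr
            _ = _ := by push_cast; ring
        · rw [abs_sub_comm]
          refine (Real.abs_exp_sub_one_le (hw.trans hw1)).trans ?_
          gcongr
    _ = (Fintype.card ι : ℝ) * ((2:ℝ) ^ P * (2 ^ Y) ^ t1 * (2 ^ Y) ^ t2 * (2 ^ (3 * (S * X)) * (2 * (2 ^ (S * X) * (1/2) ^ Δ)))) := by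
        simp [card_univ]
    _ ≤ 2 ^ NN * ((2:ℝ) ^ P * (2 ^ Y) ^ t1 * (2 ^ Y) ^ t2 * (2 ^ (3 * (S * X)) * (2 * (2 ^ (S * X) * (1/2) ^ Δ)))) := by
        gcongr
        exact_mod_cast hN
    _ = 2 ^ (NN + P + Y * (t1 + t2) + 4 * S * X + 1) * (1/2) ^ Δ := by
        rw [← pow_mul, ← pow_mul]; ring
    _ ≤ _ := by gcongr; norm_num

lemma bkF_bound (ha : ∀ i, a i ≤ S) (hb : ∀ i, b i ≤ S) (hc : ∀ i, c i ≤ S)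
    (hp : ∀ i, |p i| ≤ 2 ^ P) (hx : ∀ i, a i + n * c i ≤ 2 ^ Y) (hy : ∀ i, b i + m * c i ≤ 2 ^ Y)
    (hN : Fintype.card ι ≤ 2 ^ NN) (t1 t2 X T Δ : ℕ) (ht : t1 + t2 ≤ T)
    (hΛ : |bkl3 - (n * bkl1 + m * bkl2)| ≤ (1/2) ^ Δ) (z : ℂ) (hz : ‖z‖ ≤ 5 * X) :
    ‖bkF p a b c n m t1 t2 z‖ ≤ 2 ^ (NN + P + Y * T + 30 * (S * X)) := by
  unfold bkF
  refine (norm_sum_le _ _).trans ?_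
  calc _ ≤ ∑ i : ι, ((2:ℝ) ^ P * (2 ^ Y) ^ t1 * (2 ^ Y) ^ t2 * 2 ^ (30 * (S * X))) := by
        apply sum_le_sum
        intro i _
        simp only [norm_mul, norm_pow, Complex.norm_natCast, Complex.norm_intCast]
        have hE : |bkE n m (a i) (b i) (c i)| ≤ 4 * S := by
          rw [bkE_eq]
          refine (abs_sub _ _).trans ?_
          have h1 := bk_gE_le (ha i) (hb i) (hc i)
          have h2 : |(c i : ℝ) * (bkl3 - (n * bkl1 + m * bkl2))| ≤ S * 1 := by
            rw [abs_mul, Nat.abs_cast]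
            have hci : (c i:ℝ) ≤ S := by exact_mod_cast hc i
            gcongr
            exact hΛ.trans (pow_le_one₀ (by norm_num) (by norm_num))
          linarith
        gcongr
        · exact_mod_cast hp i
        · exact_mod_cast hx i
        · exact_mod_cast hy i
        · refine (Complex.norm_exp_le_exp_norm _).trans ?_
          have := bk_exp2 (10 * (S * X))
          rw [show 3 * (10 * (S * X)) = 30 * (S * X) by ring] at this
          refine le_trans ?_ this
          rw [Real.exp_le_exp, norm_mul, Complex.norm_real, Real.norm_eq_abs]
          calc _ ≤ (4 * S : ℝ) * (5 * X) := by gcongr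
            _ = _ := by push_cast; ring
    _ = (Fintype.card ι : ℝ) * ((2:ℝ) ^ P * (2 ^ Y) ^ t1 * (2 ^ Y) ^ t2 * 2 ^ (30 * (S * X))) := by
        simp [card_univ]
    _ ≤ 2 ^ NN * ((2:ℝ) ^ P * (2 ^ Y) ^ t1 * (2 ^ Y) ^ t2 * 2 ^ (30 * (S * X))) := by
        gcongr
        exact_mod_cast hN
    _ = 2 ^ (NN + P + Y * (t1 + t2) + 30 * (S * X)) := by
        rw [← pow_mul, ← pow_mul]; ring
    _ ≤ _ := by gcongr; norm_num

lemma bk_step (ha : ∀ i, a i ≤ S) (hb : ∀ i, b i ≤ S) (hc : ∀ i, c i ≤ S)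
    (hp : ∀ i, |p i| ≤ 2 ^ P) (hx : ∀ i, a i + n * c i ≤ 2 ^ Y) (hy : ∀ i, b i + m * c i ≤ 2 ^ Y)
    (hN : Fintype.card ι ≤ 2 ^ NN) {K K' L X d Δ Q ν : ℕ} (hKK : K' + K' ≤ K) (hLX : L ≤ X)
    (hν : ν = L * K') (hν1 : 1 ≤ ν) (hνd : ν ≤ 2 ^ d) (hXd : 5 * X ≤ 2 ^ d)
    (hΛ : |bkl3 - (n * bkl1 + m * bkl2)| ≤ (1/2) ^ Δ)
    (hQ : NN + P + Y * (2 * K) ≤ Q)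
    (h1 : 6 * Q + 73 * (S * X) + 2 ≤ 2 * ν)
    (h2 : 47 * (S * X) + 6 * Q + K + 5 * d * ν * ν + 6 ≤ Δ)
    (hz : ∀ t1 < K, ∀ t2 < K, ∀ s < L, bkTh (bkp : ℂ) (bkb : ℂ) S p a b c n m t1 t2 s = 0) :
    ∀ t1 < K', ∀ t2 < K', ∀ s < X, bkTh (bkp : ℂ) (bkb : ℂ) S p a b c n m t1 t2 s = 0 := by
  intro t1 ht1 t2 ht2 s hs
  by_contra h0
  have hSX : S * X ≤ Δ := by omega
  have hX : 0 < X := by omega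
  set ε : ℝ := 2 ^ (Q + 4 * (S * X) + 1) * (1/2) ^ Δ with hε
  have hε0 : 0 ≤ ε := by positivity
  have hsub : ∀ u1 u2 s, u1 + u2 ≤ 2 * K → s ≤ X →
      ‖bkTh (bkp : ℂ) (bkb : ℂ) S p a b c n m u1 u2 s - (5 ^ S) ^ s * bkF p a b c n m u1 u2 s‖ ≤
      (5 ^ S) ^ s * ε := by
    intro u1 u2 s hu hs
    refine (bkF_sub ha hb hc hp hx hy hN u1 u2 s X (2 * K) Δ hs hu hΛ hSX).trans ?_
    rw [hε, mul_assoc 4 S X]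
    gcongr
    norm_num
  have hsmall : ∀ u1 < K, ∀ u2 < K, ∀ s < L, ‖bkF p a b c n m u1 u2 s‖ ≤ ε := by
    intro u1 hu1 u2 hu2 s hs
    have := hsub u1 u2 s (by omega) (by omega)
    rw [hz u1 hu1 u2 hu2 s hs, zero_sub, norm_neg, norm_mul] at this
    have h5 : ‖((5:ℂ) ^ S) ^ s‖ = (5 ^ S) ^ s := by simp
    rw [h5] at this
    exact le_of_mul_le_mul_left this (by positivity)
  have hder : ∀ s < L, ∀ i < K', ‖iteratedDeriv i (bkF p a b c n m t1 t2) (s : ℂ)‖ ≤ 2 ^ K * ε := by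
    intro s hs i hi
    rw [bkF_deriv]
    refine (norm_sum_le _ _).trans ?_
    calc _ ≤ ∑ j ∈ range (i + 1), (1 ^ j * 1 ^ (i - j) * (i.choose j : ℝ)) * ε := by
          apply sum_le_sum
          intro j hj
          rw [mem_range] at hj
          simp only [norm_mul, norm_pow, Complex.norm_natCast, Complex.norm_real, Real.norm_eq_abs]
          gcongr
          · exact bkl1_abs
          · exact bkl2_abs
          · exact hsmall _ (by omega) _ (by omega) s hs
      _ = (1 + 1) ^ i * ε := by rw [add_pow, sum_mul]
      _ ≤ 2 ^ K * ε := by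
          apply mul_le_mul_of_nonneg_right _ hε0
          rw [one_add_one_eq_two]
          exact pow_le_pow_right₀ (by norm_num) (by omega)
  have hext := bk_extrap (bkF p a b c n m t1 t2) (bkF_diff t1 t2) K' L X (2 ^ d) hLX hX
    (by omega) (by omega) hXd (2 ^ K * ε) (2 ^ (Q + 30 * (S * X))) hder
    (fun z hz => (bkF_bound ha hb hc hp hx hy hN t1 t2 X (2 * K) Δ (by omega) hΛ z hz).trans (by
      gcongr; norm_num)) s hs.le
  rw [← hν] at hext
  have hli := bkTh_liouville ha hb hc hp hx hy hN t1 t2 s h0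
  have hli2 : (2 ^ (NN + P + Y * (t1 + t2) + 8 * S * s) : ℝ) ^ 5 ≤ 2 ^ (5 * Q + 40 * (S * X)) := by
    rw [← pow_mul]
    apply pow_le_pow_right₀ (by norm_num)
    have e1 : Y * (t1 + t2) ≤ Y * (2 * K) := Nat.mul_le_mul_left _ (by omega)
    have e2 : S * s ≤ S * X := Nat.mul_le_mul_left _ hs.le
    rw [mul_assoc 8]
    omega
  have h53 : ((5:ℝ) ^ S) ^ s ≤ 2 ^ (3 * (S * X)) := by
    rw [← pow_mul, pow_mul (2:ℝ)]
    calc (5:ℝ) ^ (S * s) ≤ (2 ^ 3) ^ (S * s) := by gcongr; norm_num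
      _ ≤ (2 ^ 3) ^ (S * X) := by gcongr; norm_num
  have hth : ‖bkTh (bkp : ℂ) (bkb : ℂ) S p a b c n m t1 t2 s‖ ≤ 2 ^ (3 * (S * X)) *
      (‖bkF p a b c n m t1 t2 s‖ + ε) := by
    have := hsub t1 t2 s (by omega) hs.le
    have h5 : ‖((5:ℂ) ^ S) ^ s‖ = (5 ^ S) ^ s := by simp
    have t := norm_le_norm_add_norm_sub' (bkTh (bkp : ℂ) (bkb : ℂ) S p a b c n m t1 t2 s) ((5 ^ S) ^ s * bkF p a b c n m t1 t2 s)
    rw [norm_mul, h5] at t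
    calc _ ≤ (5 ^ S) ^ s * ‖bkF p a b c n m t1 t2 s‖ + (5 ^ S) ^ s * ε := t.trans (by gcongr)
      _ = (5 ^ S) ^ s * (‖bkF p a b c n m t1 t2 s‖ + ε) := by ring
      _ ≤ _ := by gcongr
  have hDe : (((2 ^ d : ℕ) : ℝ)) ^ (5 * ν * ν) = 2 ^ (5 * d * ν * ν) := by
    push_cast; rw [← pow_mul]; congr 1; ring
  rw [hDe] at hext
  have hep : ε ≤ 2 ^ (5 * d * ν * ν) * (2 ^ K * ε) := by
    rw [← mul_assoc]
    apply le_mul_of_one_le_left hε0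
    rw [← pow_add]
    exact one_le_pow₀ (by norm_num)
  have hfin : 1 ≤ 2 ^ (3 * (S * X)) * ((1/4) ^ ν * 2 ^ (Q + 30 * (S * X)) +
      4 * (2 ^ (5 * d * ν * ν) * (2 ^ K * ε))) * (2:ℝ) ^ (5 * Q + 40 * (S * X)) := by
    refine hli.trans ?_
    gcongr
    refine hth.trans ?_
    apply mul_le_mul_of_nonneg_left _ (by positivity)
    linarith
  have e1 : (2:ℝ) ^ (3 * (S * X)) * ((1/4) ^ ν * 2 ^ (Q + 30 * (S * X))) * (2:ℝ) ^ (5 * Q + 40 * (S * X)) ≤ 1/4 := by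
    have : (2:ℝ) ^ (3 * (S * X)) * ((1/4) ^ ν * 2 ^ (Q + 30 * (S * X))) * (2:ℝ) ^ (5 * Q + 40 * (S * X)) * 4 = 2 ^ (6 * Q + 73 * (S * X) + 2) * (1/4) ^ ν := by
      ring
    have h4 : (2:ℝ) ^ (6 * Q + 73 * (S * X) + 2) * (1/4) ^ ν ≤ 1 := by
      calc _ ≤ (2:ℝ) ^ (2 * ν) * (1/4) ^ ν := by gcongr; norm_num
        _ = 1 := by rw [pow_mul, ← mul_pow]; norm_num
    linarith
  have e2 : (2:ℝ) ^ (3 * (S * X)) * (4 * (2 ^ (5 * d * ν * ν) * (2 ^ K * ε))) * (2:ℝ) ^ (5 * Q + 40 * (S * X)) ≤ 1/2 := by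
    have : (2:ℝ) ^ (3 * (S * X)) * (4 * (2 ^ (5 * d * ν * ν) * (2 ^ K * ε))) * (2:ℝ) ^ (5 * Q + 40 * (S * X)) * 2 = 2 ^ (47 * (S * X) + 6 * Q + K + 5 * d * ν * ν + 4) * (1/2) ^ Δ := by
      rw [hε]; ring
    have h4 : (2:ℝ) ^ (47 * (S * X) + 6 * Q + K + 5 * d * ν * ν + 4) * (1/2) ^ Δ ≤ 1 := by
      calc _ ≤ (2:ℝ) ^ Δ * (1/2) ^ Δ := by gcongr; norm_num; omega
        _ = 1 := by rw [← mul_pow]; norm_num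
    linarith
  have : (2:ℝ) ^ (3 * (S * X)) * ((1/4) ^ ν * 2 ^ (Q + 30 * (S * X)) +
      4 * (2 ^ (5 * d * ν * ν) * (2 ^ K * ε))) * (2:ℝ) ^ (5 * Q + 40 * (S * X)) =
    (2:ℝ) ^ (3 * (S * X)) * ((1/4) ^ ν * 2 ^ (Q + 30 * (S * X))) * (2:ℝ) ^ (5 * Q + 40 * (S * X)) +
    (2:ℝ) ^ (3 * (S * X)) * (4 * (2 ^ (5 * d * ν * ν) * (2 ^ K * ε))) * (2:ℝ) ^ (5 * Q + 40 * (S * X)) := by ring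
  linarith
end

open Finset

lemma bk_indep_K (a b c a' b' c' : ℕ)
    (h : a * bkl1 + b * bkl2 + c * bkl3 = a' * bkl1 + b' * bkl2 + c' * bkl3) :
    (bkpK - 1) ^ a * bkbK ^ b * ((2 * bkpK - 1) * (4 * bkbK - bkbK ^ 2 - 1)) ^ c * 5 ^ c' =
    (bkpK - 1) ^ a' * bkbK ^ b' * ((2 * bkpK - 1) * (4 * bkbK - bkbK ^ 2 - 1)) ^ c' * 5 ^ c := by
  have h1 := congrArg Real.exp h
  rw [Real.exp_add, Real.exp_add, Real.exp_add, Real.exp_add] at h1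
  simp only [Real.exp_nat_mul, bkl1_exp, bkl2_exp, bkl3_exp] at h1
  unfold bka3 at h1
  rw [div_pow, div_pow] at h1
  field_simp at h1
  apply Subtype.ext
  have h2 := congrArg (fun x : ℝ => (x : ℂ)) h1
  simp only [Complex.ofReal_mul, Complex.ofReal_pow, Complex.ofReal_sub, Complex.ofReal_one,
    Complex.ofReal_ofNat] at h2
  have e2 : ((2 : bkK) : ℂ) = 2 := rfl
  have e4 : ((4 : bkK) : ℂ) = 4 := rfl
  have e5 : ((5 : bkK) : ℂ) = 5 := rfl
  push_cast [e2, e4, e5]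
  change ((bkp:ℂ) - 1) ^ a * (bkb:ℂ) ^ b * ((2 * (bkp:ℂ) - 1) * (4 * (bkb:ℂ) - (bkb:ℂ) ^ 2 - 1)) ^ c * 5 ^ c' =
    ((bkp:ℂ) - 1) ^ a' * (bkb:ℂ) ^ b' * ((2 * (bkp:ℂ) - 1) * (4 * (bkb:ℂ) - (bkb:ℂ) ^ 2 - 1)) ^ c' * 5 ^ c
  linear_combination h2

lemma bk_norm_unit {x y : bkK} (hx : IsIntegral ℤ x) (hy : IsIntegral ℤ y) (h : x * y = 1) :
    (Algebra.norm ℚ x) ^ 2 = 1 := by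
  obtain ⟨A, hA⟩ := IsIntegrallyClosed.isIntegral_iff.1 (Algebra.isIntegral_norm ℚ hx)
  obtain ⟨B, hB⟩ := IsIntegrallyClosed.isIntegral_iff.1 (Algebra.isIntegral_norm ℚ hy)
  have h1 := congrArg (Algebra.norm ℚ) h
  rw [map_mul, map_one, ← hA, ← hB] at h1
  simp only [eq_intCast] at h1
  have h2 : A * B = 1 := by exact_mod_cast h1
  rw [← hA]
  simp only [eq_intCast]
  have : A ^ 2 = 1 := by
    rcases Int.eq_one_or_neg_one_of_mul_eq_one h2 with h | h <;> rw [h] <;> norm_num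
  exact_mod_cast this

lemma bk_indep_c (a b c a' b' c' : ℕ) (hc : c < c')
    (h : (bkpK - 1) ^ a * bkbK ^ b * ((2 * bkpK - 1) * (4 * bkbK - bkbK ^ 2 - 1)) ^ c * 5 ^ c' =
    (bkpK - 1) ^ a' * bkbK ^ b' * ((2 * bkpK - 1) * (4 * bkbK - bkbK ^ 2 - 1)) ^ c' * 5 ^ c) : False := by
  have e1 := bkp_int _ bkpK_eq
  have e2 := bkb_int _ bkbK_eq
  have en : ∀ k : ℕ, IsIntegral ℤ (k : bkK) := fun k => by
    have := isIntegral_algebraMap (R := ℤ) (A := bkK) (x := (k:ℤ))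
    simpa using this
  have i1 : IsIntegral ℤ (1 : bkK) := isIntegral_one
  have i2 : IsIntegral ℤ (2 : bkK) := by exact_mod_cast en 2
  have i4 : IsIntegral ℤ (4 : bkK) := by exact_mod_cast en 4
  have i3 : IsIntegral ℤ (3 : bkK) := by exact_mod_cast en 3
  have i5 : IsIntegral ℤ (5 : bkK) := by exact_mod_cast en 5
  have hU : (Algebra.norm ℚ (bkpK - 1)) ^ 2 = 1 :=
    bk_norm_unit (e1.sub i1) e1 (by linear_combination bkpK_eq)
  have hV : (Algebra.norm ℚ bkbK) ^ 2 = 1 :=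
    bk_norm_unit e2 (((e2.pow 2).sub e2).sub i1) (by linear_combination bkbK_eq)
  set w : bkK := 4 * bkbK - bkbK ^ 2 - 1 with hw
  have iw : IsIntegral ℤ w := ((i4.mul e2).sub (e2.pow 2)).sub i1
  have iw' : IsIntegral ℤ (5 * bkbK ^ 2 - 3 * bkbK - 4) := ((i5.mul (e2.pow 2)).sub (i3.mul e2)).sub i4
  have hww : w * (5 * bkbK ^ 2 - 3 * bkbK - 4) = ((22 : ℚ) : bkK) := by
    push_cast
    rw [hw]; linear_combination (18 - 5 * bkbK) * bkbK_eq
  have hss : (2 * bkpK - 1) ^ 2 = ((5 : ℚ) : bkK) := by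
    push_cast
    linear_combination 4 * bkpK_eq
  obtain ⟨A, hA⟩ := IsIntegrallyClosed.isIntegral_iff.1 (Algebra.isIntegral_norm ℚ iw)
  obtain ⟨B, hB⟩ := IsIntegrallyClosed.isIntegral_iff.1 (Algebra.isIntegral_norm ℚ iw')
  simp only [eq_intCast] at hA hB
  set d := Module.finrank ℚ bkK with hd
  have hd0 : 0 < d := Module.finrank_pos
  have hnq : ∀ q : ℚ, Algebra.norm ℚ (q : bkK) = q ^ d := fun q => by
    have := Algebra.norm_algebraMap (R := ℚ) (S := bkK) q
    simpa using this
  have hAB : A * B = 22 ^ d := by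
    have := congrArg (Algebra.norm ℚ) hww
    rw [map_mul, hnq, ← hA, ← hB] at this
    exact_mod_cast this
  have hs2 : (Algebra.norm ℚ (2 * bkpK - 1)) ^ 2 = 5 ^ d := by
    rw [← map_pow, hss, hnq]
  have h5 : Algebra.norm ℚ (5 : bkK) = 5 ^ d := by
    have := hnq 5
    simpa using this
  have hn := congrArg (fun x => (Algebra.norm ℚ x) ^ 2) h
  simp only [map_mul, map_pow, mul_pow, h5, ← hA] at hn
  have q1 : ∀ k : ℕ, ((Algebra.norm ℚ (bkpK - 1)) ^ k) ^ 2 = 1 := fun k => by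
    rw [pow_right_comm, hU, one_pow]
  have q2 : ∀ k : ℕ, ((Algebra.norm ℚ bkbK) ^ k) ^ 2 = 1 := fun k => by
    rw [pow_right_comm, hV, one_pow]
  have q3 : ∀ k : ℕ, ((Algebra.norm ℚ (2 * bkpK - 1)) ^ k) ^ 2 = (5 ^ d) ^ k := fun k => by
    rw [pow_right_comm, hs2]
  simp only [q1, q2, q3, one_mul] at hn
  obtain ⟨k, rfl⟩ := Nat.exists_eq_add_of_lt hc
  have hA0 : A ≠ 0 := by
    rintro rfl
    rw [zero_mul] at hAB
    exact absurd hAB.symm (by positivity)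
  have hn2 : ((5:ℤ) ^ d) ^ c * (A ^ c) ^ 2 * ((5 ^ d) ^ (c + k + 1)) ^ 2 =
     (5 ^ d) ^ (c + k + 1) * (A ^ (c + k + 1)) ^ 2 * ((5 ^ d) ^ c) ^ 2 := by
    exact_mod_cast hn
  have hn3 : ((5:ℤ) ^ d) ^ (k+1) = (A ^ 2) ^ (k+1) := by
    have hne : ((5:ℤ) ^ d) ^ (3 * c + k + 1) * (A ^ c) ^ 2 ≠ 0 := by positivity
    apply mul_left_cancel₀ hne
    calc _ = ((5:ℤ) ^ d) ^ c * (A ^ c) ^ 2 * ((5 ^ d) ^ (c + k + 1)) ^ 2 := by ring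
      _ = _ := hn2
      _ = _ := by ring
  have hn4 : (5:ℤ) ^ d = A ^ 2 := by
    exact (pow_left_inj₀ (by positivity) (by positivity) (by omega)).1 hn3
  have hdvd : (5:ℤ) ∣ 22 ^ d := by
    have h5A : (5:ℤ) ∣ A := by
      have : (5:ℤ) ∣ A ^ 2 := by rw [← hn4]; exact dvd_pow_self _ (by omega)
      exact Prime.dvd_of_dvd_pow (by norm_num : Prime (5:ℤ)) this
    rw [← hAB]; exact h5A.mul_right _
  have := Prime.dvd_of_dvd_pow (by norm_num : Prime (5:ℤ)) hdvd
  norm_num at this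

lemma bk_small_emb : ∃ σ : bkK →ₐ[ℚ] ℂ, ‖σ bkbK‖ < 1 := by
  classical
  by_contra hcon
  push Not at hcon
  have e2 := bkb_int _ bkbK_eq
  have hV : (Algebra.norm ℚ bkbK) ^ 2 = 1 :=
    bk_norm_unit e2 (((e2.pow 2).sub e2).sub isIntegral_one) (by linear_combination bkbK_eq)
  have h1 := Algebra.norm_eq_prod_embeddings ℚ ℂ bkbK
  have h2 : ‖∏ σ : bkK →ₐ[ℚ] ℂ, σ bkbK‖ ^ 2 = 1 := by
    rw [← h1, ← norm_pow, ← map_pow, hV]; simp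
  rw [norm_prod, ← mul_prod_erase univ (fun σ : bkK →ₐ[ℚ] ℂ => ‖σ bkbK‖) (mem_univ bkK.val)] at h2
  have h3 : 1 ≤ ∏ σ ∈ univ.erase bkK.val, ‖σ bkbK‖ := Finset.one_le_prod (fun σ _ => hcon σ)
  have h4 : (9/5 : ℝ) < ‖bkK.val bkbK‖ := by
    change (9/5 : ℝ) < ‖(bkb : ℂ)‖
    rw [Complex.norm_real]
    exact bkb_lo.trans_le (le_abs_self _)
  have h5 : 1 < ‖bkK.val bkbK‖ * ∏ x ∈ univ.erase bkK.val, ‖x bkbK‖ := by nlinarith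
  exact absurd h2 (one_lt_pow₀ h5 (by norm_num)).ne'

lemma bk_normSq_root (v : ℂ) (hv : v ^ 3 = v ^ 2 + v + 1) (h1 : ‖v‖ < 1) : ‖v‖ ^ 2 * bkb = 1 := by
  have hq : v ^ 2 + (bkb - 1) * v + (bkb ^ 2 - bkb - 1) = 0 := by
    have hne : v - bkb ≠ 0 := by
      intro h
      rw [sub_eq_zero] at h
      rw [h, Complex.norm_real] at h1
      have := bkb_lo.trans_le (le_abs_self _)
      rw [Real.norm_eq_abs] at h1
      linarith
    apply mul_left_cancel₀ hne
    linear_combination hv - bkb_eqC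
  have hre := congrArg Complex.re hq
  have him := congrArg Complex.im hq
  simp [pow_two] at hre him
  rw [Complex.sq_norm, Complex.normSq_apply]
  set x := v.re
  set y := v.im
  have hb := bkb_eq
  have l := bkb_lo
  have r := bkb_hi
  by_cases hy : y = 0
  · rw [hy] at hre
    exfalso
    nlinarith [sq_nonneg (x + (bkb - 1)/2)]
  · have hx : x = -(bkb - 1) / 2 := by
      have : y * (2 * x + (bkb - 1)) = 0 := by linear_combination him
      rcases mul_eq_zero.1 this with h | h
      · exact absurd h hy
      · linarith
    have : x * x + y * y = bkb ^ 2 - bkb - 1 := by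
      rw [hx] at hre ⊢
      linear_combination -hre
    rw [this]
    linear_combination hb

lemma bk_indep (a b c a' b' c' : ℕ)
    (h : a * bkl1 + b * bkl2 + c * bkl3 = a' * bkl1 + b' * bkl2 + c' * bkl3) :
    a = a' ∧ b = b' ∧ c = c' := by
  have hcc : c = c' := by
    rcases lt_trichotomy c c' with hc | hc | hc
    · exact (bk_indep_c _ _ _ _ _ _ hc (bk_indep_K _ _ _ _ _ _ h)).elim
    · exact hc
    · exact (bk_indep_c _ _ _ _ _ _ hc (bk_indep_K _ _ _ _ _ _ h.symm)).elim
  subst hcc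
  have hab := bk_indep_K a b 0 a' b' 0 (by push_cast; linarith)
  simp only [pow_zero, mul_one] at hab
  obtain ⟨σ, hσ⟩ := bk_small_emb
  set u := σ bkpK with hu'
  set v := σ bkbK with hv'
  have hu : u ^ 2 = u + 1 := by rw [hu', ← map_pow, bkpK_eq]; simp
  have hv : v ^ 3 = v ^ 2 + v + 1 := by rw [hv', ← map_pow, bkbK_eq]; simp
  have hn := bk_normSq_root v hv hσ
  have hab2 : ‖u - 1‖ ^ a * ‖v‖ ^ b = ‖u - 1‖ ^ a' * ‖v‖ ^ b' := by
    have := congrArg (fun z => ‖σ z‖) hab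
    simpa using this
  have hl1 : bkl1 < 0 := Real.log_neg (by linarith [bkp_lo]) (by linarith [bkp_hi])
  have hl2 : 0 < bkl2 := Real.log_pos (by linarith [bkb_lo])
  have hu1 : Real.log ‖u - 1‖ = bkl1 ∨ Real.log ‖u - 1‖ = - bkl1 := by
    have : (u - bkp) * (u - (1 - bkp)) = 0 := by
      linear_combination hu - bkp_eqC
    rcases mul_eq_zero.1 this with h | h
    · left
      have : u - 1 = ((bkp - 1 : ℝ) : ℂ) := by push_cast; linear_combination h
      rw [this, Complex.norm_real, Real.norm_eq_abs, Real.log_abs, bkl1]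
    · right
      have : u - 1 = ((- bkp : ℝ) : ℂ) := by push_cast; linear_combination h
      rw [this, Complex.norm_real, Real.norm_eq_abs, Real.log_abs, bkl1, Real.log_neg_eq_log,
        ← Real.log_inv]
      congr 1
      have : bkp * (bkp - 1) = 1 := by linear_combination bkp_eq
      exact eq_inv_of_mul_eq_one_left this
  have hu0 : ‖u - 1‖ ≠ 0 := by
    intro h0
    rw [h0, Real.log_zero] at hu1
    rcases hu1 with h | h <;> linarith
  have hv0 : ‖v‖ ≠ 0 := by
    intro h0
    rw [h0] at hn; norm_num at hn
  have hlv : Real.log ‖v‖ = - bkl2 / 2 := by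
    have := congrArg Real.log hn
    rw [Real.log_mul (by positivity) (by linarith [bkb_lo]), Real.log_pow, Real.log_one] at this
    unfold bkl2
    push_cast at this
    linarith
  have hlog := congrArg Real.log hab2
  rw [Real.log_mul (by positivity) (by positivity), Real.log_mul (by positivity) (by positivity)] at hlog
  simp only [Real.log_pow] at hlog
  rw [hlv] at hlog
  have hB : ((b:ℝ) - b') * bkl2 = 0 := by
    rcases hu1 with h1 | h1
    · rw [h1] at hlog; linarith
    · rw [h1] at hlog; linarith
  have hb : b = b' := by
    rcases mul_eq_zero.1 hB with h | h
    · exact_mod_cast sub_eq_zero.1 h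
    · exact absurd h hl2.ne'
  have hA : ((a:ℝ) - a') * bkl1 = 0 := by
    rw [hb] at h; linarith
  have ha : a = a' := by
    rcases mul_eq_zero.1 hA with h | h
    · exact_mod_cast sub_eq_zero.1 h
    · exact absurd h hl1.ne
  exact ⟨ha, hb, rfl⟩

open Finset
set_option exponentiation.threshold 4000

lemma bk_pow_aux (l : ℕ) (hl : 1100 ≤ l) : 2 ^ 684 * l ^ 39 ≤ 2 ^ l := by
  induction l, hl using Nat.le_induction with
  | base => norm_num
  | succ l hl ih =>
    have h : (l + 1) ^ 39 ≤ 2 * l ^ 39 := by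
      have h1 : (1100:ℝ) ≤ l := by exact_mod_cast hl
      have hb := one_add_mul_le_pow (a := -(1 / ((l:ℝ) + 1))) (by
        have : 1 / ((l:ℝ) + 1) ≤ 1 := by rw [div_le_one (by linarith)]; linarith
        linarith) 39
      have h2 : (1:ℝ) / 2 ≤ 1 + (39:ℕ) * -(1 / ((l:ℝ) + 1)) := by
        have : 1 / ((l:ℝ) + 1) ≤ 1 / 1100 := by
          apply one_div_le_one_div_of_le <;> linarith
        push_cast
        linarith
      have h3 : 1 + -(1 / ((l:ℝ) + 1)) = l / (l + 1) := by field_simp; ring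
      rw [h3, div_pow] at hb
      have h4 := h2.trans hb
      rw [div_le_div_iff₀ (by norm_num) (by positivity)] at h4
      have : ((l:ℝ) + 1) ^ 39 ≤ 2 * l ^ 39 := by linarith
      exact_mod_cast this
    calc 2 ^ 684 * (l + 1) ^ 39 ≤ 2 ^ 684 * (2 * l ^ 39) := Nat.mul_le_mul_left _ h
      _ = 2 * (2 ^ 684 * l ^ 39) := by ring
      _ ≤ 2 * 2 ^ l := Nat.mul_le_mul_left _ ih
      _ = 2 ^ (l + 1) := by ring

lemma bk_vander {ι : Type*} [Fintype ι] (w : ι → ℂ) (hw : Function.Injective w) (p : ι → ℂ)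
    (h : ∀ s < Fintype.card ι, ∑ i, p i * w i ^ s = 0) : p = 0 := by
  classical
  let e := Fintype.equivFin ι
  have := Matrix.eq_zero_of_forall_pow_sum_mul_pow_eq_zero (f := w ∘ e.symm) (v := p ∘ e.symm)
    (hw.comp e.symm.injective) (fun i => by
      have := h i i.2
      rw [← e.symm.sum_comp] at this
      exact this)
  funext i
  have := congrFun this (e i)
  simpa using this

set_option maxHeartbeats 1600000 in
theorem bk_main (n m l : ℕ) (hnm : n ≤ 2 * m) (hl : 1100 ≤ l) (hm : m < 2 ^ (l + 1))
    (hΛ : |bkl3 - (n * bkl1 + m * bkl2)| ≤ (1/2) ^ (2 ^ (l - 1))) : False := by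
  have haux := bk_pow_aux l hl
  obtain ⟨S, hS⟩ : ∃ S, S = 2 ^ 100 * l ^ 3 := ⟨_, rfl⟩
  obtain ⟨q, hq⟩ : ∃ q, q = 2 ^ 14 * l := ⟨_, rfl⟩
  obtain ⟨L0, hL0⟩ : ∃ L0, L0 = 2 ^ 22 * l := ⟨_, rfl⟩
  obtain ⟨KJ, hKJ⟩ : ∃ KJ, KJ = 2 ^ 8 * S * q := ⟨_, rfl⟩
  obtain ⟨K0, hK0⟩ : ∃ K0, K0 = 2 ^ 15 * KJ := ⟨_, rfl⟩
  have hl0 : 0 < l := by omega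
  have hSpos : 0 < S := by rw [hS]; positivity
  have hqpos : 0 < q := by rw [hq]; positivity
  have hLpos : 0 < L0 := by rw [hL0]; positivity
  have hKpos : 0 < KJ := by rw [hKJ]; positivity
  have hpl : ∀ k ≤ 39, l ^ k ≤ l ^ 39 := fun k hk => Nat.pow_le_pow_right hl0 hk
  have hS4 : 2 ^ 4 * S ≤ 2 ^ l := by
    refine le_trans ?_ haux
    rw [hS, ← mul_assoc, ← pow_add]
    exact Nat.mul_le_mul (Nat.pow_le_pow_right (by norm_num) (by norm_num)) (hpl 3 (by norm_num))
  set ι := Fin S × Fin S × Fin S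
  let a : ι → ℕ := fun i => i.1
  let b : ι → ℕ := fun i => i.2.1
  let c : ι → ℕ := fun i => i.2.2
  have ha : ∀ i, a i ≤ S := fun i => i.1.2.le
  have hb : ∀ i, b i ≤ S := fun i => i.2.1.2.le
  have hc : ∀ i, c i ≤ S := fun i => i.2.2.2.le
  have hcard : Fintype.card ι = S ^ 3 := by simp [ι]; ring
  have hN : Fintype.card ι ≤ 2 ^ (3 * l) := by
    rw [hcard, mul_comm, pow_mul]
    exact Nat.pow_le_pow_left (by omega) 3
  have hm' : m ≤ 2 * 2 ^ l := by rw [pow_succ] at hm; omega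
  have h2l : 1 ≤ 2 ^ l := Nat.one_le_two_pow
  have hY : 2 ^ (2 * l) = 2 ^ l * 2 ^ l := by rw [two_mul, pow_add]
  have hx : ∀ i, a i + n * c i ≤ 2 ^ (2 * l) := fun i => by
    have h1 := ha i; have h2 := hc i
    rw [hY]
    have : n * c i ≤ (4 * 2 ^ l) * S := Nat.mul_le_mul (by omega) h2
    nlinarith
  have hy : ∀ i, b i + m * c i ≤ 2 ^ (2 * l) := fun i => by
    have h1 := hb i; have h2 := hc i
    rw [hY]
    have : m * c i ≤ (4 * 2 ^ l) * S := Nat.mul_le_mul (by omega) h2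
    nlinarith
  obtain ⟨P, hP⟩ : ∃ P, P = 3 * l + 2 * (2 * l) * K0 + 8 * S * L0 := ⟨_, rfl⟩
  obtain ⟨Q, hQ⟩ : ∃ Q, Q = 3 * l + P + (2 * l) * (2 * K0) := ⟨_, rfl⟩
  obtain ⟨p, hp0, hp, hz0⟩ := bk_siegel (n := n) (m := m) (P := P) (K := K0) (L := L0) ha hb hc hx hy hN
    (by rw [hK0]; positivity) hLpos (by
      rw [hcard, hK0, hL0, hKJ, hS, hq]
      calc _ = (12 * 2 ^ 296) * l ^ 9 := by ring
        _ ≤ 2 ^ 300 * l ^ 9 := Nat.mul_le_mul_right _ (by norm_num)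
        _ = _ := by ring) (by omega)
  have hind : ∀ j ≤ 15, ∀ t1 < 2 ^ (15 - j) * KJ, ∀ t2 < 2 ^ (15 - j) * KJ, ∀ s < q ^ j * L0,
      bkTh (bkp : ℂ) (bkb : ℂ) S p a b c n m t1 t2 s = 0 := by
    intro j
    induction j with
    | zero =>
      intro _
      rw [Nat.sub_zero, ← hK0, pow_zero, one_mul]
      exact hz0
    | succ j ih =>
      intro hj
      have ih := ih (by omega)
      obtain ⟨L, hL⟩ : ∃ L, L = q ^ j * L0 := ⟨_, rfl⟩
      obtain ⟨K', hK'⟩ : ∃ K', K' = 2 ^ (15 - (j + 1)) * KJ := ⟨_, rfl⟩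
      have hKK : 2 ^ (15 - j) * KJ = K' + K' := by
        rw [hK', show 15 - j = (15 - (j + 1)) + 1 by omega, pow_succ]; ring
      have hX : q ^ (j + 1) * L0 = q * L := by rw [hL]; ring
      rw [hKK, ← hL] at ih
      rw [hX, ← hK']
      have hLL : L0 ≤ L := by rw [hL]; exact Nat.le_mul_of_pos_left _ (by positivity)
      have hKL : KJ ≤ K' := by rw [hK']; exact Nat.le_mul_of_pos_left _ (by positivity)
      have hK2 : K' + K' ≤ K0 := by
        rw [← hKK, hK0]
        exact Nat.mul_le_mul_right _ (Nat.pow_le_pow_right (by norm_num) (by omega))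
      obtain ⟨ν, hν⟩ : ∃ ν, ν = L * K' := ⟨_, rfl⟩
      -- Z = KJ * L
      have hZ : KJ * L ≤ ν := by rw [hν, mul_comm]; exact Nat.mul_le_mul_left _ hKL
      have hZ1 : 256 * (S * (q * L)) = KJ * L := by rw [hKJ]; ring
      have hZ2 : 128 * (l * K0) ≤ KJ * L := by
        calc 128 * (l * K0) = KJ * (2 ^ 22 * l) := by rw [hK0]; ring
          _ ≤ KJ * L := Nat.mul_le_mul_left _ (by rw [← hL0]; exact hLL)
      have hZ3 : S * L0 ≤ S * (q * L) :=
        Nat.mul_le_mul_left _ (hLL.trans (Nat.le_mul_of_pos_left _ hqpos))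
      have hZ4 : l ≤ l * K0 := Nat.le_mul_of_pos_right _ (by rw [hK0]; positivity)
      have hZ5 : 32 * K0 ≤ l * K0 := Nat.mul_le_mul_right _ (by omega)
      have e1 : 2 * (2 * l) * K0 = 4 * (l * K0) := by ring
      have e2 : 2 * l * (2 * K0) = 4 * (l * K0) := by ring
      have e3 : 8 * S * L0 = 8 * (S * L0) := by ring
      have h1 : 6 * Q + 73 * (S * (q * L)) + 2 + K0 + K0 ≤ 2 * ν := by
        rw [hQ, hP, e1, e2, e3]
        omega
      have hνle : ν ≤ 2 ^ 340 * l ^ 19 := by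
        have : ν * 2 ^ j ≤ (2 ^ 340 * l ^ 19) * 2 ^ j := by
          calc ν * 2 ^ j = 2 ^ (15 - (j+1)) * 2 ^ j * KJ * L0 * q ^ j := by
                rw [hν, hL, hK']; ring
            _ = 2 ^ 14 * KJ * L0 * q ^ j := by
                rw [← pow_add, show 15 - (j + 1) + j = 14 by omega]
            _ ≤ 2 ^ 14 * KJ * L0 * q ^ j * (l ^ (14 - j) * 2 ^ (12 * (14 - j))) :=
                Nat.le_mul_of_pos_right _ (by positivity)
            _ ≤ 2 ^ 14 * KJ * L0 * q ^ j * (l ^ (14 - j) * 2 ^ (13 * (14 - j))) := by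
                gcongr <;> omega
            _ = 2 ^ 14 * KJ * L0 * (l ^ (j + (14 - j)) * 2 ^ (14 * j + 13 * (14 - j))) := by
                rw [hq, mul_pow, pow_add, pow_add, ← pow_mul]; ring
            _ = 2 ^ 14 * KJ * L0 * (l ^ 14 * 2 ^ (182 + j)) := by
                rw [show j + (14 - j) = 14 by omega, show 14 * j + 13 * (14 - j) = 182 + j by omega]
            _ = (2 ^ 340 * l ^ 19) * 2 ^ j := by
                rw [hKJ, hS, hq, hL0, pow_add]; ring
        exact Nat.le_of_mul_le_mul_right this (by positivity)
      have hν1 : 1 ≤ ν := by rw [hν]; exact Nat.mul_pos (by omega) (by omega)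
      have hν2 : 8 * l * (ν * ν) ≤ 2 ^ (l - 1) := by
        have h2 : 2 * (8 * l * (ν * ν)) ≤ 2 * 2 ^ (l - 1) := by
          calc 2 * (8 * l * (ν * ν)) ≤ 2 * (8 * l * ((2 ^ 340 * l ^ 19) * (2 ^ 340 * l ^ 19))) := by
                gcongr
            _ = 2 ^ 684 * l ^ 39 := by ring
            _ ≤ 2 ^ l := haux
            _ = 2 * 2 ^ (l - 1) := by rw [← pow_succ']; congr 1; omega
        omega
      have hνν : ν ≤ ν * ν := Nat.le_mul_of_pos_left _ hν1
      have hlν : ν * ν ≤ l * (ν * ν) := Nat.le_mul_of_pos_left _ hl0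
      have hhalf : 2 ^ (l - 1) ≤ 2 ^ l := Nat.pow_le_pow_right (by norm_num) (by omega)
      have e4 : 8 * l * (ν * ν) = 8 * (l * (ν * ν)) := by ring
      have e5 : 5 * l * ν * ν = 5 * (l * (ν * ν)) := by ring
      have hqL : q * L ≤ S * (q * L) := Nat.le_mul_of_pos_left _ hSpos
      have hνν3 : 1 * 1 ≤ ν * ν := Nat.mul_le_mul hν1 hν1
      refine bk_step (P := P) (Y := 2 * l) (NN := 3 * l) (K := K' + K') (L := L) (d := l) (Δ := 2 ^ (l - 1)) (Q := Q)
        (ν := ν) ha hb hc hp hx hy hN le_rfl (Nat.le_mul_of_pos_left _ hqpos) hν hν1 ?_ ?_ hΛ ?_ ?_ ?_ ih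
      · omega
      · omega
      · have : 2 * l * (2 * (K' + K')) ≤ 2 * l * (2 * K0) := by gcongr
        omega
      · omega
      · rw [e5]
        rw [e4] at hν2
        -- 47 S X + 6 Q + 2K' + 5 l nu^2 + 6
        have g1 : 4 * 1 ≤ l * (ν * ν) := Nat.mul_le_mul (by omega) (by omega)
        have g2 : 2 * ν ≤ l * (ν * ν) := Nat.mul_le_mul (by omega) hνν
        omega
  have hfin := hind 15 le_rfl 0 (by simpa using hKpos) 0 (by simpa using hKpos)
  have hLN : S ^ 3 ≤ q ^ 15 * L0 := by
    rw [hS, hq, hL0]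
    have h7 : 2 ^ 68 ≤ l ^ 7 := le_trans (by norm_num) (Nat.pow_le_pow_left hl 7)
    calc _ = 2 ^ 68 * (2 ^ 232 * l ^ 9) := by ring
      _ ≤ l ^ 7 * (2 ^ 232 * l ^ 9) := Nat.mul_le_mul_right _ h7
      _ = _ := by ring
  have hpz := bk_vander (fun i : ι => (((5:ℝ) ^ S * Real.exp (a i * bkl1 + b i * bkl2 + c i * bkl3) : ℝ) : ℂ))
    (by
      intro i i' hii
      simp only [Complex.ofReal_inj] at hii
      have h2 := Real.exp_injective (mul_left_cancel₀ (by positivity) hii)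
      obtain ⟨e1, e2, e3⟩ := bk_indep _ _ _ _ _ _ h2
      refine Prod.ext (Fin.ext e1) (Prod.ext (Fin.ext e2) (Fin.ext e3)))
    (fun i => (p i : ℂ)) (by
      intro s hs
      rw [hcard] at hs
      have := hfin s (by omega)
      unfold bkTh at this
      simp only [pow_zero, mul_one] at this
      rw [← this]
      apply sum_congr rfl
      intro i _
      rw [bkG_eq (hc i), ← Complex.ofReal_pow, mul_pow, mul_comm _ (s:ℝ), Real.exp_nat_mul])
  apply hp0
  funext i
  have := congrFun hpz i
  simpa using this

open Finset
set_option exponentiation.threshold 4000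

noncomputable def bkw : ℝ := 4 * bkb - bkb ^ 2 - 1
lemma bkw_lo : (2.96:ℝ) < bkw := by
  unfold bkw
  nlinarith [bkb_lo, bkb_hi]
lemma bkw_hi : bkw < 3 := by
  unfold bkw
  nlinarith [bkb_lo, bkb_hi]

noncomputable def bkErr (m : ℕ) : ℝ := trib m - bkb ^ m / bkw

lemma bkErr_rec (m : ℕ) : bkErr (m + 2) + (bkb - 1) * bkErr (m + 1) + (bkb ^ 2 - bkb - 1) * bkErr m = 0 := by
  have hw : bkw ≠ 0 := by linarith [bkw_lo]
  induction m with
  | zero =>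
    simp [bkErr, trib]
    field_simp
    unfold bkw
    linear_combination - bkb_eq
  | succ m ih =>
    have h3 : bkErr (m + 3) = bkErr (m + 2) + bkErr (m + 1) + bkErr m := by
      simp only [bkErr, trib]
      push_cast
      field_simp
      linear_combination - bkb ^ m * bkb_eq
    change bkErr (m + 3) + (bkb - 1) * bkErr (m + 2) + (bkb ^ 2 - bkb - 1) * bkErr (m + 1) = 0
    rw [h3]
    linear_combination bkb * ih - bkErr m * bkb_eq

lemma bkErr_V (m : ℕ) : bkErr (m + 1) ^ 2 + (bkb - 1) * bkErr (m + 1) * bkErr m +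
    (bkb ^ 2 - bkb - 1) * bkErr m ^ 2 ≤ 1 / 4 := by
  have l := bkb_lo
  have r := bkb_hi
  have hb := bkb_eq
  have hg1 : 0 < bkb ^ 2 - bkb - 1 := by nlinarith
  have hg2 : bkb ^ 2 - bkb - 1 < 1 := by nlinarith
  induction m with
  | zero =>
    have e0 : bkErr 0 = - (1 / bkw) := by simp [bkErr, trib]
    have e1 : bkErr 1 = 1 - bkb * (1 / bkw) := by simp [bkErr, trib]; ring
    have c1 : 1 / bkw ≤ 0.338 := by
      rw [div_le_iff₀ (by linarith [bkw_lo])]; linarith [bkw_lo]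
    have c2 : 0.333 ≤ 1 / bkw := by
      rw [le_div_iff₀ (by linarith [bkw_lo])]; linarith [bkw_hi]
    simp only [zero_add]
    rw [e0, e1]
    set c := 1 / bkw
    have f1 : 1 - bkb * c ≤ 0.41 := by nlinarith
    have f2 : 0.35 ≤ 1 - bkb * c := by nlinarith
    have g1 : (1 - bkb * c) ^ 2 ≤ 0.17 := by nlinarith
    have g2 : c ^ 2 ≤ 0.12 := by nlinarith
    have g3 : 0 ≤ (1 - bkb * c) * c := by apply mul_nonneg <;> linarith
    have g4 : 0.09 ≤ (bkb - 1) * ((1 - bkb * c) * c) := by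
      have : 0.115 ≤ (1 - bkb * c) * c := by nlinarith
      nlinarith
    have g5 : (bkb ^ 2 - bkb - 1) * c ^ 2 ≤ 0.12 := by nlinarith [sq_nonneg c]
    nlinarith
  | succ m ih =>
    have hr := bkErr_rec m
    have he : bkErr (m + 2) = - (bkb - 1) * bkErr (m + 1) - (bkb ^ 2 - bkb - 1) * bkErr m := by linarith
    change bkErr (m + 2) ^ 2 + (bkb - 1) * bkErr (m + 2) * bkErr (m + 1) + (bkb ^ 2 - bkb - 1) * bkErr (m + 1) ^ 2 ≤ _
    have : bkErr (m + 2) ^ 2 + (bkb - 1) * bkErr (m + 2) * bkErr (m + 1) + (bkb ^ 2 - bkb - 1) * bkErr (m + 1) ^ 2 = (bkb ^ 2 - bkb - 1) * (bkErr (m + 1) ^ 2 + (bkb - 1) * bkErr (m + 1) * bkErr m +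
    (bkb ^ 2 - bkb - 1) * bkErr m ^ 2) := by
      rw [he]; ring
    rw [this]
    nlinarith

lemma bkErr_le (m : ℕ) : |bkErr m| ≤ 1 := by
  have h := bkErr_V m
  have l := bkb_lo
  have r := bkb_hi
  have hb := bkb_eq
  have hg : 1 / 2 ≤ bkb ^ 2 - bkb - 1 := by nlinarith
  rw [abs_le_one_iff_mul_self_le_one]
  have h1 : 0 ≤ (bkErr (m + 1) + (bkb - 1) / 2 * bkErr m) ^ 2 := sq_nonneg _
  have h2 : (bkb ^ 2 - bkb - 1 - (bkb - 1) ^ 2 / 4) * bkErr m ^ 2 ≤ 1 / 4 := by nlinarith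
  have h3 : 1 / 4 ≤ bkb ^ 2 - bkb - 1 - (bkb - 1) ^ 2 / 4 := by nlinarith
  nlinarith [sq_nonneg (bkErr m)]

lemma bk_sqrt5 : Real.sqrt 5 = 2 * bkp - 1 := by
  unfold bkp Real.goldenRatio; ring

lemma bk_log_le {x d : ℝ} (h : |Real.exp x - 1| ≤ d) (hd : d ≤ 1 / 2) : |x| ≤ 2 * d := by
  rw [abs_le] at h ⊢
  have h1 := Real.add_one_le_exp x
  have h2 := Real.add_one_le_exp (-x)
  have h3 : Real.exp (-x) * Real.exp x = 1 := by rw [← Real.exp_add]; simp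
  have h4 := Real.exp_pos x
  have h5 := Real.exp_pos (-x)
  constructor
  · have : Real.exp (-x) ≤ 1 + 2 * d := by nlinarith
    linarith
  · linarith

lemma bk_Lambda (n m : ℕ) (hm : 20 ≤ m) (h : (Nat.fib n : ℤ) - trib m = 0) :
    |bkl3 - (n * bkl1 + m * bkl2)| ≤ 12 * (1 / bkb) ^ m ∧ n ≤ 2 * m := by
  have hw : 0 < bkw := by linarith [bkw_lo]
  have hw3 := bkw_hi
  have hp1 := bkp_lo
  have hp2 := bkp_hi
  have hb0 : 0 < bkb := by linarith [bkb_lo]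
  have h1 : (Nat.fib n : ℝ) = trib m := by
    have : (Nat.fib n : ℤ) = trib m := by linarith
    exact_mod_cast this
  have h2 := Real.coe_fib_eq n
  rw [h1, bk_sqrt5] at h2
  have hE := bkErr_le m
  unfold bkErr at hE
  rw [h2] at hE
  have hψ : |Real.goldenConj ^ n| ≤ 1 := by
    rw [abs_pow]
    apply pow_le_one₀ (abs_nonneg _)
    rw [abs_le]; constructor <;> linarith [Real.goldenConj_neg, Real.neg_one_lt_goldenConj]
  have hs : (2.2:ℝ) < 2 * bkp - 1 := by linarith
  have hkey : Real.exp (bkl3 - (n * bkl1 + m * bkl2)) = bkp ^ n / (2 * bkp - 1) * bkw * (1 / bkb) ^ m := by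
    rw [Real.exp_sub, Real.exp_add, Real.exp_nat_mul, Real.exp_nat_mul, bkl3_exp, bkl1_exp, bkl2_exp]
    have e1 : bkp - 1 = 1 / bkp := by
      have := bkp_eq; field_simp; linear_combination this
    rw [e1]
    unfold bka3
    change (2 * bkp - 1) * bkw / 5 / _ = _
    have e2 : (5:ℝ) = (2 * bkp - 1) ^ 2 := by linear_combination - 4 * bkp_eq
    rw [e2]
    have : bkp ≠ 0 := by linarith
    have : 2 * bkp - 1 ≠ 0 := by linarith
    rw [one_div_pow, one_div_pow]
    field_simp
  have hsmall : |Real.exp (bkl3 - (n * bkl1 + m * bkl2)) - 1| ≤ 6 * (1 / bkb) ^ m := by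
    rw [hkey]
    have hB : 0 < (1 / bkb) ^ m := by positivity
    have hbb : bkb ^ m * (1 / bkb) ^ m = 1 := by rw [← mul_pow]; field_simp; simp
    have e : bkp ^ n / (2 * bkp - 1) * bkw * (1 / bkb) ^ m - 1 =
        (bkp ^ n / (2 * bkp - 1) - bkb ^ m / bkw) * (bkw * (1 / bkb) ^ m) := by
      have : bkb ^ m / bkw * (bkw * (1 / bkb) ^ m) = 1 := by
        have t : bkb ^ m / bkw * (bkw * (1 / bkb) ^ m) = bkb ^ m * (1 / bkb) ^ m * (bkw / bkw) := by ring
        rw [t, hbb, div_self hw.ne', one_mul]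
      rw [sub_mul, this]; ring
    rw [e, abs_mul, abs_of_pos (mul_pos hw hB)]
    have e3 : |bkp ^ n / (2 * bkp - 1) - bkb ^ m / bkw| ≤ 2 := by
      have e4 : bkp ^ n / (2 * bkp - 1) - bkb ^ m / bkw =
        ((Real.goldenRatio ^ n - Real.goldenConj ^ n) / (2 * bkp - 1) - bkb ^ m / bkw) +
          Real.goldenConj ^ n / (2 * bkp - 1) := by
        unfold bkp; ring
      rw [e4]
      refine (abs_add_le _ _).trans ?_
      have : |Real.goldenConj ^ n / (2 * bkp - 1)| ≤ 1 := by
        rw [abs_div, abs_of_pos (by linarith : 0 < 2 * bkp - 1), div_le_one (by linarith)]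
        linarith
      linarith
    calc _ ≤ 2 * (3 * (1 / bkb) ^ m) := by gcongr
      _ = _ := by ring
  have hbm : (1 / bkb) ^ m ≤ 1 / 12 := by
    have h1b : 1 / bkb ≤ 5 / 9 := by
      rw [div_le_div_iff₀ hb0 (by norm_num)]; linarith [bkb_lo]
    calc (1 / bkb) ^ m ≤ (5 / 9) ^ m := by gcongr
      _ ≤ (5 / 9) ^ 20 := pow_le_pow_of_le_one (by norm_num) (by norm_num) hm
      _ ≤ _ := by norm_num
  have hL := bk_log_le hsmall (by linarith)
  refine ⟨hL.trans (le_of_eq (by ring)), ?_⟩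
  by_contra hn
  push Not at hn
  have hL1 := le_of_abs_le (hL.trans (by linarith : _ ≤ (1:ℝ)))
  have h3 : 0 ≤ bkl3 := Real.log_nonneg (by linarith [bka3_lo])
  have hnm : (2:ℝ) * m ≤ n := by exact_mod_cast hn.le
  have hm' : (20:ℝ) ≤ m := by exact_mod_cast hm
  have hlog : 1 / 4 ≤ -2 * bkl1 - bkl2 := by
    have e0 : -2 * bkl1 - bkl2 = Real.log (((bkp - 1) ^ 2 * bkb)⁻¹) := by
      rw [Real.log_inv, Real.log_mul (by nlinarith) (by linarith), Real.log_pow]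
      unfold bkl1 bkl2; push_cast; ring
    rw [e0]
    have hpos : 0 < (bkp - 1) ^ 2 * bkb := by
      apply mul_pos _ hb0
      nlinarith
    refine le_trans ?_ (Real.one_sub_inv_le_log_of_pos (inv_pos.2 hpos))
    rw [inv_inv]
    have := bkp_eq
    have q1 : bkp < 1.62 := by nlinarith
    have : (bkp - 1) ^ 2 ≤ 0.385 := by nlinarith
    nlinarith [bkb_hi]
  have hl1 := bkl1_nonpos
  nlinarith

lemma bk_bound (n m : ℕ) (h : (Nat.fib n : ℤ) - trib m = 0) : m < 2 ^ 1100 := by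
  by_contra hm
  push Not at hm
  have hm0 : m ≠ 0 := by
    have : 0 < 2 ^ 1100 := by positivity
    omega
  have hm20 : 20 ≤ m := by
    have : 2 ^ 5 ≤ 2 ^ 1100 := Nat.pow_le_pow_right (by norm_num) (by norm_num)
    omega
  obtain ⟨h1, h2⟩ := bk_Lambda n m hm20 h
  set l := Nat.log 2 m with hl
  have hl1 : 1100 ≤ l := Nat.le_log_of_pow_le (by norm_num) hm
  have hle : 2 ^ l ≤ m := Nat.pow_log_le_self 2 hm0
  have hlt : m < 2 ^ (l + 1) := Nat.lt_pow_succ_log_self (by norm_num) m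
  refine bk_main n m l h2 hl1 hlt (h1.trans ?_)
  set k := 2 ^ (l - 1) with hk
  have hk2 : 2 * k ≤ m := by
    rw [hk, ← pow_succ', show l - 1 + 1 = l by omega]; exact hle
  have hk32 : 32 ≤ k := by
    rw [hk]
    calc 32 = 2 ^ 5 := by norm_num
      _ ≤ _ := Nat.pow_le_pow_right (by norm_num) (by omega)
  have hb0 : 0 < bkb := by linarith [bkb_lo]
  have h1b : 1 / bkb ≤ 5 / 9 := by
    rw [div_le_div_iff₀ hb0 (by norm_num)]; linarith [bkb_lo]
  have hk' : (32:ℝ) ≤ k := by exact_mod_cast hk32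
  have hber := one_add_mul_le_pow (a := (1/2:ℝ)) (by norm_num) k
  have h12 : (12:ℝ) ≤ (1 + 1/2) ^ k := by linarith
  calc 12 * (1 / bkb) ^ m ≤ (1 + 1/2) ^ k * (5 / 9) ^ (2 * k) := by
        gcongr
        calc (1 / bkb) ^ m ≤ (5 / 9) ^ m := by gcongr
          _ ≤ _ := pow_le_pow_of_le_one (by norm_num) (by norm_num) hk2
    _ = ((1 + 1/2) * (5 / 9) ^ 2) ^ k := by rw [pow_mul, mul_pow]
    _ ≤ _ := by gcongr; norm_num

open Finset
set_option exponentiation.threshold 4000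

noncomputable def bkFc (n : ℕ) {α : Type} (f : ℕ → α) : α :=
  Nat.rec (f 0) (fun k _ => f (k + 1)) n
lemma bkFc_eq (n : ℕ) {α : Type} (f : ℕ → α) : bkFc n f = f n := by cases n <;> rfl

noncomputable def bkH (P X k : ℕ) : ℕ → ℕ :=
  Nat.rec (fun acc => X * acc / P)
    (fun k ih acc => bkFc (P / (k + 1) + X * acc / P) ih) k
lemma bkH_zero (P X acc : ℕ) : bkH P X 0 acc = X * acc / P := rfl
lemma bkH_succ (P X k acc : ℕ) : bkH P X (k + 1) acc = bkH P X k (P / (k + 1) + X * acc / P) :=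
  bkFc_eq _ _

lemma bk_floor (a b : ℕ) (hb : 0 < b) : a ≤ (a / b + 1) * b := by
  have h1 := Nat.div_add_mod a b
  have h2 := Nat.mod_lt a hb
  nlinarith

lemma bkH_spec (P X : ℕ) (hP : 0 < P) (hX : 2 * X ≤ P) (k acc : ℕ) (S : ℝ)
    (h1 : (acc : ℝ) ≤ P * S) (h2 : P * S ≤ acc + 4) :
    (bkH P X k acc : ℝ) ≤ P * ((∑ i ∈ range k, ((X:ℝ) / P) ^ (i + 1) / ((i:ℝ) + 1)) + ((X:ℝ) / P) ^ (k + 1) * S) ∧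
    P * ((∑ i ∈ range k, ((X:ℝ) / P) ^ (i + 1) / ((i:ℝ) + 1)) + ((X:ℝ) / P) ^ (k + 1) * S) ≤ bkH P X k acc + 3 := by
  have hP' : (0:ℝ) < P := by exact_mod_cast hP
  have hX' : (2:ℝ) * X ≤ P := by exact_mod_cast hX
  have hx0 : 0 ≤ (X:ℝ) / P := by positivity
  have hx1 : (X:ℝ) / P ≤ 1 / 2 := by rw [div_le_iff₀ hP']; linarith
  have key : ∀ (acc : ℕ) (S : ℝ), (acc : ℝ) ≤ P * S → P * S ≤ acc + 4 →
      ((X * acc / P : ℕ) : ℝ) ≤ P * ((X:ℝ) / P * S) ∧ P * ((X:ℝ) / P * S) ≤ ((X * acc / P : ℕ) : ℝ) + 3 := by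
    intro acc S h1 h2
    have e1 : P * ((X:ℝ) / P * S) = (X:ℝ) / P * (P * S) := by ring
    have e2 : ((X * acc : ℕ) : ℝ) / P = (X:ℝ) / P * acc := by push_cast; ring
    have f1 : ((X * acc / P : ℕ) : ℝ) ≤ (X:ℝ) / P * acc := by
      rw [← e2]; exact Nat.cast_div_le
    have f2 : (X:ℝ) / P * acc ≤ ((X * acc / P : ℕ) : ℝ) + 1 := by
      rw [← e2, div_le_iff₀ hP']
      exact_mod_cast bk_floor (X * acc) P hP
    rw [e1]
    constructor <;> nlinarith
  induction k generalizing acc S with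
  | zero => simpa [bkH_zero] using key acc S h1 h2
  | succ k ih =>
    obtain ⟨g1, g2⟩ := key acc S h1 h2
    have hk : (0:ℝ) < (k:ℝ) + 1 := by positivity
    have d1 : ((P / (k + 1) : ℕ) : ℝ) ≤ P / ((k:ℝ) + 1) := by
      have := @Nat.cast_div_le ℝ _ _ _ P (k + 1)
      push_cast at this; exact this
    have d2 : P / ((k:ℝ) + 1) ≤ ((P / (k + 1) : ℕ) : ℝ) + 1 := by
      rw [div_le_iff₀ hk]
      exact_mod_cast bk_floor P (k + 1) (Nat.succ_pos k)
    have e : (P:ℝ) * (1 / ((k:ℝ) + 1) + (X:ℝ) / P * S) = P / ((k:ℝ) + 1) + P * ((X:ℝ) / P * S) := by ring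
    have := ih (P / (k + 1) + X * acc / P) (1 / ((k:ℝ) + 1) + (X:ℝ) / P * S)
      (by rw [e]; push_cast; linarith) (by rw [e]; push_cast; linarith)
    rw [sum_range_succ]
    have e5 : (∑ i ∈ range k, ((X:ℝ) / P) ^ (i + 1) / ((i:ℝ) + 1)) + ((X:ℝ) / P) ^ (k + 1) / ((k:ℝ) + 1) +
        ((X:ℝ) / P) ^ (k + 1 + 1) * S = (∑ i ∈ range k, ((X:ℝ) / P) ^ (i + 1) / ((i:ℝ) + 1)) +
        ((X:ℝ) / P) ^ (k + 1) * (1 / ((k:ℝ) + 1) + (X:ℝ) / P * S) := by ring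
    rw [e5, bkH_succ]
    exact this

lemma bkH_log (U : ℕ) (P N : ℕ) (hP : 0 < P) (hU : P ≤ 2 * U) (hU2 : U ≤ P) (hN : P ≤ 2 ^ N) :
    (bkH P (P - U) N 0 : ℝ) - 1 ≤ P * (- Real.log ((U:ℝ) / P)) ∧
    P * (- Real.log ((U:ℝ) / P)) ≤ bkH P (P - U) N 0 + 4 := by
  have hP' : (0:ℝ) < P := by exact_mod_cast hP
  obtain ⟨h1, h2⟩ := bkH_spec P (P - U) hP (by omega) N 0 0 (by simp) (by simp)
  have hx0 : 0 ≤ ((P - U : ℕ):ℝ) / P := by positivity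
  have hx1 : ((P - U : ℕ):ℝ) / P ≤ 1 / 2 := by
    have : (2:ℝ) * ((P - U : ℕ):ℝ) ≤ P := by exact_mod_cast (by omega : 2 * (P - U) ≤ P)
    rw [div_le_iff₀ hP']; linarith
  have e : (U:ℝ) / P = 1 - ((P - U : ℕ):ℝ) / P := by
    rw [Nat.cast_sub hU2]; field_simp; ring
  rw [e]
  set x := ((P - U : ℕ):ℝ) / P with hx
  have h3 := Real.abs_log_sub_add_sum_range_le (x := x) (by rw [abs_of_nonneg hx0]; linarith) N
  rw [abs_of_nonneg hx0] at h3
  have h4 : P * (x ^ (N + 1) / (1 - x)) ≤ 1 := by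
    have : x ^ (N + 1) / (1 - x) ≤ (1 / 2) ^ N := by
      rw [div_le_iff₀ (by linarith)]
      calc x ^ (N + 1) ≤ (1 / 2) ^ (N + 1) := by gcongr
        _ = (1 / 2) ^ N * (1 / 2) := by ring
        _ ≤ _ := by gcongr; linarith
    have hN' : (P:ℝ) ≤ 2 ^ N := by exact_mod_cast hN
    calc P * (x ^ (N + 1) / (1 - x)) ≤ 2 ^ N * (1 / 2) ^ N :=
          mul_le_mul hN' this (div_nonneg (by positivity) (by linarith)) (by positivity)
      _ = 1 := by rw [← mul_pow]; norm_num
  rw [abs_le] at h3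
  simp only [mul_zero, add_zero] at h1 h2
  constructor <;> nlinarith

def bkP : ℕ := 2 ^ 2240
def bkZU : ℕ := 0x9e3779b97f4a7c15f39cc0605cedc8341082276bf3a27251f86c6a11d0c18e952767f0b153d27b7f0347045b5bf1827f01886f0928403002c1d64ba40f335e36f06ad7ae9717877e85839d6effbd7dc664d325d1c5371682cadd0cccfdffbbe1626e33b8d04b4331bbf73c790d94f79d471c4ab3ed3d82a5fec507705e4ae6e5e73a9b91f3aa4db287ae44f332e923a73cb91648e428e975a3781eb01b49d8674fa1508419e0eaa4038b352d9bad30f4485b71a8ef64452a0dd40dc8cb8f9a2d4c514f1b229dcaa222ac268e9666e4a866769145f5f5880a9d0acd3b9e8c682f4f810320abeb94034e70f21608c061ab1c1caef1ebdcefbc72134ecf06ed82bfb7d8eb1a41901d65f5c8cab2accbc32eab1fbe8284f2b44b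
def bkZV : ℕ := 0x8b2f3400b4fdbf8e6d7db994b8309de73a1d65ace4e9935684e192cb7ec47e5744714b8febe2959af373615b58b905833d8f6b3aa97d1e2beee3975f31e2a4318beecf6692192c1c4c7a67cd252cafed046dd6baf336041aad39275d78fbf49b6a4e3d3a4d4d061c5cc51b3bfc5e2fb541f1bf63e43f6555892bc58b066051f26019bda2be5d7f25e70afb4b8ed092ce175397f2461997b65e1f5101d65f62bca82b2227fb3e7e7843efe370ffb27ef100830cfad3aaff47d9a0a75fdc65f6646627b04d0e92d25257259502eea8dd010cb8ab127962e612eb942696675f69a9cadf4c82b931ed8a8278b45f72b917d2151e9dda23e847201084dc61d1ec568e1af5b2fe1b58fa417d9c8b1530fe05f44ec64a8ca67513ab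
def bkZW : ℕ := 0xc077dc4769bf5de345d8cfadbf26bf9a10081f2b3dbed36fc19eebeea6c2f8ff815e4d859ef77639a4446a7c430afac7fad1e0b7a5c76ba5b5924f626e68900d5614119fc2f4c85eeb29d225203d6d3c8fac7e80cd5ea6d2bab5eacb3cd30806497ea2764f77527d6831f07d0be1b2a534053e4cc9362a7929038c688617205643ac1b1bb350e8ec57c69e6d418aebfdeb1b827037fae1aebb53a9665696c14b7c2a27e72467655dec33c49392ebdd523266acd6294308e33c189920ada2a9120f3e26c2268e39d3e2ce66f909ebb2ee7d7c199df6b0b4cdbdf0ece55be68808a2557ef34cd01c1637eb41549f168c06783d019fc96306734596dab69faa908dc1bc2df9fa7bf0cabc4262d6a20c868998caabfa27d264b8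
def bkZp : ℕ := 0x1aa271986a8bc74b5792a9320af6042f4fcdee30b5fb1e7405f0d007a12c8e423e93c8903f282ff29c0c34c1edcf15362a29b53a5c1869168a2799d2b8ee819c67002d1e1c2d455009ff3fd4480b2f0b277f2b2e8f2a14051a3b2b705c2c1178e10e8e0438aa96909454c0a486b1c9c26fb423e305894436dac138f7d37362fcd4c573d64831f7eb40def
def bkZq : ℕ := 0x21ba781c4a01597c500dd771f00a6a758dd45ab48b2afb3fb17068f89bb575da90f6871109cc8099a57c6dd2a702be008d6ffefcf001259a45cb5f1716e6169e9851c872083badbabc56f47c21e0c8e0f2c931289c63e73776fe0b1d30eebba068f51294b26a555cabbc1361d48ef8d26a2cbd5051915b4d80c836388f5137503691f39f866027cfeb55d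
def bkZr : ℕ := 0xfc9bf8a4731319f67f26d1fd7c6657ce017c9c7c9c0ef1e3747057f5a869efc27996a55bbf8fb0739832807f97c867ac1227cc2b524e79ec72278ad9388b7710ff362c3342b7afddecbce2abe0b7e6a162bfa40e4b6a2869c24fcd6f2d8471117d45a6f3835e7844d076fce34729af5359079d7bb68a4fa0f2588835c6ddb5d2b9c4280f5ec06132dbe5

noncomputable def bkLo (U : ℕ) : ℕ := bkH bkP (bkP - (U + 1)) 2240 0
noncomputable def bkHi (U : ℕ) : ℕ := bkH bkP (bkP - U) 2240 0

lemma bkchk_U : bkZU * bkZU + bkZU * bkP < bkP * bkP ∧ bkP * bkP < (bkZU + 1) * (bkZU + 1) + (bkZU + 1) * bkP ∧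
    bkP ≤ 2 * bkZU ∧ bkZU + 1 ≤ bkP := by decide +kernel
lemma bkchk_V : bkZV * bkZV * bkZV + bkZV * bkZV * bkP + bkZV * bkP * bkP < bkP * bkP * bkP ∧
    bkP * bkP * bkP < (bkZV + 1) * (bkZV + 1) * (bkZV + 1) + (bkZV + 1) * (bkZV + 1) * bkP + (bkZV + 1) * bkP * bkP ∧
    bkP ≤ 2 * bkZV ∧ bkZV + 1 ≤ bkP := by decide +kernel
lemma bkchk_W : bkZW * (2 * (bkZU + 1) + bkP) * (4 * bkZV * bkP) ≤ 5 * bkP * bkP * bkZV * bkZV +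
      bkZW * (2 * (bkZU + 1) + bkP) * (bkP * bkP + bkZV * bkZV) ∧
    5 * bkP * bkP * (bkZV + 1) * (bkZV + 1) + (bkZW + 16) * (2 * bkZU + bkP) * (bkP * bkP + (bkZV + 1) * (bkZV + 1)) ≤
      (bkZW + 16) * (2 * bkZU + bkP) * (4 * (bkZV + 1) * bkP) ∧
    bkP ≤ 2 * bkZW ∧ bkZW + 16 ≤ bkP := by decide +kernel
lemma bkchk_1 : 2 ^ 1105 * (bkZq * (bkHi bkZU + 4) + bkZp) ≤ bkP + 2 ^ 1105 * (bkZp * bkLo bkZV) := by decide +kernel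
lemma bkchk_2 : 2 ^ 1105 * (bkZp * (bkHi bkZV + 4) + bkZq) ≤ bkP + 2 ^ 1105 * (bkZq * bkLo bkZU) := by decide +kernel
lemma bkchk_3 : 8 * (bkZr * (bkHi bkZV + 4)) + bkP + 8 * bkZq ≤ 8 * (bkZq * bkLo (bkZW + 15)) := by decide +kernel
lemma bkchk_4 : 8 * (bkZq * (bkHi bkZW + 4)) + bkP + 8 * (bkZr + 1) ≤ 8 * ((bkZr + 1) * bkLo bkZV) := by decide +kernel
lemma bkchk_5 : 192 * bkZq * 5 ^ 1320 < 9 ^ 1320 := by decide +kernel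

open Finset
set_option exponentiation.threshold 4000

lemma bkP_pos : 0 < bkP := by decide +kernel

/-- enclosure of minus log from an enclosure of the argument -/
lemma bk_encl (U : ℕ) (c : ℕ) (x : ℝ) (h1 : (U : ℝ) / bkP ≤ x) (h2 : x ≤ ((U + (c + 1) : ℕ) : ℝ) / bkP)
    (hU : bkP ≤ 2 * U) (hU2 : U + (c + 1) ≤ bkP) :
    (bkLo (U + c) : ℝ) - 1 ≤ bkP * (- Real.log x) ∧ bkP * (- Real.log x) ≤ bkHi U + 4 := by
  have hP' : (0:ℝ) < bkP := by exact_mod_cast bkP_pos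
  have hpos : 0 < U := by have := bkP_pos; omega
  have hU' : (0:ℝ) < U := by exact_mod_cast hpos
  have hx : 0 < x := lt_of_lt_of_le (by positivity) h1
  have a := (bkH_log (U + (c + 1)) bkP 2240 bkP_pos (by omega) hU2 (le_of_eq rfl)).1
  have b := (bkH_log U bkP 2240 bkP_pos hU (by omega) (le_of_eq rfl)).2
  have l1 := Real.log_le_log (by positivity) h1
  have l2 := Real.log_le_log hx h2
  constructor
  · change (bkH bkP (bkP - (U + (c + 1))) 2240 0 : ℝ) - 1 ≤ _
    refine a.trans ?_
    gcongr
  · change _ ≤ (bkH bkP (bkP - U) 2240 0 : ℝ) + 4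
    refine le_trans ?_ b
    gcongr

lemma bk_encU : (bkZU : ℝ) / bkP ≤ bkp - 1 ∧ bkp - 1 ≤ ((bkZU + (0 + 1) : ℕ) : ℝ) / bkP := by
  obtain ⟨c1, c2, c3, c4⟩ := bkchk_U
  have hP' : (0:ℝ) < bkP := by exact_mod_cast bkP_pos
  have c1' : (bkZU:ℝ) * bkZU + bkZU * bkP < bkP * bkP := by exact_mod_cast c1
  have c2' : (bkP:ℝ) * bkP < (bkZU + 1) * (bkZU + 1) + (bkZU + 1) * bkP := by exact_mod_cast c2
  have hu : (bkp - 1) * (bkp - 1) + (bkp - 1) = 1 := by linear_combination bkp_eq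
  have hu0 : 0 < bkp - 1 := by linarith [bkp_lo]
  have hU0 : (0:ℝ) ≤ bkZU := by positivity
  constructor
  · rw [div_le_iff₀ hP']
    by_contra hc
    push Not at hc
    have : (bkp - 1) * bkP * ((bkp - 1) * bkP) ≤ bkZU * bkZU := by gcongr
    nlinarith
  · rw [le_div_iff₀ hP']
    push_cast
    by_contra hc
    push Not at hc
    have h1 : ((bkZU:ℝ) + 1) ≤ (bkp - 1) * bkP := by linarith
    have : ((bkZU:ℝ) + 1) * (bkZU + 1) ≤ (bkp - 1) * bkP * ((bkp - 1) * bkP) := by gcongr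
    nlinarith

lemma bk_enc1 : (bkLo bkZU : ℝ) - 1 ≤ bkP * (- bkl1) ∧ bkP * (- bkl1) ≤ bkHi bkZU + 4 := by
  obtain ⟨c1, c2, c3, c4⟩ := bkchk_U
  exact bk_encl bkZU 0 (bkp - 1) bk_encU.1 bk_encU.2 c3 c4

lemma bkt_eq : (1 / bkb) ^ 3 + (1 / bkb) ^ 2 + 1 / bkb = 1 := by
  have hb0 : bkb ≠ 0 := by linarith [bkb_lo]
  field_simp
  linear_combination - bkb_eq

lemma bk_encV : (bkZV : ℝ) / bkP ≤ 1 / bkb ∧ 1 / bkb ≤ ((bkZV + (0 + 1) : ℕ) : ℝ) / bkP := by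
  obtain ⟨c1, c2, c3, c4⟩ := bkchk_V
  have hP' : (0:ℝ) < bkP := by exact_mod_cast bkP_pos
  have c1' : (bkZV:ℝ) * bkZV * bkZV + bkZV * bkZV * bkP + bkZV * bkP * bkP < bkP * bkP * bkP := by exact_mod_cast c1
  have c2' : (bkP:ℝ) * bkP * bkP < (bkZV + 1) * (bkZV + 1) * (bkZV + 1) + (bkZV + 1) * (bkZV + 1) * bkP + (bkZV + 1) * bkP * bkP := by exact_mod_cast c2
  have hu := bkt_eq
  have hu0 : 0 < 1 / bkb := by have := bkb_lo; positivity
  set t := 1 / bkb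
  have hV0 : (0:ℝ) ≤ bkZV := by positivity
  have e : (t * bkP) * (t * bkP) * (t * bkP) + (t * bkP) * (t * bkP) * bkP + (t * bkP) * bkP * bkP = bkP * bkP * bkP := by
    linear_combination (bkP:ℝ) ^ 3 * hu
  have ht0 : 0 ≤ t * bkP := by positivity
  constructor
  · rw [div_le_iff₀ hP']
    by_contra hc
    push Not at hc
    have : (t * bkP) * (t * bkP) * (t * bkP) + (t * bkP) * (t * bkP) * bkP + (t * bkP) * bkP * bkP ≤
      bkZV * bkZV * bkZV + bkZV * bkZV * bkP + bkZV * bkP * bkP := by gcongr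
    linarith
  · rw [le_div_iff₀ hP']
    push_cast
    by_contra hc
    push Not at hc
    have h1 : ((bkZV:ℝ) + 1) ≤ t * bkP := by linarith
    have : ((bkZV:ℝ) + 1) * (bkZV + 1) * (bkZV + 1) + (bkZV + 1) * (bkZV + 1) * bkP + (bkZV + 1) * bkP * bkP ≤
      (t * bkP) * (t * bkP) * (t * bkP) + (t * bkP) * (t * bkP) * bkP + (t * bkP) * bkP * bkP := by gcongr
    linarith

lemma bk_enc2 : (bkLo bkZV : ℝ) - 1 ≤ bkP * bkl2 ∧ bkP * bkl2 ≤ bkHi bkZV + 4 := by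
  obtain ⟨c1, c2, c3, c4⟩ := bkchk_V
  have h := bk_encl bkZV 0 (1 / bkb) bk_encV.1 bk_encV.2 c3 c4
  have e : - Real.log (1 / bkb) = bkl2 := by rw [one_div, Real.log_inv, neg_neg]; rfl
  rwa [e] at h

lemma bk_wmono {x y : ℝ} (h : x ≤ y) (h4 : x + y ≤ 4) : 4 * x - x ^ 2 - 1 ≤ 4 * y - y ^ 2 - 1 := by
  nlinarith [mul_nonneg (sub_nonneg.2 h) (sub_nonneg.2 h4)]

lemma bk_enc3 : (bkLo (bkZW + 15) : ℝ) - 1 ≤ bkP * bkl3 ∧ bkP * bkl3 ≤ bkHi bkZW + 4 := by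
  obtain ⟨c1, c2, c3, c4⟩ := bkchk_W
  have hP' : (0:ℝ) < bkP := by exact_mod_cast bkP_pos
  have c1' : (bkZW:ℝ) * (2 * (bkZU + 1) + bkP) * (4 * bkZV * bkP) ≤ 5 * bkP * bkP * bkZV * bkZV +
      bkZW * (2 * (bkZU + 1) + bkP) * (bkP * bkP + bkZV * bkZV) := by exact_mod_cast c1
  have c2' : (5:ℝ) * bkP * bkP * (bkZV + 1) * (bkZV + 1) + (bkZW + 16) * (2 * bkZU + bkP) * (bkP * bkP + (bkZV + 1) * (bkZV + 1)) ≤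
      (bkZW + 16) * (2 * bkZU + bkP) * (4 * (bkZV + 1) * bkP) := by exact_mod_cast c2
  have hV2 : (bkP:ℝ) ≤ 2 * bkZV := by exact_mod_cast bkchk_V.2.2.1
  have hV0 : (0:ℝ) < bkZV := by linarith
  have hW0 : (0:ℝ) ≤ bkZW := by positivity
  have hU0 : (0:ℝ) ≤ bkZU := by positivity
  obtain ⟨u1, u2⟩ := bk_encU
  obtain ⟨v1, v2⟩ := bk_encV
  have hb0 : 0 < bkb := by linarith [bkb_lo]
  have hb2 := bkb_hi
  have hw0 : 0 < 4 * bkb - bkb ^ 2 - 1 := by nlinarith [bkb_lo]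
  have hp0 := bkp_lo
  have w1 : bkb ≤ bkP / bkZV := by
    rw [div_le_div_iff₀ hP' hb0] at v1
    rw [le_div_iff₀ hV0]; linarith
  have w2 : (bkP:ℝ) / (bkZV + 1) ≤ bkb := by
    rw [div_le_div_iff₀ hb0 hP'] at v2
    push_cast at v2
    rw [div_le_iff₀ (by linarith)]; linarith
  have w3 : (bkP:ℝ) / bkZV ≤ 2 := by rw [div_le_iff₀ hV0]; linarith
  have m1 := bk_wmono w1 (by linarith)
  have m2 := bk_wmono w2 (by linarith)
  have ha := bka3_lo
  have q1 : (2 * bkp - 1) ≤ (2 * (bkZU + 1) + bkP) / bkP := by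
    rw [le_div_iff₀ hP'] at u2 ⊢
    push_cast at u2; linarith
  have q2 : (2 * bkZU + bkP) / bkP ≤ (2 * bkp - 1) := by
    rw [div_le_iff₀ hP'] at u1 ⊢
    linarith
  have h1 : (bkZW : ℝ) / bkP ≤ 1 / bka3 := by
    rw [div_le_div_iff₀ hP' (by linarith)]
    unfold bka3
    have : (2 * bkp - 1) * (4 * bkb - bkb ^ 2 - 1) ≤ (2 * (bkZU + 1) + bkP) / bkP * (4 * (bkP / bkZV) - (bkP / bkZV) ^ 2 - 1) :=
      mul_le_mul q1 m1 hw0.le (by positivity)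
    have h5 : (bkZW:ℝ) * ((2 * (bkZU + 1) + bkP) / bkP * (4 * (bkP / bkZV) - (bkP / bkZV) ^ 2 - 1)) ≤ 5 * bkP := by
      have e : (bkZW:ℝ) * ((2 * (bkZU + 1) + bkP) / bkP * (4 * (bkP / bkZV) - (bkP / bkZV) ^ 2 - 1)) =
        (bkZW * (2 * (bkZU + 1) + bkP) * (4 * bkZV * bkP) - bkZW * (2 * (bkZU + 1) + bkP) * (bkP * bkP + bkZV * bkZV)) / (bkP * bkZV * bkZV) := by
        field_simp; ring
      rw [e, div_le_iff₀ (by positivity)]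
      linarith
    have := mul_le_mul_of_nonneg_left this hW0
    linarith
  have h2 : 1 / bka3 ≤ ((bkZW + (15 + 1) : ℕ) : ℝ) / bkP := by
    rw [div_le_div_iff₀ (by linarith) hP']
    unfold bka3
    push_cast
    have hV1 : (0:ℝ) < bkZV + 1 := by linarith
    have : (2 * bkZU + bkP) / bkP * (4 * (bkP / (bkZV + 1)) - (bkP / (bkZV + 1)) ^ 2 - 1) ≤ (2 * bkp - 1) * (4 * bkb - bkb ^ 2 - 1) :=
      (mul_le_mul_of_nonneg_left m2 (by positivity)).trans (mul_le_mul_of_nonneg_right q2 hw0.le)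
    have h5 : (5:ℝ) * bkP ≤ (bkZW + 16) * ((2 * bkZU + bkP) / bkP * (4 * (bkP / (bkZV + 1)) - (bkP / (bkZV + 1)) ^ 2 - 1)) := by
      have e : ((bkZW:ℝ) + 16) * ((2 * bkZU + bkP) / bkP * (4 * (bkP / (bkZV + 1)) - (bkP / (bkZV + 1)) ^ 2 - 1)) =
        ((bkZW + 16) * (2 * bkZU + bkP) * (4 * (bkZV + 1) * bkP) - (bkZW + 16) * (2 * bkZU + bkP) * (bkP * bkP + (bkZV + 1) * (bkZV + 1))) / (bkP * (bkZV + 1) * (bkZV + 1)) := by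
        field_simp; ring
      rw [e, le_div_iff₀ (by positivity)]
      linarith
    have := mul_le_mul_of_nonneg_left this (by linarith : (0:ℝ) ≤ bkZW + 16)
    linarith
  have h := bk_encl bkZW 15 (1 / bka3) h1 h2 c3 c4
  have e : - Real.log (1 / bka3) = bkl3 := by rw [one_div, Real.log_inv, neg_neg]; rfl
  rwa [e] at h

set_option maxHeartbeats 1600000 in
lemma bk_reduce (n m : ℕ) (h : (Nat.fib n : ℤ) - trib m = 0) : m < 1320 := by
  by_contra hm
  push Not at hm
  have hb := bk_bound n m h
  obtain ⟨hL, hn⟩ := bk_Lambda n m (by omega) h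
  have hn2 : n ≤ 2 ^ 1101 := by
    rw [pow_succ]; omega
  have hn' : (n:ℝ) ≤ 2 ^ 1101 := by exact_mod_cast hn2
  have hP' : (0:ℝ) < bkP := by exact_mod_cast bkP_pos
  obtain ⟨a1, b1⟩ := bk_enc1
  obtain ⟨a2, b2⟩ := bk_enc2
  obtain ⟨a3, b3⟩ := bk_enc3
  have k1 : (2:ℝ) ^ 1105 * (bkZq * (bkHi bkZU + 4) + bkZp) ≤ bkP + 2 ^ 1105 * (bkZp * bkLo bkZV) := by exact_mod_cast bkchk_1
  have k2 : (2:ℝ) ^ 1105 * (bkZp * (bkHi bkZV + 4) + bkZq) ≤ bkP + 2 ^ 1105 * (bkZq * bkLo bkZU) := by exact_mod_cast bkchk_2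
  have k3 : (8:ℝ) * (bkZr * (bkHi bkZV + 4)) + bkP + 8 * bkZq ≤ 8 * (bkZq * bkLo (bkZW + 15)) := by exact_mod_cast bkchk_3
  have k4 : (8:ℝ) * (bkZq * (bkHi bkZW + 4)) + bkP + 8 * (bkZr + 1) ≤ 8 * ((bkZr + 1) * bkLo bkZV) := by exact_mod_cast bkchk_4
  have k5 : (192:ℝ) * bkZq * 5 ^ 1320 < 9 ^ 1320 := by exact_mod_cast bkchk_5
  generalize (bkHi bkZU : ℝ) = H1 at *
  generalize (bkHi bkZV : ℝ) = H2 at *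
  generalize (bkHi bkZW : ℝ) = H3 at *
  generalize (bkLo bkZU : ℝ) = L1 at *
  generalize (bkLo bkZV : ℝ) = L2 at *
  generalize (bkLo (bkZW + 15) : ℝ) = L3 at *
  generalize (bkP : ℝ) = P at *
  generalize bkZq = q at *
  generalize bkZp = p at *
  generalize bkZr = r at *
  have hq0 : (0:ℝ) ≤ q := by positivity
  have hp0 : (0:ℝ) ≤ p := by positivity
  have hr0 : (0:ℝ) ≤ r := by positivity
  have hT : (0:ℝ) < 2 ^ 1101 := by positivity
  have hTT : (2:ℝ) ^ 1105 = 16 * 2 ^ 1101 := by norm_num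
  rw [hTT] at k1 k2
  generalize (2:ℝ) ^ 1101 = T at *
  -- small form
  have s1 : 16 * T * (q * (-bkl1) - p * bkl2) ≤ 1 := by
    have x1 : P * (q * (-bkl1)) ≤ q * (H1 + 4) := by linarith [mul_le_mul_of_nonneg_left b1 hq0]
    have x2 : p * (L2 - 1) ≤ P * (p * bkl2) := by linarith [mul_le_mul_of_nonneg_left a2 hp0]
    have : 16 * T * (P * (q * (-bkl1) - p * bkl2)) ≤ 16 * T * (q * (H1 + 4) - p * (L2 - 1)) :=
      mul_le_mul_of_nonneg_left (by linarith) (by positivity)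
    have : P * (16 * T * (q * (-bkl1) - p * bkl2)) ≤ P * 1 := by linarith
    exact le_of_mul_le_mul_left this hP'
  have s2 : 16 * T * (p * bkl2 - q * (-bkl1)) ≤ 1 := by
    have x1 : P * (p * bkl2) ≤ p * (H2 + 4) := by linarith [mul_le_mul_of_nonneg_left b2 hp0]
    have x2 : q * (L1 - 1) ≤ P * (q * (-bkl1)) := by linarith [mul_le_mul_of_nonneg_left a1 hq0]
    have : 16 * T * (P * (p * bkl2 - q * (-bkl1))) ≤ 16 * T * (p * (H2 + 4) - q * (L1 - 1)) :=
      mul_le_mul_of_nonneg_left (by linarith) (by positivity)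
    have : P * (16 * T * (p * bkl2 - q * (-bkl1))) ≤ P * 1 := by linarith
    exact le_of_mul_le_mul_left this hP'
  have s3 : r * bkl2 + 1 / 8 ≤ q * bkl3 := by
    have x1 : P * (r * bkl2) ≤ r * (H2 + 4) := by linarith [mul_le_mul_of_nonneg_left b2 hr0]
    have x2 : q * (L3 - 1) ≤ P * (q * bkl3) := by linarith [mul_le_mul_of_nonneg_left a3 hq0]
    have : P * (r * bkl2 + 1 / 8) ≤ P * (q * bkl3) := by linarith
    exact le_of_mul_le_mul_left this hP'
  have s4 : q * bkl3 + 1 / 8 ≤ (r + 1) * bkl2 := by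
    have x1 : P * (q * bkl3) ≤ q * (H3 + 4) := by linarith [mul_le_mul_of_nonneg_left b3 hq0]
    have x2 : (r + 1) * (L2 - 1) ≤ P * ((r + 1) * bkl2) := by linarith [mul_le_mul_of_nonneg_left a2 (by linarith : (0:ℝ) ≤ r + 1)]
    have : P * (q * bkl3 + 1 / 8) ≤ P * ((r + 1) * bkl2) := by linarith
    exact le_of_mul_le_mul_left this hP'
  have hl2 : 0 ≤ bkl2 := Real.log_nonneg (by linarith [bkb_lo])
  set Λ := bkl3 - (n * bkl1 + m * bkl2) with hΛ
  set D := q * (-bkl1) - p * bkl2 with hD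
  have hDn : |n * D| ≤ 1 / 16 := by
    have d1 : |D| * (16 * T) ≤ 1 := by
      rw [abs_eq_max_neg]
      rcases max_choice D (-D) with hh | hh <;> rw [hh] <;> linarith
    rw [abs_mul, Nat.abs_cast]
    have : n * |D| ≤ T * |D| := mul_le_mul_of_nonneg_right hn' (abs_nonneg _)
    linarith
  have hid : q * Λ = q * bkl3 + n * D + ((n * p : ℤ) - m * q : ℤ) * bkl2 := by
    rw [hΛ, hD]; push_cast; ring
  have hlow : 1 / 8 ≤ |q * bkl3 + ((n * p : ℤ) - m * q : ℤ) * bkl2| := by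
    generalize ((n * p : ℤ) - m * q : ℤ) = N
    rcases le_or_gt (-(r:ℤ)) N with hN | hN
    · have : (-(r:ℝ)) ≤ N := by exact_mod_cast hN
      refine le_trans ?_ (le_abs_self _)
      have := mul_le_mul_of_nonneg_right this hl2
      linarith
    · have : (N:ℝ) ≤ -(r:ℝ) - 1 := by exact_mod_cast (by omega : N ≤ -(r:ℤ) - 1)
      refine le_trans ?_ (neg_le_abs _)
      have := mul_le_mul_of_nonneg_right this hl2
      linarith
  have hup : 1 / 16 ≤ q * |Λ| := by
    have : q * |Λ| = |q * Λ| := by rw [abs_mul, Nat.abs_cast]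
    rw [this, hid]
    have e : q * bkl3 + ((n * p : ℤ) - m * q : ℤ) * bkl2 = (q * bkl3 + n * D + ((n * p : ℤ) - m * q : ℤ) * bkl2) - n * D := by ring
    rw [e] at hlow
    have := abs_sub (q * bkl3 + n * D + ((n * p : ℤ) - m * q : ℤ) * bkl2) (n * D)
    linarith
  have h1b : 1 / bkb ≤ 5 / 9 := by
    rw [div_le_div_iff₀ (by linarith [bkb_lo]) (by norm_num)]; linarith [bkb_lo]
  have hbm : (1 / bkb) ^ m ≤ (5 / 9) ^ 1320 := by
    have hb0 : 0 < bkb := by linarith [bkb_lo]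
    calc (1 / bkb) ^ m ≤ (5 / 9) ^ m := by gcongr
      _ ≤ (5 / 9) ^ 1320 := pow_le_pow_of_le_one (by norm_num) (by norm_num) hm
  have hfin : 1 / 16 ≤ q * (12 * (5 / 9 : ℝ) ^ 1320) :=
    hup.trans (mul_le_mul_of_nonneg_left (hL.trans (by linarith)) hq0)
  rw [div_pow] at hfin
  have h9 : (0:ℝ) < 9 ^ 1320 := by positivity
  generalize (9:ℝ) ^ 1320 = A at *
  generalize (5:ℝ) ^ 1320 = B at *
  have : q * (12 * (B / A)) = (12 * q * B) / A := by ring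
  rw [this, le_div_iff₀ h9] at hfin
  linarith

open Finset

noncomputable def bkM (k : ℕ) : ℕ → ℕ → ℕ → ℕ → ℕ → Bool :=
  Nat.rec (fun _ _ _ _ _ => true)
    (fun _ ih a b x y z =>
      bif Nat.blt a x then bkFc (a + b) (fun c => ih b c x y z)
      else bif Nat.blt x a then bkFc (x + y + z) (fun w => ih a b y z w)
      else false) k

lemma bkM_succ (k a b x y z : ℕ) : bkM (k + 1) a b x y z =
    bif Nat.blt a x then bkM k b (a + b) x y z
      else bif Nat.blt x a then bkM k a b y z (x + y + z) else false := by
  rw [← bkFc_eq (a + b) (fun c => bkM k b c x y z), ← bkFc_eq (x + y + z) (fun w => bkM k a b y z w)]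
  rfl

lemma bkM_true : bkM 4000 21 34 24 44 81 = true := by decide +kernel

lemma trib_nonneg (m : ℕ) : 0 ≤ trib m := by
  induction m using Nat.strong_induction_on with
  | _ m ih =>
    match m with
    | 0 => simp [trib]
    | 1 => simp [trib]
    | 2 => simp [trib]
    | k + 3 =>
      simp only [trib]
      have := ih k (by omega)
      have := ih (k + 1) (by omega)
      have := ih (k + 2) (by omega)
      omega

lemma trib_mono : Monotone trib := by
  apply monotone_nat_of_le_succ
  intro m
  match m with
  | 0 => simp [trib]
  | 1 => simp [trib]
  | k + 2 =>
    have := trib_nonneg k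
    have := trib_nonneg (k + 1)
    simp only [trib]; omega

lemma bkM_spec (f k j : ℕ) (a b x y z : ℕ) (ha : a = Nat.fib k) (hb : b = Nat.fib (k + 1))
    (hx : (x : ℤ) = trib j) (hy : (y : ℤ) = trib (j + 1)) (hz : (z : ℤ) = trib (j + 2))
    (h : bkM f a b x y z = true) (n m : ℕ) (hn : k ≤ n) (hm : j ≤ m) (hf : n + m < k + j + f)
    (he : (Nat.fib n : ℤ) = trib m) : False := by
  induction f generalizing k j a b x y z with
  | zero => omega
  | succ f ih =>
    rw [bkM_succ] at h
    have h1 : (Nat.fib k : ℤ) ≤ Nat.fib n := by exact_mod_cast Nat.fib_mono hn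
    have h2 := trib_mono hm
    by_cases h3 : a < x
    · rw [show Nat.blt a x = true from Nat.ble_eq.to_iff.2 h3, cond_true] at h
      have hk : k ≠ n := by
        rintro rfl
        have : (a : ℤ) < x := by exact_mod_cast h3
        rw [ha, hx] at this
        omega
      exact ih (k + 1) j b (a + b) x y z hb (by rw [ha, hb, Nat.fib_add_two]) hx hy hz h (by omega) hm (by omega)
    · have : Nat.blt a x = false := by
        rw [Bool.eq_false_iff]; intro hc; exact h3 (Nat.ble_eq.to_iff.1 hc)
      rw [this, cond_false] at h
      by_cases h4 : x < a
      · rw [show Nat.blt x a = true from Nat.ble_eq.to_iff.2 h4, cond_true] at h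
        have hk : j ≠ m := by
          rintro rfl
          have : (x : ℤ) < a := by exact_mod_cast h4
          rw [ha, hx] at this
          omega
        exact ih k (j + 1) a b y z (x + y + z) ha hb hy hz (by
          push_cast; rw [hx, hy, hz]; simp only [trib]; ring) h hn (by omega) (by omega)
      · have : Nat.blt x a = false := by
          rw [Bool.eq_false_iff]; intro hc; exact h4 (Nat.ble_eq.to_iff.1 hc)
        rw [this, cond_false] at h
        cases h

lemma bk_final (n m : ℕ) (hn : 2 ≤ n) (hm : 2 ≤ m) (h : (Nat.fib n : ℤ) - trib m = 0) :
    (n = 2 ∧ m = 2) ∨ (n = 3 ∧ m = 3) ∨ (n = 7 ∧ m = 6) := by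
  have hb := bk_reduce n m h
  have he : (Nat.fib n : ℤ) = trib m := by linarith
  by_cases h8 : 8 ≤ n ∧ 7 ≤ m
  · exfalso
    refine bkM_spec 4000 8 7 21 34 24 44 81 (by decide) (by decide) (by decide) (by decide) (by decide)
      bkM_true n m h8.1 h8.2 ?_ he
    by_cases h20 : 20 ≤ m
    · have := (bk_Lambda n m h20 h).2
      omega
    · have h1 := trib_mono (by omega : m ≤ 20)
      have h2 : trib 20 = 66012 := by decide +kernel
      by_contra hc
      have h3 : Nat.fib 25 ≤ Nat.fib n := Nat.fib_mono (by omega)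
      have h4 : Nat.fib 25 = 75025 := by decide +kernel
      omega
  · have hsmall : n ≤ 7 ∧ m ≤ 6 := by
      by_cases hc : n ≤ 7
      · refine ⟨hc, ?_⟩
        by_contra hd
        have h1 := trib_mono (by omega : 7 ≤ m)
        have h2 : trib 7 = 24 := by decide
        have h3 : Nat.fib n ≤ Nat.fib 7 := Nat.fib_mono hc
        have h4 : Nat.fib 7 = 13 := by decide
        omega
      · exfalso
        have h1 := trib_mono (by omega : m ≤ 6)
        have h2 : trib 6 = 13 := by decide
        have h3 : Nat.fib 8 ≤ Nat.fib n := Nat.fib_mono (by omega)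
        have h4 : Nat.fib 8 = 21 := by decide
        omega
    obtain ⟨h7, h6⟩ := hsmall
    interval_cases n <;> interval_cases m <;> revert he <;> decide

theorem fib_sub_trib_eq_zero :
    {p : ℕ × ℕ | 2 ≤ p.1 ∧ 2 ≤ p.2 ∧ (Nat.fib p.1 : ℤ) - trib p.2 = 0} =
      ({(2, 2), (3, 3), (7, 6)} : Set (ℕ × ℕ)) := by
  ext ⟨n, m⟩
  simp only [Set.mem_ofPred_eq, Set.mem_insert_iff, Set.mem_singleton_iff, Prod.mk.injEq]
  constructor
  · rintro ⟨hn, hm, h⟩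
    exact bk_final n m hn hm h
  · rintro (⟨rfl, rfl⟩ | ⟨rfl, rfl⟩ | ⟨rfl, rfl⟩) <;> decide
end

section
/- Let n > n₁ ≥ 2 and m > m₁ ≥ 2 be integers with F_n - F_{n₁} = T_m - T_{m₁}. Then α^{n-4} < α_T^{m-1} and α^{n-1} > 2.83·α_T^{m-5}, where α = (1+√5)/2 and α_T is the unique real root of x³ - x² - x - 1. -/
theorem aux_upper (b : ℝ) (hb : b ^ 3 - b ^ 2 - b - 1 = 0) (h1 : 1.83 < b) :
    ∀ k : ℕ, (trib (k + 1) : ℝ) ≤ b ^ k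
  | 0 => by simp [trib]
  | 1 => by simp [trib]; linarith
  | 2 => by simp [trib]; nlinarith
  | k + 3 => by
    have i0 := aux_upper b hb h1 k
    have i1 := aux_upper b hb h1 (k + 1)
    have i2 := aux_upper b hb h1 (k + 2)
    have e : trib (k + 3 + 1) = trib (k + 2 + 1) + trib (k + 1 + 1) + trib (k + 1) := rfl
    have e2 : b ^ (k + 3) = b ^ (k + 2) + b ^ (k + 1) + b ^ k := by
      have : b ^ 3 = b ^ 2 + b + 1 := by linarith
      rw [pow_add, this]; ring
    rw [e, e2]; push_cast; linarith

theorem aux_lower (b : ℝ) (hb : b ^ 3 - b ^ 2 - b - 1 = 0) (h1 : 1.83 < b) (h2 : b < 2) :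
    ∀ k : ℕ, b ^ k * (b + 1) ≤ b ^ 2 * ((trib (k + 3) : ℝ) - trib (k + 2))
  | 0 => by norm_num [trib]; nlinarith
  | 1 => by norm_num [trib]; nlinarith
  | 2 => by norm_num [trib]; nlinarith
  | k + 3 => by
    have i0 := aux_lower b hb h1 h2 k
    have i1 := aux_lower b hb h1 h2 (k + 1)
    have i2 := aux_lower b hb h1 h2 (k + 2)
    have e : trib (k + 3 + 3) = trib (k + 2 + 3) + trib (k + 1 + 3) + trib (k + 3) := rfl
    have e' : trib (k + 3 + 2) = trib (k + 2 + 2) + trib (k + 1 + 2) + trib (k + 2) := rfl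
    have e2 : b ^ (k + 3) = b ^ (k + 2) + b ^ (k + 1) + b ^ k := by
      have : b ^ 3 = b ^ 2 + b + 1 := by linarith
      rw [pow_add, this]; ring
    have d : (trib (k + 3 + 3) : ℝ) - trib (k + 3 + 2)
        = ((trib (k + 2 + 3) : ℝ) - trib (k + 2 + 2)) + ((trib (k + 1 + 3) : ℝ) - trib (k + 1 + 2))
          + ((trib (k + 3) : ℝ) - trib (k + 2)) := by
      have := congrArg (Int.cast : ℤ → ℝ) e
      have := congrArg (Int.cast : ℤ → ℝ) e'
      push_cast at *
      linarith
    rw [d, e2]; linarith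

theorem aux_fib_upper (a : ℝ) (ha : a ^ 2 = a + 1) (h1 : 1 < a) :
    ∀ k : ℕ, (Nat.fib (k + 1) : ℝ) ≤ a ^ k
  | 0 => by simp
  | 1 => by simp; linarith
  | k + 2 => by
    have i0 := aux_fib_upper a ha h1 k
    have i1 := aux_fib_upper a ha h1 (k + 1)
    have e2 : a ^ (k + 2) = a ^ (k + 1) + a ^ k := by rw [pow_add, ha]; ring
    have e : Nat.fib (k + 2 + 1) = Nat.fib (k + 1) + Nat.fib (k + 1 + 1) := Nat.fib_add_two
    rw [e, e2]; push_cast; linarith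

theorem aux_fib_lower (a : ℝ) (ha : a ^ 2 = a + 1) (h1 : 1 < a) :
    ∀ k : ℕ, a ^ k ≤ a * (Nat.fib (k + 1) : ℝ)
  | 0 => by simp; linarith
  | 1 => by simp
  | k + 2 => by
    have i0 := aux_fib_lower a ha h1 k
    have i1 := aux_fib_lower a ha h1 (k + 1)
    have e2 : a ^ (k + 2) = a ^ (k + 1) + a ^ k := by rw [pow_add, ha]; ring
    have e : Nat.fib (k + 2 + 1) = Nat.fib (k + 1) + Nat.fib (k + 1 + 1) := Nat.fib_add_two
    rw [e, e2]; push_cast; linarith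

theorem aux_trib_pos : ∀ k : ℕ, 0 < trib (k + 1)
  | 0 => by simp [trib]
  | 1 => by simp [trib]
  | 2 => by simp [trib]
  | k + 3 => by
    have i0 := aux_trib_pos k
    have i1 := aux_trib_pos (k + 1)
    have i2 := aux_trib_pos (k + 2)
    have e : trib (k + 3 + 1) = trib (k + 2 + 1) + trib (k + 1 + 1) + trib (k + 1) := rfl
    omega

theorem aux_trib_mono : Monotone (fun k => trib (k + 1)) := by
  apply monotone_nat_of_le_succ
  intro k
  match k with
  | 0 => simp [trib]
  | 1 => simp [trib]
  | k + 2 =>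
    have i0 := aux_trib_pos k
    have i1 := aux_trib_pos (k + 1)
    have e : trib (k + 2 + 1 + 1) = trib (k + 2 + 1) + trib (k + 1 + 1) + trib (k + 1) := rfl
    omega

/-- If `n > n₁ ≥ 2`, `m > m₁ ≥ 2` and `F n - F n₁ = T m - T m₁`, then
`α ^ (n - 4) < α_T ^ (m - 1)` and `α ^ (n - 1) > 2.83 · α_T ^ (m - 5)`. -/
theorem fib_trib_exponent_inequalities (α αT : ℝ)
    (hα : α = (1 + Real.sqrt 5) / 2)
    (hroot : αT ^ 3 - αT ^ 2 - αT - 1 = 0)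
    (huniq : ∀ x : ℝ, x ^ 3 - x ^ 2 - x - 1 = 0 → x = αT)
    (n m n₁ m₁ : ℕ) (hn₁ : 2 ≤ n₁) (hn : n₁ < n) (hm₁ : 2 ≤ m₁) (hm : m₁ < m)
    (h : (Nat.fib n : ℤ) - Nat.fib n₁ = trib m - trib m₁) :
    α ^ ((n : ℤ) - 4) < αT ^ ((m : ℤ) - 1) ∧
      2.83 * αT ^ ((m : ℤ) - 5) < α ^ ((n : ℤ) - 1) := by
  have hs : Real.sqrt 5 ^ 2 = 5 := Real.sq_sqrt (by norm_num)
  have ha : α ^ 2 = α + 1 := by rw [hα]; nlinarith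
  have ha1 : 1 < α := by
    have : 1 < Real.sqrt 5 := by
      rw [Real.lt_sqrt] <;> norm_num
    rw [hα]; linarith
  have h1 : 1.83 < αT := by
    by_contra hc
    push Not at hc
    nlinarith [mul_nonneg (sub_nonneg.2 hc) (sq_nonneg (αT + 0.415)), sq_nonneg (αT + 0.415)]
  have h2 : αT < 2 := by
    by_contra hc
    push Not at hc
    nlinarith [mul_nonneg (sub_nonneg.2 hc) (sq_nonneg αT)]
  obtain ⟨k, rfl⟩ : ∃ k, n = k + 3 := ⟨n - 3, by omega⟩
  obtain ⟨j, rfl⟩ : ∃ j, m = j + 3 := ⟨m - 3, by omega⟩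
  obtain ⟨i, rfl⟩ : ∃ i, m₁ = i + 1 := ⟨m₁ - 1, by omega⟩
  have f1 : Nat.fib n₁ ≤ Nat.fib (k + 2) := Nat.fib_mono (by omega)
  have f0 : 0 < Nat.fib n₁ := Nat.fib_pos.2 (by omega)
  have f2 : Nat.fib (k + 3) = Nat.fib (k + 1) + Nat.fib (k + 2) := Nat.fib_add_two
  have t0 := aux_trib_pos i
  have t1 : trib (i + 1) ≤ trib (j + 2) := aux_trib_mono (show i ≤ j + 1 by omega)
  have c1 : (Nat.fib (k + 1) : ℤ) < trib (j + 3) := by omega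
  have c2 : trib (j + 3) - trib (j + 2) < (Nat.fib (k + 3) : ℤ) := by omega
  have c1' : (Nat.fib (k + 1) : ℝ) < trib (j + 3) := by exact_mod_cast c1
  have c2' : (trib (j + 3) : ℝ) - trib (j + 2) < (Nat.fib (k + 3) : ℝ) := by exact_mod_cast c2
  have u1 := aux_upper αT hroot h1 (j + 2)
  have u2 := aux_lower αT hroot h1 h2 j
  have u3 := aux_fib_upper α ha ha1 (k + 2)
  have u4 := aux_fib_lower α ha ha1 k
  have pa : 0 < α := by linarith
  have pb : 0 < αT := by linarith
  constructor
  · have e1 : (((k + 3 : ℕ) : ℤ) - 4) = (k : ℤ) - 1 := by push_cast; ring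
    have e2 : (((j + 3 : ℕ) : ℤ) - 1) = ((j + 2 : ℕ) : ℤ) := by push_cast; ring
    rw [e1, e2, zpow_sub₀ pa.ne', zpow_natCast, zpow_natCast, zpow_one, div_lt_iff₀ pa]
    nlinarith
  · have e1 : (((k + 3 : ℕ) : ℤ) - 1) = ((k + 2 : ℕ) : ℤ) := by push_cast; ring
    have e2 : (((j + 3 : ℕ) : ℤ) - 5) = (j : ℤ) - (2 : ℕ) := by push_cast; ring
    rw [e1, e2, zpow_sub₀ pb.ne', zpow_natCast, zpow_natCast, zpow_natCast, ← mul_div_assoc,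
      div_lt_iff₀ (by positivity)]
    have p := pow_pos pb j
    have q := pow_pos pb 2
    have r : αT ^ 2 * ((trib (j + 3) : ℝ) - trib (j + 2)) < αT ^ 2 * α ^ (k + 2) :=
      mul_lt_mul_of_pos_left (lt_of_lt_of_le c2' u3) q
    nlinarith
end

section
/- Let n > n₁ ≥ 2 and m > m₁ ≥ 2 be integers with F_n - F_{n₁} = T_m - T_{m₁}. Then |(√5·c_α)^{-1}·α^n·α_T^{-m} - 1| < max{α^{n₁-n+5}, α_T^{m₁-m+2}}, where α = (1+√5)/2, α_T is the unique real root of x³ - x² - x - 1, and c_α = 1/(-α_T² + 4α_T - 1). -/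
theorem aux_err (a c : ℝ) (h1 : 1.839 < a) (h2 : a < 1.84) (hr : a ^ 3 - a ^ 2 - a - 1 = 0)
    (hc : c * (-a ^ 2 + 4 * a - 1) = 1) (hc1 : 0.336 < c) (hc2 : c < 0.337) (k : ℕ) :
    |(trib k : ℝ) - c * a ^ k| ≤ 3 / 4 := by
  have hrec : ∀ k : ℕ, ((trib (k+2) : ℝ) - c * a ^ (k+2)) =
      -(a - 1) * ((trib (k+1) : ℝ) - c * a ^ (k+1)) - (a^2 - a - 1) * ((trib k : ℝ) - c * a ^ k) := by
    intro k
    induction k with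
    | zero =>
      simp [trib]
      have : c * (3 * a^2 - 2 * a - 1) = a := by
        linear_combination a * hc + c * hr
      linear_combination -this
    | succ k ih =>
      have e : trib (k+1+2) = trib (k+2) + trib (k+1) + trib k := by
        show trib (k+3) = _
        rw [trib]
      rw [e]
      push_cast
      have e2 : k + 1 + 1 = k + 2 := rfl
      rw [e2]
      linear_combination a * ih + (-(trib k : ℝ)) * hr
  have hQ : ∀ k : ℕ, ((trib (k+1) : ℝ) - c * a ^ (k+1)) ^ 2
      + (a - 1) * ((trib (k+1) : ℝ) - c * a ^ (k+1)) * ((trib k : ℝ) - c * a ^ k)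
      + (a^2 - a - 1) * ((trib k : ℝ) - c * a ^ k) ^ 2 ≤ 0.2 := by
    intro k
    induction k with
    | zero =>
      simp [trib]
      have g1 : c * a < 0.621 := by nlinarith
      have g2 : 0.617 < c * a := by nlinarith
      have g3 : (1 - c * a)^2 ≤ 0.15 := by nlinarith
      have g4 : (a^2 - a - 1) * c^2 ≤ 0.55 * 0.12 := by
        apply mul_le_mul <;> nlinarith
      have g5 : 0 ≤ (a - 1) * (1 - c * a) * c := by
        apply mul_nonneg (mul_nonneg _ _) <;> linarith
      have h02 : (0.2 : ℝ) = 1 / 5 := by norm_num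
      norm_num at *
      nlinarith
    | succ k ih =>
      have e2 : k + 1 + 1 = k + 2 := rfl
      rw [e2, hrec k]
      generalize ((trib (k+1) : ℝ) - c * a ^ (k+1)) = u at *
      generalize ((trib k : ℝ) - c * a ^ k) = v at *
      have hb : a^2 - a - 1 < 0.55 := by nlinarith
      have hb0 : 0.5 < a^2 - a - 1 := by nlinarith
      generalize a^2 - a - 1 = b at *
      have : (-(a - 1) * u - b * v) ^ 2 + (a - 1) * (-(a - 1) * u - b * v) * u + b * u ^ 2
        = b * (u^2 + (a-1) * u * v + b * v^2) := by ring
      rw [this]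
      nlinarith
  have hq := hQ k
  generalize ((trib (k+1) : ℝ) - c * a ^ (k+1)) = u at *
  generalize ((trib k : ℝ) - c * a ^ k) = v at *
  have hb0 : 0.54 < a^2 - a - 1 := by nlinarith
  have hv : (a^2 - a - 1 - (a-1)^2/4) * v^2 ≤ 0.2 := by
    nlinarith [sq_nonneg (u + (a-1)/2 * v)]
  have hcf : 0.36 ≤ a^2 - a - 1 - (a-1)^2/4 := by nlinarith
  have : v^2 ≤ (3/4)^2 := by nlinarith [sq_nonneg v]
  exact abs_le_of_sq_le_sq this (by norm_num)

theorem aux_fin (g a w w1 q q1 d x : ℝ) (hg : 1.618 < g)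
    (h1 : 1.839 < a) (h2 : a < 1.84) (hx0 : 0 < x) (hxg : x * g ≤ 1) (hw : w1 = x * w)
    (hw0 : 0 < w) (hq1 : 0 < q1) (hqq : q1 * a ≤ q) (hd : |d| < 2.381 * q1)
    (he : w - w1 = q - q1 + d) :
    |w / q - 1| < max (x * g ^ 5) (q1 / q * a ^ 2) := by
  obtain ⟨hd1, hd2⟩ := abs_lt.1 hd
  have hq : 0 < q := by nlinarith
  have ha2 : 3.381 < a ^ 2 := by nlinarith
  have hg5 : 11 < g ^ 5 := by
    calc (11:ℝ) < 1.618 ^ 5 := by norm_num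
      _ < g ^ 5 := by gcongr
  have hxx : x ≤ 0.6181 := by nlinarith
  have hw1 : 0 < w1 := by rw [hw]; positivity
  have hqq' : q1 ≤ 0.544 * q := by nlinarith
  rw [abs_lt]
  constructor
  · have : 1 - w / q < q1 / q * a ^ 2 := by
      rw [show 1 - w / q = (q - w) / q by field_simp, div_mul_eq_mul_div]
      apply div_lt_div_of_pos_right _ hq
      nlinarith
    linarith [le_max_right (x * g ^ 5) (q1 / q * a ^ 2)]
  · by_contra hcon
    push Not at hcon
    have k1 := (le_max_left _ _).trans hcon
    have k2 := (le_max_right _ _).trans hcon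
    rw [show w / q - 1 = (w - q) / q by field_simp, le_div_iff₀ hq] at k1 k2
    rw [show q1 / q * a^2 * q = q1 * a^2 by field_simp] at k2
    have k2' : 3.381 * q1 < w - q := by nlinarith
    have hxq : 0 < x * q := by positivity
    have k1' : 11 * (x * q) < w - q := by nlinarith
    have hwq : w ≤ 4.6 * q := by nlinarith
    have : w1 ≤ 4.6 * (x * q) := by rw [hw]; nlinarith
    linarith

/-- If `n > n₁ ≥ 2`, `m > m₁ ≥ 2` and `F n - F n₁ = T m - T m₁`, then
`|(√5·c_α)⁻¹·α^n·α_T^(-m) - 1| < max {α^(n₁-n+5), α_T^(m₁-m+2)}`. -/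
theorem fib_trib_linear_form_zero (α αT cα : ℝ)
    (hα : α = (1 + Real.sqrt 5) / 2)
    (hroot : αT ^ 3 - αT ^ 2 - αT - 1 = 0)
    (huniq : ∀ x : ℝ, x ^ 3 - x ^ 2 - x - 1 = 0 → x = αT)
    (hcα : cα = 1 / (-αT ^ 2 + 4 * αT - 1))
    (n m n₁ m₁ : ℕ) (hn₁ : 2 ≤ n₁) (hn : n₁ < n) (hm₁ : 2 ≤ m₁) (hm : m₁ < m)
    (h : (Nat.fib n : ℤ) - Nat.fib n₁ = trib m - trib m₁) :
    |(Real.sqrt 5 * cα)⁻¹ * α ^ n * αT ^ (-(m : ℤ)) - 1| <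
      max (α ^ ((n₁ : ℤ) - n + 5)) (αT ^ ((m₁ : ℤ) - m + 2)) := by
  obtain ⟨h1, h2⟩ : 1.839 < αT ∧ αT < 1.84 := by
    constructor
    · by_contra hh
      push Not at hh
      nlinarith [sq_nonneg (αT + 0.4196), sq_nonneg αT]
    · by_contra hh
      push Not at hh
      nlinarith [sq_nonneg (αT + 0.4196), sq_nonneg αT]
  have ha2 : 3.381 < αT ^ 2 := by nlinarith
  have hD1 : 2.96 < -αT ^ 2 + 4 * αT - 1 := by nlinarith
  have hD1' : 2.97 < -αT ^ 2 + 4 * αT - 1 := by nlinarith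
  have hD2 : -αT ^ 2 + 4 * αT - 1 < 2.976 := by nlinarith
  have hc : cα * (-αT ^ 2 + 4 * αT - 1) = 1 := by
    rw [hcα]; exact one_div_mul_cancel (by linarith)
  have hc0 : 0 < cα := by rw [hcα]; apply one_div_pos.2; linarith
  have hc1 : 0.336 < cα := by nlinarith
  have hc2 : cα < 0.337 := by nlinarith
  have em := aux_err αT cα h1 h2 hroot hc hc1 hc2 m
  have em1 := aux_err αT cα h1 h2 hroot hc hc1 hc2 m₁
  have hs : Real.sqrt 5 ^ 2 = 5 := Real.sq_sqrt (by norm_num)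
  have hs0 : 0 ≤ Real.sqrt 5 := Real.sqrt_nonneg 5
  have hs1 : 2.236 < Real.sqrt 5 := by
    apply Real.lt_sqrt_of_sq_lt; norm_num
  have hs2 : Real.sqrt 5 < 2.237 := by nlinarith
  have hαg : Real.goldenRatio = α := by rw [hα]
  have hβ : |Real.goldenConj| ≤ 1 := by
    rw [Real.goldenConj, abs_le]; constructor <;> linarith
  have fn := Real.coe_fib_eq n
  have fn1 := Real.coe_fib_eq n₁
  rw [hαg] at fn fn1
  have bn : |Real.goldenConj ^ n| ≤ 1 := by rw [abs_pow]; exact pow_le_one₀ (abs_nonneg _) hβ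
  have bn1 : |Real.goldenConj ^ n₁| ≤ 1 := by rw [abs_pow]; exact pow_le_one₀ (abs_nonneg _) hβ
  have hR : (Nat.fib n : ℝ) - Nat.fib n₁ = trib m - trib m₁ := by exact_mod_cast h
  have hα1 : 1.618 < α := by rw [hα]; linarith
  have hα0 : 0 < α := by linarith
  have ha0 : 0 < αT := by linarith
  have hs0' : 0 < Real.sqrt 5 := by linarith
  have z1 : α ^ ((n₁ : ℤ) - n + 5) = α ^ n₁ / α ^ n * α ^ 5 := by
    rw [zpow_add₀ hα0.ne', zpow_sub₀ hα0.ne']; norm_cast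
  have z2 : αT ^ ((m₁ : ℤ) - m + 2) = αT ^ m₁ / αT ^ m * αT ^ 2 := by
    rw [zpow_add₀ ha0.ne', zpow_sub₀ ha0.ne']; norm_cast
  have p1 : α ^ n₁ * α ≤ α ^ n := by
    rw [← pow_succ]; exact pow_le_pow_right₀ (by linarith) hn
  have q1 : αT ^ m₁ * αT ≤ αT ^ m := by
    rw [← pow_succ]; exact pow_le_pow_right₀ (by linarith) hm
  have q2 : αT ^ 2 ≤ αT ^ m₁ := pow_le_pow_right₀ (by linarith) hm₁
  have pp : 0 < α ^ n := by positivity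
  have pp1 : 0 < α ^ n₁ := by positivity
  rw [z1, z2, zpow_neg, zpow_natCast]
  rw [show (Real.sqrt 5 * cα)⁻¹ * α ^ n * (αT ^ m)⁻¹ = (α ^ n / (Real.sqrt 5 * cα)) / αT ^ m by
    field_simp]
  obtain ⟨em2, em3⟩ := abs_le.1 em
  obtain ⟨em12, em13⟩ := abs_le.1 em1
  obtain ⟨bn2, bn3⟩ := abs_le.1 bn
  obtain ⟨bn12, bn13⟩ := abs_le.1 bn1
  generalize Real.goldenConj ^ n = b at *
  generalize Real.goldenConj ^ n₁ = b1 at *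
  set d := α ^ n / Real.sqrt 5 - α ^ n₁ / Real.sqrt 5 - cα * αT ^ m + cα * αT ^ m₁ with hd
  have hd' : d = (b - b1) / Real.sqrt 5 + (trib m - cα * αT ^ m) - (trib m₁ - cα * αT ^ m₁) := by
    rw [fn, fn1] at hR
    rw [hd]
    linear_combination hR
  have u1 : (b - b1) / Real.sqrt 5 ≤ 0.895 := by
    rw [div_le_iff₀ hs0']; linarith
  have u2 : -0.895 ≤ (b - b1) / Real.sqrt 5 := by
    rw [le_div_iff₀ hs0']; linarith
  have hdb : |d| ≤ 2.395 := by
    rw [abs_le, hd']; constructor <;> linarith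
  apply aux_fin α αT _ (α ^ n₁ / (Real.sqrt 5 * cα)) _ _ (d / cα) _ hα1 h1 h2
  · positivity
  · rw [div_mul_eq_mul_div, div_le_one pp]; exact p1
  · field_simp
  · positivity
  · positivity
  · exact q1
  · rw [abs_div, abs_of_pos hc0, div_lt_iff₀ hc0]
    have h5 : 3.381 * 0.336 ≤ αT ^ m₁ * cα :=
      mul_le_mul (ha2.le.trans q2) hc1.le (by norm_num) (by positivity)
    linarith
  · rw [hd]; field_simp; ring
end

section
/- Let n > n₁ ≥ 2 and m > m₁ ≥ 2 be integers with F_n - F_{n₁} = T_m - T_{m₁}. Then |((α^{n-n₁} - 1)/(√5·c_α))·α^{n₁}·α_T^{-m} - 1| < 1.42·α_T^{m₁-m}, where α = (1+√5)/2, α_T is the unique real root of x³ - x² - x - 1, and c_α = 1/(-α_T² + 4α_T - 1). -/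
lemma trib_U (a : ℝ) (hr : a ^ 3 - a ^ 2 - a - 1 = 0) (k : ℕ) :
    (trib (k+2) : ℝ) + (a - 1) * trib (k+1) + (a^2 - a - 1) * trib k = a ^ (k+1) := by
  induction k with
  | zero => simp [trib]
  | succ k ih =>
    have h3 : (trib (k+1+2) : ℝ) = trib (k+2) + trib (k+1) + trib k := by
      have : trib (k+3) = trib (k+2) + trib (k+1) + trib k := by rw [trib]
      exact_mod_cast this
    rw [h3, pow_succ a (k+1), ← ih]
    have : k + 1 + 1 = k + 2 := rfl
    rw [this]
    linear_combination (-(trib k : ℝ)) * hr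

lemma a_bounds (a : ℝ) (hr : a ^ 3 - a ^ 2 - a - 1 = 0) : 1.83928 < a ∧ a < 1.83929 := by
  constructor
  · by_contra hc
    push Not at hc
    have h1 : 1 < a ∨ a ≤ 1 := lt_or_ge _ _
    rcases h1 with h1 | h1
    · nlinarith [mul_nonneg (sub_nonneg.2 hc) (sub_nonneg.2 h1.le), mul_nonneg (mul_nonneg (sub_nonneg.2 hc) (sub_nonneg.2 h1.le)) (sub_nonneg.2 h1.le)]
    · nlinarith [mul_nonneg (sub_nonneg.2 h1) (sq_nonneg a), sq_nonneg (a+1), mul_nonneg (sub_nonneg.2 h1) (sq_nonneg (a+1)), mul_nonneg (sub_nonneg.2 h1) (sq_nonneg (a-1))]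
  · by_contra hc
    push Not at hc
    nlinarith [mul_nonneg (sub_nonneg.2 hc) (sub_nonneg.2 hc), mul_nonneg (sub_nonneg.2 hc) (mul_nonneg (sub_nonneg.2 hc) (sub_nonneg.2 hc))]

lemma c_bounds (a c : ℝ) (h1 : 1.83928 < a) (h2 : a < 1.83929)
    (hc : c = 1 / (-a ^ 2 + 4 * a - 1)) :
    0.33622 < c ∧ c < 0.33624 ∧ c * (-a^2 + 4 * a - 1) = 1 := by
  have hD1 : 2.9741 < -a ^ 2 + 4 * a - 1 := by nlinarith
  have hD2 : -a ^ 2 + 4 * a - 1 < 2.9742 := by nlinarith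
  have hD : 0 < -a ^ 2 + 4 * a - 1 := by linarith
  refine ⟨?_, ?_, ?_⟩
  · rw [hc, lt_div_iff₀ hD]; nlinarith
  · rw [hc, div_lt_iff₀ hD]; nlinarith
  · rw [hc]; exact one_div_mul_cancel hD.ne'

lemma e_rec (a c : ℝ) (hr : a ^ 3 - a ^ 2 - a - 1 = 0)
    (hc : c * (-a^2 + 4 * a - 1) = 1) (k : ℕ) :
    ((trib (k+2) : ℝ) - c * a^(k+2)) = -(a-1) * (trib (k+1) - c * a^(k+1))
      - (a^2-a-1) * (trib k - c * a^k) := by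
  have := trib_U a hr k
  have h2 : c * (3 * a^2 - 2 * a - 1) = a := by
    linear_combination a * hc + c * hr
  rw [pow_succ] at this
  rw [pow_succ, pow_succ]
  linear_combination this - a^k * h2

lemma e_bound (a c : ℝ) (hr : a ^ 3 - a ^ 2 - a - 1 = 0) (h1 : 1.83928 < a) (h2 : a < 1.83929)
    (c1 : 0.33622 < c) (c2 : c < 0.33624)
    (hc : c * (-a^2 + 4 * a - 1) = 1) (k : ℕ) (hk : 2 ≤ k) :
    |(trib k : ℝ) - c * a^k| ≤ 0.16 := by
  have a2l : 3.38295 < a^2 := by nlinarith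
  have a2u : a^2 < 3.38299 := by nlinarith
  have a3 : a^3 = a^2 + a + 1 := by linarith
  have a4 : a^4 = 2 * a^2 + 2 * a + 1 := by linear_combination (a + 1) * a3
  have a5 : a^5 = 4 * a^2 + 3 * a + 2 := by linear_combination (a^2 + a + 2) * a3
  have e4 : 0.1520 < (4:ℝ) - c * a^4 ∧ (4:ℝ) - c * a^4 < 0.1524 := by
    rw [a4]; constructor <;> nlinarith
  have e5 : -0.0779 < (7:ℝ) - c * a^5 ∧ (7:ℝ) - c * a^5 < -0.0763 := by
    rw [a5]; constructor <;> nlinarith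
  have Q : ∀ j : ℕ, ((trib (j+5) : ℝ) - c * a^(j+5))^2
      + (a-1) * ((trib (j+5) : ℝ) - c * a^(j+5)) * (trib (j+4) - c * a^(j+4))
      + (a^2-a-1) * (trib (j+4) - c * a^(j+4))^2 ≤ 0.0091 := by
    intro j
    induction j with
    | zero =>
      have t4 : trib 4 = 4 := by decide
      have t5 : trib 5 = 7 := by decide
      simp only [zero_add, t4, t5]
      push_cast
      generalize (4:ℝ) - c * a^4 = x at *
      generalize (7:ℝ) - c * a^5 = y at *
      obtain ⟨x1, x2⟩ := e4
      obtain ⟨y1, y2⟩ := e5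
      have p1 : y^2 ≤ 0.00607 := by nlinarith
      have p2 : x^2 ≤ 0.02323 := by nlinarith
      have p3 : y * x ≤ -0.01159 := by nlinarith
      nlinarith [sq_nonneg x, sq_nonneg y]
    | succ j ih =>
      have r := e_rec a c hr hc (j+4)
      have s1 : j + 1 + 5 = j + 4 + 2 := by ring
      have s2 : j + 1 + 4 = j + 4 + 1 := by ring
      have s3 : j + 5 = j + 4 + 1 := by ring
      rw [s3] at ih
      rw [s1, s2, r]
      generalize (trib (j+4+1) : ℝ) - c * a^(j+4+1) = y at *
      generalize (trib (j+4) : ℝ) - c * a^(j+4) = x at *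
      have key : (-(a-1) * y - (a^2-a-1) * x)^2 + (a-1) * (-(a-1) * y - (a^2-a-1) * x) * y
          + (a^2-a-1) * y^2 = (a^2-a-1) * (y^2 + (a-1) * y * x + (a^2-a-1) * x^2) := by ring
      rw [key]
      have : 0 ≤ a^2-a-1 := by linarith
      have : a^2-a-1 ≤ 1 := by linarith
      nlinarith
  obtain rfl | rfl | hk : k = 2 ∨ k = 3 ∨ 4 ≤ k := by omega
  · have t : trib 2 = 1 := by decide
    rw [t, abs_le]; push_cast; constructor <;> nlinarith
  · have t : trib 3 = 2 := by decide
    rw [t, abs_le, a3]; push_cast; constructor <;> nlinarith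
  · obtain ⟨j, rfl⟩ := Nat.exists_eq_add_of_le' hk
    have q := Q j
    generalize (trib (j+5) : ℝ) - c * a^(j+5) = y at *
    generalize (trib (j+4) : ℝ) - c * a^(j+4) = x at *
    apply abs_le_of_sq_le_sq _ (by norm_num)
    have : 0.367 ≤ a^2-a-1 - (a-1)^2/4 := by nlinarith
    nlinarith [sq_nonneg (y + (a-1)/2 * x), mul_le_mul_of_nonneg_right this (sq_nonneg x)]

lemma f_bound (n n₁ : ℕ) (hn₁ : 2 ≤ n₁) (hn : n₁ < n) :
    |(Real.goldenConj ^ n - Real.goldenConj ^ n₁) / Real.sqrt 5| ≤ 0.277 := by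
  have s1 : 2.236 < Real.sqrt 5 := Real.lt_sqrt_of_sq_lt (by norm_num)
  have s2 : Real.sqrt 5 < 2.2361 := by rw [Real.sqrt_lt' (by norm_num)]; norm_num
  have ha : |Real.goldenConj| ≤ 0.61805 := by
    rw [abs_le, Real.goldenConj]; constructor <;> linarith
  have b1 : |Real.goldenConj ^ n₁| ≤ 0.61805 ^ 2 := by
    rw [abs_pow]
    exact (pow_le_pow_left₀ (abs_nonneg _) ha _).trans
      (pow_le_pow_of_le_one (by norm_num) (by norm_num) hn₁)
  have b2 : |Real.goldenConj ^ n| ≤ 0.61805 ^ 3 := by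
    rw [abs_pow]
    exact (pow_le_pow_left₀ (abs_nonneg _) ha _).trans
      (pow_le_pow_of_le_one (by norm_num) (by norm_num) (by omega))
  rw [abs_div, abs_of_pos (a := Real.sqrt 5) (by linarith), div_le_iff₀ (by linarith)]
  have := abs_sub (Real.goldenConj ^ n) (Real.goldenConj ^ n₁)
  linarith

/-- If `n > n₁ ≥ 2`, `m > m₁ ≥ 2` and `F n - F n₁ = T m - T m₁`, then
`|((α^(n-n₁)-1)/(√5·c_α))·α^(n₁)·α_T^(-m) - 1| < 1.42·α_T^(m₁-m)`. -/
theorem fib_trib_linear_form_one (α αT cα : ℝ)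
    (hα : α = (1 + Real.sqrt 5) / 2)
    (hroot : αT ^ 3 - αT ^ 2 - αT - 1 = 0)
    (huniq : ∀ x : ℝ, x ^ 3 - x ^ 2 - x - 1 = 0 → x = αT)
    (hcα : cα = 1 / (-αT ^ 2 + 4 * αT - 1))
    (n m n₁ m₁ : ℕ) (hn₁ : 2 ≤ n₁) (hn : n₁ < n) (hm₁ : 2 ≤ m₁) (hm : m₁ < m)
    (h : (Nat.fib n : ℤ) - Nat.fib n₁ = trib m - trib m₁) :
    |((α ^ (n - n₁) - 1) / (Real.sqrt 5 * cα)) * α ^ n₁ * αT ^ (-(m : ℤ)) - 1| <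
      1.42 * αT ^ ((m₁ : ℤ) - m) := by
  obtain ⟨h1, h2⟩ := a_bounds αT hroot
  obtain ⟨c1, c2, hc⟩ := c_bounds αT cα h1 h2 hcα
  have hα' : α = Real.goldenRatio := hα
  have em := e_bound αT cα hroot h1 h2 c1 c2 hc m (by omega)
  have em1 := e_bound αT cα hroot h1 h2 c1 c2 hc m₁ hm₁
  have fb := f_bound n n₁ hn₁ hn
  have h5 : 0 < Real.sqrt 5 := by positivity
  have ha : 0 < αT := by linarith
  have hcp : 0 < cα := by linarith
  have hR : (Nat.fib n : ℝ) - Nat.fib n₁ = trib m - trib m₁ := by exact_mod_cast h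
  rw [Real.coe_fib_eq, Real.coe_fib_eq, ← hα'] at hR
  have hpow : α ^ n = α ^ (n - n₁) * α ^ n₁ := by rw [← pow_add]; congr 1; omega
  have hX : ((α ^ (n - n₁) - 1) / (Real.sqrt 5 * cα)) * α ^ n₁ * αT ^ (-(m : ℤ)) - 1
      = ((α ^ n - α ^ n₁) / Real.sqrt 5 - cα * αT ^ m) / (cα * αT ^ m) := by
    rw [hpow, zpow_neg, zpow_natCast]; field_simp
  have hY : (1.42:ℝ) * αT ^ ((m₁ : ℤ) - m) = (1.42 * cα * αT ^ m₁) / (cα * αT ^ m) := by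
    rw [zpow_sub₀ ha.ne', zpow_natCast, zpow_natCast]; field_simp
  have hP : 0 < cα * αT ^ m := by positivity
  rw [hX, hY, abs_div, abs_of_pos hP]
  apply div_lt_div_of_pos_right _ hP
  have hS : (α ^ n - α ^ n₁) / Real.sqrt 5 - cα * αT ^ m
      = -(cα * αT ^ m₁) + (trib m - cα * αT ^ m) - (trib m₁ - cα * αT ^ m₁)
        + (Real.goldenConj ^ n - Real.goldenConj ^ n₁) / Real.sqrt 5 := by
    linear_combination hR
  rw [hS]
  have a2l : 3.38295 < αT^2 := by nlinarith
  rw [abs_le] at em em1 fb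
  generalize (trib m : ℝ) - cα * αT ^ m = x at *
  generalize (Real.goldenConj ^ n - Real.goldenConj ^ n₁) / Real.sqrt 5 = f at *
  obtain rfl | hm3 : m₁ = 2 ∨ 3 ≤ m₁ := by omega
  · have t : trib 2 = 1 := by decide
    rw [t] at em1 ⊢
    push_cast at em1 ⊢
    have : 1.1374 < cα * αT ^ 2 := by nlinarith
    rw [abs_lt]; constructor <;> linarith
  · have a3 : αT^3 ≤ αT ^ m₁ := pow_le_pow_right₀ (by linarith) hm3
    have : 2.09 < cα * αT ^ m₁ := by nlinarith
    rw [abs_lt]; constructor <;> linarith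
end

section
/- Let n > n₁ ≥ 2 and m > m₁ ≥ 2 be integers with F_n - F_{n₁} = T_m - T_{m₁}. Then |α^n·α_T^{-m₁}/(√5·c_α·(α_T^{m-m₁} - 1)) - 1| < 2.22·α^{n₁-n+4}, where α = (1+√5)/2, α_T is the unique real root of x³ - x² - x - 1, and c_α = 1/(-α_T² + 4α_T - 1). -/
lemma trib_aux (a c : ℝ) (ha : a ^ 3 - a ^ 2 - a - 1 = 0) (hc : c * (-a ^ 2 + 4 * a - 1) = 1)
    (k : ℕ) :
    (trib (k+2) : ℝ) + (a - 1) * trib (k+1) + (a^2 - a - 1) * trib k = a ^ (k+1) := by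
  induction k with
  | zero => simp [trib]
  | succ k ih =>
    have h3 : (trib (k+3) : ℝ) = trib (k+2) + trib (k+1) + trib k := by
      rw [trib]; push_cast; ring
    show (trib (k+3) : ℝ) + (a - 1) * trib (k+2) + (a^2 - a - 1) * trib (k+1) = a ^ (k+1+1)
    rw [h3]
    linear_combination a * ih - (trib k : ℝ) * ha

lemma root_bd (a : ℝ) (ha : a ^ 3 - a ^ 2 - a - 1 = 0) : 1.839 < a ∧ a < 1.840 := by
  constructor
  · by_contra hh
    push Not at hh
    nlinarith [sq_nonneg (a + 0.42), sq_nonneg a]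
  · by_contra hh
    push Not at hh
    nlinarith [sq_nonneg (a + 0.42), sq_nonneg a]

set_option maxHeartbeats 1000000 in
lemma err_bd (a c : ℝ) (ha : a ^ 3 - a ^ 2 - a - 1 = 0) (hc : c * (-a ^ 2 + 4 * a - 1) = 1)
    (k : ℕ) (hk : 2 ≤ k) : |(trib k : ℝ) - c * a ^ k| ≤ 0.289 := by
  obtain ⟨h1, h2⟩ := root_bd a ha
  have hsq1 : 3.3819 < a ^ 2 := by nlinarith
  have hsq2 : a ^ 2 < 3.3856 := by nlinarith
  have hd1 : 2.970 < -a ^ 2 + 4 * a - 1 := by linarith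
  have hd2 : -a ^ 2 + 4 * a - 1 < 2.9785 := by linarith
  have hcpos : 0 < c := by
    by_contra hh
    push Not at hh
    nlinarith
  have hc1 : 0.3357 < c := by nlinarith
  have hc2 : c < 0.33671 := by nlinarith
  set e : ℕ → ℝ := fun k => (trib k : ℝ) - c * a ^ k with he
  have hrec : ∀ k, e (k+2) = -(a - 1) * e (k+1) - (a^2 - a - 1) * e k := by
    intro k
    have h := trib_aux a c ha hc k
    simp only [he]
    have : c * (a ^ (k+2) + (a-1) * a^(k+1) + (a^2-a-1) * a^k) = a^(k+1) := by
      rw [pow_succ a k, pow_add]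
      linear_combination (a^k * a) * hc + c * a ^ k * ha
    linear_combination h - this
  have hq1 : 0.5419 < a^2 - a - 1 := by nlinarith
  have hq2 : a^2 - a - 1 < 0.5456 := by nlinarith
  have hQ : ∀ k, e (k+3)^2 + (a-1) * e (k+3) * e (k+2) + (a^2-a-1) * e (k+2)^2 ≤ 0.0304 := by
    intro k
    induction k with
    | zero =>
      have hQ2 : ∀ k, e (k+2)^2 + (a-1) * e (k+2) * e (k+1) + (a^2-a-1) * e (k+1)^2
        = (a^2-a-1) * (e (k+1)^2 + (a-1) * e (k+1) * e k + (a^2-a-1) * e k^2) := by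
        intro k; rw [hrec k]; ring
      have h0 := hQ2 0
      have h1' := hQ2 1
      norm_num at h0 h1' ⊢
      rw [h1', h0]
      have e0 : e 0 = -c := by simp [he, trib]
      have e1 : e 1 = 1 - c * a := by simp [he, trib]
      rw [e0, e1]
      have hx1 : 0.617 < c * a := by nlinarith
      have hx2 : c * a < 0.6196 := by nlinarith
      have b1 : (1 - c*a)^2 ≤ 0.383^2 := pow_le_pow_left₀ (by linarith) (by linarith) 2
      have b2 : 0.3804 * 0.3357 ≤ (1 - c*a) * c := by
        apply mul_le_mul <;> first | linarith | norm_num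
      have b3 : c^2 ≤ 0.33671^2 := pow_le_pow_left₀ (by linarith) (by linarith) 2
      have b4 : 0.839 * (0.3804 * 0.3357) ≤ (a-1) * ((1 - c*a) * c) := by
        apply mul_le_mul <;> first | linarith | norm_num
      have b5 : (a^2-a-1) * c^2 ≤ 0.5456 * 0.33671^2 := by
        apply mul_le_mul <;> first | linarith | positivity | norm_num
      have hQ0 : (1 - c * a) ^ 2 + (a - 1) * (1 - c * a) * -c + (a ^ 2 - a - 1) * (-c) ^ 2 ≤ 0.1019 := by
        have : (1 - c * a) ^ 2 + (a - 1) * (1 - c * a) * -c + (a ^ 2 - a - 1) * (-c) ^ 2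
          = (1 - c * a) ^ 2 - (a-1) * ((1 - c*a) * c) + (a^2-a-1) * c^2 := by ring
        rw [this]
        norm_num at b1 b4 b5 ⊢
        linarith
      have b6 : (a ^ 2 - a - 1)^2 ≤ 0.5456^2 := pow_le_pow_left₀ (by linarith) (by linarith) 2
      have b7 : 0 ≤ (a ^ 2 - a - 1)^2 := by positivity
      rw [← mul_assoc, ← sq]
      calc _ ≤ (a ^ 2 - a - 1)^2 * 0.1019 := mul_le_mul_of_nonneg_left hQ0 b7
        _ ≤ 19 / 625 := by linarith
    | succ k ih =>
      have h := hrec (k+2)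
      have h' : e (k+1+3) = -(a - 1) * e (k+3) - (a^2 - a - 1) * e (k+2) := h
      have : e (k+1+3)^2 + (a-1) * e (k+1+3) * e (k+1+2) + (a^2-a-1) * e (k+1+2)^2
        = (a^2-a-1) * (e (k+3)^2 + (a-1) * e (k+3) * e (k+2) + (a^2-a-1) * e (k+2)^2) := by
        rw [h', show k+1+2 = k+3 by ring]; ring
      rw [this]
      generalize e (k+3)^2 + (a-1) * e (k+3) * e (k+2) + (a^2-a-1) * e (k+2)^2 = Q at ih
      nlinarith
  obtain ⟨j, rfl⟩ := Nat.exists_eq_add_of_le' hk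
  have hj := hQ j
  show |e (j+2)| ≤ 0.289
  have hp : (a^2-a-1) - (a-1)^2/4 ≥ 0.3658 := by nlinarith
  have : 0.3658 * e (j+2)^2 ≤ 0.0304 := by
    nlinarith [sq_nonneg (e (j+3) + (a-1)/2 * e (j+2)), mul_le_mul_of_nonneg_right hp (sq_nonneg (e (j+2)))]
  apply abs_le_of_sq_le_sq _ (by norm_num)
  nlinarith

lemma fib_bds (α : ℝ) (h2 : α ^ 2 = α + 1) (h1 : 1 ≤ α) (hα2 : α ≤ 2) (k : ℕ) :
    ((Nat.fib (k+1) : ℝ) ≤ α ^ k ∧ α ^ k ≤ Nat.fib (k+2)) ∧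
    ((Nat.fib (k+2) : ℝ) ≤ α ^ (k+1) ∧ α ^ (k+1) ≤ Nat.fib (k+3)) := by
  induction k with
  | zero => simp [Nat.fib_add_two]; constructor <;> linarith
  | succ k ih =>
    refine ⟨ih.2, ?_⟩
    have e : α ^ (k+1+1) = α ^ k + α ^ (k+1) := by
      rw [add_assoc, pow_add, h2]; ring
    rw [e, Nat.fib_add_two (n := k+1), Nat.fib_add_two (n := k+1+1)]
    push_cast
    obtain ⟨⟨_, _⟩, _, _⟩ := ih
    constructor
    · gcongr
    · exact add_le_add ‹_› ‹_›

set_option maxHeartbeats 1000000 in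
/-- If `n > n₁ ≥ 2`, `m > m₁ ≥ 2` and `F n - F n₁ = T m - T m₁`, then
`|α^n·α_T^(-m₁)/(√5·c_α·(α_T^(m-m₁)-1)) - 1| < 2.22·α^(n₁-n+4)`. -/
theorem fib_trib_linear_form_two (α αT cα : ℝ)
    (hα : α = (1 + Real.sqrt 5) / 2)
    (hroot : αT ^ 3 - αT ^ 2 - αT - 1 = 0)
    (huniq : ∀ x : ℝ, x ^ 3 - x ^ 2 - x - 1 = 0 → x = αT)
    (hcα : cα = 1 / (-αT ^ 2 + 4 * αT - 1))
    (n m n₁ m₁ : ℕ) (hn₁ : 2 ≤ n₁) (hn : n₁ < n) (hm₁ : 2 ≤ m₁) (hm : m₁ < m)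
    (h : (Nat.fib n : ℤ) - Nat.fib n₁ = trib m - trib m₁) :
    |α ^ n * αT ^ (-(m₁ : ℤ)) / (Real.sqrt 5 * cα * (αT ^ (m - m₁) - 1)) - 1| <
      2.22 * α ^ ((n₁ : ℤ) - n + 4) := by
  obtain ⟨ha1, ha2⟩ := root_bd αT hroot
  have hd : 0 < -αT ^ 2 + 4 * αT - 1 := by nlinarith
  have hc : cα * (-αT ^ 2 + 4 * αT - 1) = 1 := by rw [hcα]; exact one_div_mul_cancel hd.ne'
  have hcpos : 0 < cα := by rw [hcα]; positivity
  have em := abs_le.1 (err_bd αT cα hroot hc m (by omega))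
  have em1 := abs_le.1 (err_bd αT cα hroot hc m₁ hm₁)
  have hs5 : Real.sqrt 5 ^ 2 = 5 := Real.sq_sqrt (by norm_num)
  have hs0 : 0 ≤ Real.sqrt 5 := Real.sqrt_nonneg 5
  have hs1 : 2.236 < Real.sqrt 5 := by nlinarith
  have hs2 : Real.sqrt 5 < 2.2361 := by nlinarith
  have hα1 : 1.618 < α := by rw [hα]; linarith
  have hα2 : α < 1.6181 := by rw [hα]; linarith
  have hαsq : α ^ 2 = α + 1 := by rw [hα]; nlinarith
  have hαpos : 0 < α := by linarith
  have hR : (Nat.fib n : ℝ) - Nat.fib n₁ = trib m - trib m₁ := by exact_mod_cast h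
  have hb := fun k => (fib_bds α hαsq (by linarith) (by linarith) k).1
  -- Binet
  have hbinet : (Nat.fib n : ℝ) = (α ^ n - (1 - α) ^ n) / Real.sqrt 5 := by
    have := Real.coe_fib_eq n
    rw [this, show Real.goldenRatio = α from hα.symm,
      show Real.goldenConj = 1 - α by rw [hα, Real.goldenConj]; ring]
  have hβ : |(1 - α) ^ n| ≤ 0.3821 := by
    rw [abs_pow]
    have h0 : |1 - α| = α - 1 := by rw [abs_of_neg] <;> linarith
    rw [h0]
    calc (α - 1) ^ n ≤ (α - 1) ^ 2 :=
          pow_le_pow_of_le_one (by linarith) (by linarith) (by omega)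
      _ ≤ 0.3821 := by nlinarith
  have hβ5 : |(1 - α) ^ n / Real.sqrt 5| ≤ 0.171 := by
    rw [abs_div, abs_of_nonneg hs0, div_le_iff₀ (by linarith)]
    nlinarith
  have hβ6 := abs_le.1 hβ5
  set D := cα * (αT ^ m - αT ^ m₁) with hD
  set X := α ^ n / Real.sqrt 5 with hX
  have hXeq : X = Nat.fib n + (1 - α) ^ n / Real.sqrt 5 := by
    rw [hbinet, hX]; ring
  have hden : αT ^ m = αT ^ m₁ * αT ^ (m - m₁) := by
    rw [← pow_add]; congr 1; omega
  have haT : 0 < αT := by linarith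
  -- lower bound
  obtain ⟨j, rfl⟩ : ∃ j, n = j + 3 := ⟨n - 3, by omega⟩
  obtain ⟨i, rfl⟩ : ∃ i, n₁ = i + 2 := ⟨n₁ - 2, by omega⟩
  have hmono : (Nat.fib (i+2) : ℝ) ≤ Nat.fib (j+2) := by
    exact_mod_cast Nat.fib_mono (by omega)
  have hf : (Nat.fib (j+3) : ℝ) = Nat.fib (j+1) + Nat.fib (j+2) := by
    exact_mod_cast Nat.fib_add_two (n := j+1)
  have hone : (1 : ℝ) ≤ Nat.fib (j+1) := by
    exact_mod_cast Nat.fib_pos.2 (by omega)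
  have hlow : α ^ j ≤ α * Nat.fib (j+1) := by
    rcases j with _ | j
    · simp; linarith
    · rw [pow_succ, mul_comm]
      exact mul_le_mul_of_nonneg_left (hb j).2 hαpos.le
  have hDlow : 0.422 * (Nat.fib (j+1) : ℝ) ≤ D := by
    have : D = cα * αT ^ m - cα * αT ^ m₁ := by rw [hD]; ring
    linarith
  have hDpos : 0 < D := by linarith
  have hup : (Nat.fib (i+2) : ℝ) ≤ α ^ (i+1) := (hb (i+1)).1
  have hXD : |X - D| ≤ Nat.fib (i+2) + 0.749 := by
    have : D = cα * αT ^ m - cα * αT ^ m₁ := by rw [hD]; ring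
    rw [abs_le]
    have : (0:ℝ) ≤ Nat.fib (i+2) := by positivity
    constructor <;> linarith
  have hexpr : α ^ (j+3) * αT ^ (-(m₁ : ℤ)) / (Real.sqrt 5 * cα * (αT ^ (m - m₁) - 1)) - 1
      = (X - D) / D := by
    have hne : αT ^ (m - m₁) - 1 ≠ 0 := by
      intro h0
      rw [hD, hden] at hDpos
      have : αT ^ m₁ * αT ^ (m - m₁) - αT ^ m₁ = αT ^ m₁ * (αT ^ (m - m₁) - 1) := by ring
      rw [this, h0] at hDpos
      simp at hDpos
    have hD' : D = cα * αT ^ m₁ * (αT ^ (m - m₁) - 1) := by rw [hD, hden]; ring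
    rw [sub_div, div_self hDpos.ne', hD', hX, zpow_neg, zpow_natCast]
    congr 1
    have : Real.sqrt 5 ≠ 0 := by linarith
    field_simp
  rw [hexpr, abs_div, abs_of_pos hDpos, div_lt_iff₀ hDpos]
  have hz : α ^ (((i+2 : ℕ) : ℤ) - ((j+3 : ℕ) : ℤ) + 4) = α ^ (i+3) / α ^ j := by
    rw [← zpow_natCast, ← zpow_natCast, ← zpow_sub₀ hαpos.ne']
    congr 1; push_cast; ring
  rw [hz]
  have hj : 0 < α ^ j := by positivity
  have hDlow2 : 0.422 * α ^ j ≤ α * D := by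
    have := mul_le_mul_of_nonneg_left hDlow hαpos.le
    linarith
  have hfin : 2.22 * 0.422 * α ^ (i+2) ≤ 2.22 * (α ^ (i+3) / α ^ j) * D := by
    have : 2.22 * (α ^ (i+3) / α ^ j) * D = 2.22 * α ^ (i+2) * (α * D) / α ^ j := by
      rw [pow_succ α (i+2)]; ring
    rw [this, le_div_iff₀ hj]
    have h0 : 0 < α ^ (i+2) := by positivity
    have := mul_le_mul_of_nonneg_left hDlow2 h0.le
    linarith
  have hi : 1.618 ≤ α ^ (i+1) := by
    rw [pow_succ]
    have : 1 ≤ α ^ i := one_le_pow₀ (by linarith)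
    have := mul_le_mul_of_nonneg_right this hαpos.le
    linarith
  have hi2 : α ^ (i+2) = α ^ (i+1) * α := pow_succ _ _
  have hi3 : α ^ (i+1) * 1.618 ≤ α ^ (i+1) * α :=
    mul_le_mul_of_nonneg_left hα1.le (by positivity)
  linarith
end
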